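/- Let q, q' ∈ L^∞(ℝ₊; L¹(ℝ²) ∩ L^∞(ℝ²)) be two compactly supported (in space, locally uniformly in time) solutions of the system ∂_t q + u·∇q = 0, div u = 0, curl(1 − αΔ)u = q + γδ₀, with u = K^α ∗ q + γK^α where K^α is the kernel of the solution operator, and with the same initial data q(0,·) = q'(0,·) = q₀. Assume the gradient bounds ‖∂₂K^α₁ + ∂₁K^α₂‖_{L^∞} < ∞ and ‖∂₁K^α₁ − ∂₂K^α₂‖_{L^∞} < ∞. Then q = q'. -/

import Mathlib

open MeasureTheory Real Set

noncomputable section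

/-- Euclidean norm on `ℝ × ℝ`. -/
def norm2 (x : ℝ × ℝ) : ℝ := Real.sqrt (x.1 ^ 2 + x.2 ^ 2)

/-- Partial derivative in the first coordinate direction. -/
def pd1 (f : ℝ × ℝ → ℝ) (x : ℝ × ℝ) : ℝ := fderiv ℝ f x (1, 0)

/-- Partial derivative in the second coordinate direction. -/
def pd2 (f : ℝ × ℝ → ℝ) (x : ℝ × ℝ) : ℝ := fderiv ℝ f x (0, 1)

/-- Laplacian. -/
def lap (f : ℝ × ℝ → ℝ) (x : ℝ × ℝ) : ℝ := pd1 (pd1 f) x + pd2 (pd2 f) x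

/-- The harmonic vector field `H(x) = x^⊥/(2π|x|²)`. -/
def Hvec (x : ℝ × ℝ) : ℝ × ℝ := (2 * π * (x.1 ^ 2 + x.2 ^ 2))⁻¹ • (-x.2, x.1)

/-- The velocity `u = K^α ∗ q + γ K^α` associated with a potential vorticity `q`. -/
def uvel (γ : ℝ) (K : ℝ × ℝ → ℝ × ℝ) (q : ℝ × ℝ → ℝ) (x : ℝ × ℝ) : ℝ × ℝ :=
  (∫ y : ℝ × ℝ, q y • K (x - y)) + γ • K x

/-- `q` is a weak solution of the limit system `∂_t q + u·∇q = 0`, `u = K^α ∗ q + γ K^α`,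
in the class `L^∞(ℝ₊; L¹ ∩ L^∞)`, compactly supported in space locally uniformly in time,
with initial data `q₀`. -/
def IsSol (γ : ℝ) (K : ℝ × ℝ → ℝ × ℝ) (q₀ : ℝ × ℝ → ℝ) (q : ℝ → ℝ × ℝ → ℝ) : Prop :=
  (Measurable fun p : ℝ × (ℝ × ℝ) => q p.1 p.2) ∧
  (∃ C : ℝ, ∀ t : ℝ, 0 ≤ t → (∫ x : ℝ × ℝ, |q t x|) ≤ C ∧ ∀ x : ℝ × ℝ, |q t x| ≤ C) ∧
  (∀ T > (0:ℝ), ∃ R : ℝ, ∀ t ∈ Set.Icc (0:ℝ) T, ∀ x : ℝ × ℝ, R < norm2 x → q t x = 0) ∧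
  (∀ φ : ℝ × (ℝ × ℝ) → ℝ, ContDiff ℝ (⊤ : ℕ∞) φ → HasCompactSupport φ →
    (∫ p in Set.Ioi (0:ℝ) ×ˢ (Set.univ : Set (ℝ × ℝ)),
        q p.1 p.2 * (fderiv ℝ φ p (1, (0, 0)) +
          (uvel γ K (q p.1) p.2).1 * fderiv ℝ φ p (0, (1, 0)) +
          (uvel γ K (q p.1) p.2).2 * fderiv ℝ φ p (0, (0, 1)))) +
      (∫ x : ℝ × ℝ, q₀ x * φ (0, x)) = 0)

namespace AlphaEuler

open Filter Topology
open Complex (I)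
open scoped ComplexConjugate

section

/-- The first order operator `∂₁ + c ∂₂`; for `c = I` it is twice the Cauchy-Riemann operator. -/
def cr (c : ℂ) (f : ℂ → ℂ) (z : ℂ) : ℂ := fderiv ℝ f z 1 + c * fderiv ℝ f z I

lemma cr_mul {c : ℂ} {f g : ℂ → ℂ} {z : ℂ} (hf : DifferentiableAt ℝ f z)
    (hg : DifferentiableAt ℝ g z) :
    cr c (fun y => f y * g y) z = f z * cr c g z + cr c f z * g z := by
  have h := (hf.hasFDerivAt.mul hg.hasFDerivAt).fderiv
  simp only [cr]
  rw [show (fun y => f y * g y) = f * g from rfl, h]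
  simp
  ring

lemma cr_congr {c : ℂ} {f g : ℂ → ℂ} {z : ℂ} (h : f =ᶠ[nhds z] g) : cr c f z = cr c g z := by
  simp only [cr, h.fderiv_eq]

lemma continuous_cr {c : ℂ} {f : ℂ → ℂ} (hf : ContDiff ℝ 1 f) : Continuous (cr c f) := by
  have h := hf.continuous_fderiv one_ne_zero
  unfold cr
  fun_prop

lemma continuousOn_fderiv_punctured {f : ℂ → ℂ} (hf : ContDiffOn ℝ 1 f {0}ᶜ) :
    ContinuousOn (fderiv ℝ f) {0}ᶜ :=
  hf.continuousOn_fderiv_of_isOpen isOpen_compl_singleton le_rfl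

lemma continuousOn_cr {c : ℂ} {f : ℂ → ℂ} (hf : ContDiffOn ℝ 1 f {0}ᶜ) :
    ContinuousOn (cr c f) {0}ᶜ := by
  have h := continuousOn_fderiv_punctured hf
  unfold cr
  fun_prop

lemma support_fderiv_apply_subset (f : ℂ → ℂ) (v : ℂ) :
    tsupport (fun z => fderiv ℝ f z v) ⊆ tsupport f :=
  tsupport_fderiv_apply_subset ℝ v

lemma support_cr_subset (c : ℂ) (f : ℂ → ℂ) : tsupport (cr c f) ⊆ tsupport f := by
  intro z hz
  by_contra h
  have h1 : f =ᶠ[nhds z] 0 := notMem_tsupport_iff_eventuallyEq.1 h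
  have h2 : cr c f =ᶠ[nhds z] 0 := by
    filter_upwards [h1.eventually_nhds] with y hy
    rw [cr_congr (c := c) (g := fun _ => 0) hy]
    simp [cr]
  exact notMem_tsupport_iff_eventuallyEq.2 h2 hz

lemma continuous_mul_of_tsupport {f h : ℂ → ℂ} (hf : ContinuousOn f {0}ᶜ) (hh : Continuous h)
    (h0 : (0 : ℂ) ∉ tsupport h) : Continuous fun z => f z * h z := by
  rw [continuous_iff_continuousAt]
  intro z
  by_cases hz : z ∈ tsupport h
  · have : z ≠ 0 := fun e => h0 (e ▸ hz)
    exact ((hf z this).continuousAt (isOpen_compl_singleton.mem_nhds this)).mul hh.continuousAt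
  · have h1 : h =ᶠ[nhds z] 0 := notMem_tsupport_iff_eventuallyEq.1 hz
    have h2 : (fun z => f z * h z) =ᶠ[nhds z] fun _ => 0 := by
      filter_upwards [h1] with y hy
      simp [hy]
    exact continuousAt_const.congr h2.symm

lemma integrable_mul_of_tsupport {f h : ℂ → ℂ} (hf : ContinuousOn f {0}ᶜ) (hh : Continuous h)
    (hc : HasCompactSupport h) (h0 : (0 : ℂ) ∉ tsupport h) : Integrable fun z => f z * h z :=
  (continuous_mul_of_tsupport hf hh h0).integrable_of_hasCompactSupport hc.mul_left

lemma integral_mul_cr {c : ℂ} {f g : ℂ → ℂ} (hf : ∀ z ∈ tsupport g, DifferentiableAt ℝ f z)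
    (hg : Differentiable ℝ g)
    (hfg : Integrable fun z => f z * g z)
    (h1 : ∀ v, Integrable fun z => f z * fderiv ℝ g z v)
    (h2 : ∀ v, Integrable fun z => fderiv ℝ f z v * g z) :
    ∫ z, f z * cr c g z = -∫ z, cr c f z * g z := by
  have key : ∀ v : ℂ, ∫ z, f z * fderiv ℝ g z v = -∫ z, fderiv ℝ f z v * g z := fun v =>
    integral_mul_fderiv_eq_neg_fderiv_mul_of_integrable (h2 v) (h1 v) hfg hf
      (fun z _ => hg z)
  have e1 : ∀ z, f z * cr c g z = f z * fderiv ℝ g z 1 + c * (f z * fderiv ℝ g z I) := by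
    intro z; simp only [cr]; ring
  have e2 : ∀ z, cr c f z * g z = fderiv ℝ f z 1 * g z + c * (fderiv ℝ f z I * g z) := by
    intro z; simp only [cr]; ring
  simp only [e1, e2]
  rw [integral_add (h1 1) ((h1 I).const_mul c), integral_add (h2 1) ((h2 I).const_mul c),
    integral_const_mul, integral_const_mul, key, key]
  ring

lemma integral_mul_cr_of_tsupport {c : ℂ} {f g : ℂ → ℂ} (hf : ContDiffOn ℝ 1 f {0}ᶜ)
    (hg : ContDiff ℝ 1 g) (hc : HasCompactSupport g) (h0 : (0 : ℂ) ∉ tsupport g) :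
    ∫ z, f z * cr c g z = -∫ z, cr c f z * g z := by
  have hcf := hg.continuous_fderiv one_ne_zero
  apply integral_mul_cr
  · intro z hz
    have : z ≠ 0 := fun e => h0 (e ▸ hz)
    exact (hf.differentiableOn one_ne_zero).differentiableAt
      (isOpen_compl_singleton.mem_nhds this)
  · exact hg.differentiable one_ne_zero
  · exact integrable_mul_of_tsupport hf.continuousOn hg.continuous hc h0
  · intro v
    refine integrable_mul_of_tsupport hf.continuousOn (by fun_prop)
      (hc.mono' (subset_closure.trans (support_fderiv_apply_subset g v)))
      (fun h => h0 (support_fderiv_apply_subset g v h))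
  · intro v
    have := continuousOn_fderiv_punctured hf
    exact integrable_mul_of_tsupport (by fun_prop) hg.continuous hc h0

end

section

/-- A family of smooth step functions, spread over a long interval. -/
lemma exists_step : ∃ B : ℝ, 0 ≤ B ∧ ∀ n : ℕ, 0 < n → ∃ a a₁ a₂ : ℝ → ℝ,
    (∀ x, HasDerivAt a (a₁ x) x) ∧ (∀ x, HasDerivAt a₁ (a₂ x) x) ∧ ContDiff ℝ 2 a ∧
    ContDiff ℝ 1 a₁ ∧ Continuous a₂ ∧ (∀ x, |a x| ≤ 1) ∧
    (∀ x : ℝ, x ≤ -(2 * (n : ℝ)) → a x = 0 ∧ a₁ x = 0 ∧ a₂ x = 0) ∧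
    (∀ x : ℝ, -(n : ℝ) ≤ x → a x = 1 ∧ a₁ x = 0 ∧ a₂ x = 0) ∧
    (∀ x, |a₁ x| ≤ B / n) ∧ (∀ x, |a₂ x| ≤ B / n ^ 2) := by
  set T := Real.smoothTransition with hT
  have hsm : ContDiff ℝ (⊤ : ℕ∞) T := Real.smoothTransition.contDiff
  have hsm1 : ContDiff ℝ (⊤ : ℕ∞) (deriv T) := by
    exact (contDiff_infty_iff_deriv.1 hsm).2
  have hsm2 : ContDiff ℝ (⊤ : ℕ∞) (deriv (deriv T)) := (contDiff_infty_iff_deriv.1 hsm1).2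
  have e0 : ∀ x, x ≤ 0 → T x = 0 := fun x hx => Real.smoothTransition.zero_of_nonpos hx
  have e1 : ∀ x, 1 ≤ x → T x = 1 := fun x hx => Real.smoothTransition.one_of_one_le hx
  have hconst : ∀ (F : ℝ → ℝ), ContDiff ℝ (⊤ : ℕ∞) F → ∀ c, (∀ x, x ≤ 0 → F x = c) →
      ∀ x, x ≤ 0 → deriv F x = 0 := by
    intro F hF c h x hx
    have h1 : HasDerivWithinAt F (deriv F x) (Iic x) x :=
      (hF.differentiable (by simp) x).hasDerivAt.hasDerivWithinAt
    have h2 : HasDerivWithinAt F 0 (Iic x) x :=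
      (hasDerivWithinAt_const x (Iic x) c).congr (fun y hy => h y (le_trans hy hx)) (h x hx)
    exact (uniqueDiffOn_Iic x x (by simp)).eq_deriv _ h1 h2
  have hconst' : ∀ (F : ℝ → ℝ), ContDiff ℝ (⊤ : ℕ∞) F → ∀ c, (∀ x, 1 ≤ x → F x = c) →
      ∀ x, 1 ≤ x → deriv F x = 0 := by
    intro F hF c h x hx
    have h1 : HasDerivWithinAt F (deriv F x) (Ici x) x :=
      (hF.differentiable (by simp) x).hasDerivAt.hasDerivWithinAt
    have h2 : HasDerivWithinAt F 0 (Ici x) x :=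
      (hasDerivWithinAt_const x (Ici x) c).congr (fun y hy => h y (le_trans hx hy)) (h x hx)
    exact (uniqueDiffOn_Ici x x (by simp)).eq_deriv _ h1 h2
  have z1 := hconst T hsm 0 e0
  have o1 := hconst' T hsm 1 e1
  have z2 := hconst _ hsm1 0 z1
  have o2 := hconst' _ hsm1 0 o1
  have hb : ∀ F : ℝ → ℝ, Continuous F → (∀ x, x ≤ 0 → F x = 0) → (∀ x, 1 ≤ x → F x = 0) →
      ∃ B, 0 ≤ B ∧ ∀ x, |F x| ≤ B := by
    intro F hF h0 h1
    obtain ⟨B, hB⟩ := (isCompact_Icc (a := (0 : ℝ)) (b := 1)).exists_bound_of_continuousOn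
      hF.continuousOn
    refine ⟨max B 0, le_max_right _ _, fun x => ?_⟩
    rcases le_total x 0 with h | h
    · simp [h0 x h]
    rcases le_total 1 x with h' | h'
    · simp [h1 x h']
    exact (hB x ⟨h, h'⟩).trans (le_max_left _ _)
  obtain ⟨B1, hB1, hB1'⟩ := hb _ hsm1.continuous z1 o1
  obtain ⟨B2, hB2, hB2'⟩ := hb _ hsm2.continuous z2 o2
  refine ⟨max B1 B2, le_max_of_le_left hB1, fun n hn => ?_⟩
  have hn' : (0 : ℝ) < n := by exact_mod_cast hn
  have hin : ∀ x : ℝ, HasDerivAt (fun x : ℝ => 2 + x / n) (1 / n) x := fun x =>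
    ((hasDerivAt_id x).div_const _).const_add 2
  refine ⟨fun x => T (2 + x / n), fun x => deriv T (2 + x / n) * (1 / n),
    fun x => deriv (deriv T) (2 + x / n) * (1 / n) * (1 / n), ?_, ?_, ?_, ?_, ?_, ?_, ?_, ?_, ?_, ?_⟩
  · intro x
    exact (hsm.differentiable (by simp) _).hasDerivAt.comp x (hin x)
  · intro x
    exact ((hsm1.differentiable (by simp) _).hasDerivAt.comp x (hin x)).mul_const _
  · exact (contDiff_infty.1 hsm 2).comp (by fun_prop)
  · exact ((contDiff_infty.1 hsm1 1).comp (by fun_prop)).mul contDiff_const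
  · have := hsm2.continuous
    fun_prop
  · intro x
    rw [abs_of_nonneg (Real.smoothTransition.nonneg _)]
    exact Real.smoothTransition.le_one _
  · intro x hx
    have : 2 + x / n ≤ 0 := by
      have : x / n ≤ -2 := by rw [div_le_iff₀ hn']; linarith
      linarith
    simp [e0 _ this, z1 _ this, z2 _ this]
  · intro x hx
    have : 1 ≤ 2 + x / n := by
      have : -1 ≤ x / n := by rw [le_div_iff₀ hn']; linarith
      linarith
    simp [e1 _ this, o1 _ this, o2 _ this]
  · intro x
    rw [abs_mul, abs_of_pos (by positivity : (0 : ℝ) < 1 / n), mul_one_div]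
    gcongr
    exact (hB1' _).trans (le_max_left _ _)
  · intro x
    beta_reduce
    rw [mul_assoc, abs_mul, abs_of_pos (by positivity : (0 : ℝ) < 1 / n * (1 / n)),
      show (1 / n * (1 / n) : ℝ) = 1 / (n : ℝ) ^ 2 by field_simp, mul_one_div]
    gcongr
    exact (hB2' _).trans (le_max_right _ _)

lemma hasFDerivAt_log_normSq {z : ℂ} (hz : z ≠ 0) :
    ∃ L : ℂ →L[ℝ] ℝ, HasFDerivAt (fun y : ℂ => Real.log (Complex.normSq y)) L z ∧
      L 1 = 2 * z.re / Complex.normSq z ∧ L I = 2 * z.im / Complex.normSq z := by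
  have h1 : HasFDerivAt (fun y : ℂ => y.re * y.re + y.im * y.im)
      ((z.re • Complex.reCLM + z.re • Complex.reCLM) +
        (z.im • Complex.imCLM + z.im • Complex.imCLM)) z :=
    (Complex.reCLM.hasFDerivAt.mul Complex.reCLM.hasFDerivAt).add
      (Complex.imCLM.hasFDerivAt.mul Complex.imCLM.hasFDerivAt)
  have h2 := h1.log (by rw [← Complex.normSq_apply]; simpa using hz)
  refine ⟨_, by simpa only [Complex.normSq_apply] using h2, ?_, ?_⟩ <;>
  · simp [Complex.normSq_apply]
    ring

/-- Radial functions of `log |z|²`, times `2 / z̄` and their derivatives. -/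
lemma hasFDerivAt_comp_log {a : ℝ → ℝ} {a' : ℝ} {z : ℂ} (hz : z ≠ 0)
    (ha : HasDerivAt a a' (Real.log (Complex.normSq z))) :
    DifferentiableAt ℝ (fun y => (a (Real.log (Complex.normSq y)) : ℂ)) z ∧
    cr I (fun y => (a (Real.log (Complex.normSq y)) : ℂ)) z = a' * (2 / conj z) ∧
    cr (-I) (fun y => (a (Real.log (Complex.normSq y)) : ℂ)) z = a' * (2 / z) := by
  obtain ⟨L, hL, hL1, hLI⟩ := hasFDerivAt_log_normSq hz
  have h := Complex.ofRealCLM.hasFDerivAt.comp z (ha.comp_hasFDerivAt z hL)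
  have h' : fderiv ℝ (fun y => (a (Real.log (Complex.normSq y)) : ℂ)) z = _ := h.fderiv
  have hcz : conj z ≠ 0 := by simpa using hz
  have hns : (Complex.normSq z : ℂ) = z * conj z := (Complex.mul_conj z).symm
  have hre : (z.re : ℂ) + z.im * I = z := Complex.re_add_im z
  have hre' : conj z = (z.re : ℂ) - z.im * I := by
    apply Complex.ext <;> simp
  refine ⟨h.differentiableAt, ?_, ?_⟩
  · simp only [cr, h']
    simp [hL1, hLI, hns]
    field_simp
    linear_combination (a' : ℂ) * hre
  · simp only [cr, h']
    simp [hL1, hLI, hns]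
    field_simp
    linear_combination -(a' : ℂ) * hre'

lemma cr_conj_inv {z : ℂ} (hz : z ≠ 0) :
    DifferentiableAt ℝ (fun y : ℂ => 2 / conj y) z ∧ cr (-I) (fun y : ℂ => 2 / conj y) z = 0 := by
  have hcz : conj z ≠ 0 := by simpa using hz
  have h0 : HasFDerivAt (fun y : ℂ => conj y) (Complex.conjCLE : ℂ →L[ℝ] ℂ) z :=
    Complex.conjCLE.hasFDerivAt
  have h := ((hasFDerivAt_inv' (𝕜 := ℝ) hcz).comp z h0).const_mul (2 : ℂ)
  have e : (fun y : ℂ => 2 / conj y) = fun y : ℂ => 2 * (conj y)⁻¹ := by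
    ext y; rw [div_eq_mul_inv]
  have h' : fderiv ℝ (fun y : ℂ => 2 * (conj y)⁻¹) z = _ := h.fderiv
  rw [e]
  refine ⟨h.differentiableAt, ?_⟩
  simp only [cr, h']
  simp
  linear_combination -(2 * ((conj z)^2)⁻¹) * Complex.I_sq

end

section

lemma contDiff_cr {c : ℂ} {f : ℂ → ℂ} (hf : ContDiff ℝ 2 f) : ContDiff ℝ 1 (cr c f) := by
  have h : ContDiff ℝ 1 (fderiv ℝ f) := hf.fderiv_right (by norm_num)
  unfold cr
  exact (h.clm_apply contDiff_const).add (contDiff_const.mul (h.clm_apply contDiff_const))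

/-- Logarithmic cutoffs near the origin. -/
lemma exists_cutoff : ∃ B : ℝ, 0 ≤ B ∧ ∀ n : ℕ, 0 < n → ∃ η : ℂ → ℂ,
    ContDiff ℝ 2 η ∧ (0 : ℂ) ∉ tsupport η ∧ (∀ z, ‖η z‖ ≤ 1) ∧
    (∀ z, Real.exp (-n) ≤ Complex.normSq z → η z = 1) ∧
    (∀ z, ‖cr I η z‖ ≤ 2 * B / (n * ‖z‖)) ∧
    (∀ z, Real.exp (-n) ≤ Complex.normSq z → cr I η z = 0) ∧
    (∀ z, ‖cr (-I) (cr I η) z‖ ≤ 4 * B / (n ^ 2 * ‖z‖ ^ 2)) ∧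
    (∀ z, Complex.normSq z ≤ Real.exp (-(2 * n)) → cr (-I) (cr I η) z = 0) ∧
    (∀ z, Real.exp (-n) ≤ Complex.normSq z → cr (-I) (cr I η) z = 0) ∧
    (∀ z, cr I η (I * z) = I * cr I η z) := by
  obtain ⟨B, hB, h⟩ := exists_step
  refine ⟨B, hB, fun n hn => ?_⟩
  obtain ⟨a, a₁, a₂, ha, ha₁, hca, -, -, hab, hl, hr, hb1, hb2⟩ := h n hn
  set η : ℂ → ℂ := fun z => if z = 0 then 0 else (a (Real.log (Complex.normSq z)) : ℂ) with hη
  have hlog : ∀ z : ℂ, z ≠ 0 → ∀ x, (Complex.normSq z ≤ Real.exp x ↔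
      Real.log (Complex.normSq z) ≤ x) := fun z hz x =>
    (Real.log_le_iff_le_exp (Complex.normSq_pos.2 hz)).symm
  have hlog' : ∀ z : ℂ, z ≠ 0 → ∀ x, (Real.exp x ≤ Complex.normSq z ↔
      x ≤ Real.log (Complex.normSq z)) := fun z hz x =>
    (Real.le_log_iff_exp_le (Complex.normSq_pos.2 hz)).symm
  have hnear : η =ᶠ[𝓝 0] 0 := by
    have : ∀ᶠ z : ℂ in 𝓝 0, Complex.normSq z < Real.exp (-(2 * n)) := by
      apply Complex.continuous_normSq.continuousAt.eventually_lt continuousAt_const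
      simp [Real.exp_pos]
    filter_upwards [this] with z hz
    by_cases h0 : z = 0
    · simp [hη, h0]
    · simp [hη, h0, (hl _ ((hlog z h0 _).1 hz.le)).1]
  have hfar : ∀ z : ℂ, z ≠ 0 → η =ᶠ[𝓝 z] fun y => (a (Real.log (Complex.normSq y)) : ℂ) := by
    intro z hz
    filter_upwards [isOpen_compl_singleton.mem_nhds hz] with y hy
    have : y ≠ 0 := hy
    simp [hη, this]
  have hη0 : ∀ c, cr c η =ᶠ[𝓝 0] 0 := by
    intro c
    filter_upwards [hnear.eventually_nhds] with y hy
    rw [cr_congr (g := fun _ => 0) hy]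
    simp [cr]
  have hη1 : cr I η = fun z => (a₁ (Real.log (Complex.normSq z)) : ℂ) * (2 / conj z) := by
    ext z
    by_cases hz : z = 0
    · rw [hz, (hη0 I).eq_of_nhds]; simp
    · rw [cr_congr (hfar z hz)]
      exact (hasFDerivAt_comp_log hz (ha _)).2.1
  have hη2 : ∀ z, cr (-I) (cr I η) z = (a₂ (Real.log (Complex.normSq z)) : ℂ) * (4 / (z * conj z)) := by
    intro z
    by_cases hz : z = 0
    · rw [hz, cr_congr (g := fun _ => 0) (hη0 I)]; simp [cr]
    · obtain ⟨d1, -, d2⟩ := hasFDerivAt_comp_log hz (ha₁ _)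
      obtain ⟨d3, d4⟩ := cr_conj_inv hz
      have hcz : conj z ≠ 0 := by simpa using hz
      rw [hη1, cr_mul d1 d3, d4, d2]
      field_simp
      ring
  refine ⟨η, ?_, ?_, ?_, ?_, ?_, ?_, ?_, ?_, ?_, ?_⟩
  · rw [contDiff_iff_contDiffAt]
    intro z
    by_cases hz : z = 0
    · subst hz
      exact contDiffAt_const.congr_of_eventuallyEq hnear
    · refine ContDiffAt.congr_of_eventuallyEq ?_ (hfar z hz)
      have h1 : ContDiff ℝ 2 (fun y : ℂ => Complex.normSq y) := by
        simp only [Complex.normSq_apply]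
        exact (Complex.reCLM.contDiff.mul Complex.reCLM.contDiff).add
          (Complex.imCLM.contDiff.mul Complex.imCLM.contDiff)
      exact Complex.ofRealCLM.contDiff.contDiffAt.comp z
        (hca.contDiffAt.comp z (h1.contDiffAt.log (by simpa using hz)))
  · exact notMem_tsupport_iff_eventuallyEq.2 hnear
  · intro z
    by_cases hz : z = 0
    · simp [hη, hz]
    · simpa [hη, hz] using hab _
  · intro z hz
    have h0 : z ≠ 0 := by
      rintro rfl; simp at hz; exact absurd hz (not_le.2 (Real.exp_pos _))
    simp [hη, h0, (hr _ ((hlog' z h0 _).1 hz)).1]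
  · intro z
    rw [hη1]
    simp only [norm_mul, norm_div, RCLike.norm_conj, Complex.norm_real, Real.norm_eq_abs]
    calc _ ≤ B / n * (2 / ‖z‖) := by
          have := hb1 (Real.log (Complex.normSq z))
          simp only [Complex.norm_ofNat]
          gcongr
      _ = _ := by rw [div_mul_div_comm]; ring
  · intro z hz
    have h0 : z ≠ 0 := by
      rintro rfl; simp at hz; exact absurd hz (not_le.2 (Real.exp_pos _))
    simp [hη1, (hr _ ((hlog' z h0 _).1 hz)).2.1]
  · intro z
    rw [hη2]
    simp only [norm_mul, norm_div, RCLike.norm_conj, Complex.norm_real, Real.norm_eq_abs]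
    calc _ ≤ B / n ^ 2 * (4 / (‖z‖ * ‖z‖)) := by
          have := hb2 (Real.log (Complex.normSq z))
          simp only [Complex.norm_ofNat]
          gcongr
      _ = _ := by rw [div_mul_div_comm]; ring
  · intro z hz
    rw [hη2]
    by_cases h0 : z = 0
    · simp [h0]
    · simp [(hl _ ((hlog z h0 _).1 hz)).2.2]
  · intro z hz
    have h0 : z ≠ 0 := by
      rintro rfl; simp at hz; exact absurd hz (not_le.2 (Real.exp_pos _))
    simp [hη2, (hr _ ((hlog' z h0 _).1 hz)).2.2]
  · intro z
    simp only [hη1, map_mul, Complex.normSq_I, one_mul, Complex.conj_I, div_eq_mul_inv, mul_inv,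
      inv_neg, Complex.inv_I]
    ring

end

section

lemma integral_comp_I_mul (F : ℂ → ℂ) : ∫ z, F (I * z) = ∫ z, F z := by
  let e : ℂ ≃ₗᵢ[ℝ] ℂ := rotation ⟨I, by simp [Submonoid.unitSphere]⟩
  have he : MeasurePreserving e := e.measurePreserving
  exact he.integral_comp e.toHomeomorph.measurableEmbedding F

lemma integral_eq_zero_of_rotation_odd {F : ℂ → ℂ} (h : ∀ z, F (I * z) = -F z) :
    ∫ z, F z = 0 := by
  have h1 := integral_comp_I_mul F
  simp only [h, integral_neg] at h1
  exact self_eq_neg.1 h1.symm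

lemma contDiffOn_cr {c : ℂ} {f : ℂ → ℂ} (hf : ContDiffOn ℝ 2 f {0}ᶜ) :
    ContDiffOn ℝ 1 (cr c f) {0}ᶜ := by
  have h : ContDiffOn ℝ 1 (fderiv ℝ f) {0}ᶜ :=
    hf.fderiv_of_isOpen isOpen_compl_singleton (by norm_num)
  unfold cr
  exact (h.clm_apply contDiffOn_const).add (contDiffOn_const.mul (h.clm_apply contDiffOn_const))

/-- The integral of `|z|⁻²` over an annulus grows only logarithmically. -/
lemma exists_integral_annulus_le : ∃ C : ℝ, 0 ≤ C ∧ ∀ n : ℕ,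
    Integrable (fun z : ℂ => (Icc (Real.exp (-n)) (Real.exp (-n / 2))).indicator
      (fun r => (r ^ 2)⁻¹) ‖z‖) ∧
    ∫ z : ℂ, (Icc (Real.exp (-n)) (Real.exp (-n / 2))).indicator
      (fun r => (r ^ 2)⁻¹) ‖z‖ ≤ C * n := by
  refine ⟨2 * volume.real (Metric.ball (0 : ℂ) 1), by positivity, fun n => ?_⟩
  have hle : Real.exp (-n) ≤ Real.exp (-n / 2) := by
    apply Real.exp_le_exp.2
    have : (0 : ℝ) ≤ n := by positivity
    linarith
  have hpos := Real.exp_pos (-(n : ℝ))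
  have hcont : ContinuousOn (fun y : ℝ => y⁻¹) (Icc (Real.exp (-n)) (Real.exp (-n / 2))) := by
    apply continuousOn_inv₀.mono
    intro y hy
    exact (hpos.trans_le hy.1).ne'
  have hsub : Icc (Real.exp (-n)) (Real.exp (-n / 2)) ⊆ Ioi (0 : ℝ) :=
    fun y hy => hpos.trans_le hy.1
  have e1 : ∀ y : ℝ, y ^ (Module.finrank ℝ ℂ - 1) •
      (Icc (Real.exp (-n)) (Real.exp (-n / 2))).indicator (fun r => (r ^ 2)⁻¹) y =
      (Icc (Real.exp (-n)) (Real.exp (-n / 2))).indicator (fun r => r⁻¹) y := by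
    intro y
    by_cases hy : y ∈ Icc (Real.exp (-n)) (Real.exp (-n / 2))
    · have : y ≠ 0 := (hpos.trans_le hy.1).ne'
      simp only [indicator_of_mem hy, Complex.finrank_real_complex]
      simp
      field_simp
    · simp [indicator_of_notMem hy]
  constructor
  · rw [integrable_fun_norm_addHaar (μ := (volume : Measure ℂ))
      (f := (Icc (Real.exp (-n)) (Real.exp (-n / 2))).indicator (fun r => (r ^ 2)⁻¹))]
    simp only [e1]
    exact ((hcont.integrableOn_Icc).integrable_indicator measurableSet_Icc).integrableOn
  · rw [integral_fun_norm_addHaar (volume : Measure ℂ)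
      ((Icc (Real.exp (-n)) (Real.exp (-n / 2))).indicator (fun r => (r ^ 2)⁻¹))]
    simp only [e1]
    rw [setIntegral_indicator measurableSet_Icc,
      inter_eq_right.2 hsub, integral_Icc_eq_integral_Ioc,
      ← intervalIntegral.integral_of_le hle, integral_inv_of_pos hpos (Real.exp_pos _),
      ← Real.exp_sub, Real.log_exp]
    simp only [Complex.finrank_real_complex, smul_eq_mul, nsmul_eq_mul]
    have : (0 : ℝ) ≤ volume.real (Metric.ball (0 : ℂ) 1) := by positivity
    have hn : (0 : ℝ) ≤ n := by positivity
    have : 0 ≤ volume.real (Metric.ball (0 : ℂ) 1) * (n : ℝ) := by positivity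
    push_cast
    nlinarith

end

section

lemma eventually_exp_neg_le {x : ℝ} (hx : 0 < x) : ∀ᶠ n : ℕ in atTop, Real.exp (-n) ≤ x := by
  have h : Tendsto (fun n : ℕ => Real.exp (-(n : ℝ))) atTop (𝓝 0) :=
    Real.tendsto_exp_neg_atTop_nhds_zero.comp tendsto_natCast_atTop_atTop
  exact h.eventually_le_const hx

lemma tendsto_const_div_nat (c : ℝ) : Tendsto (fun n : ℕ => c / n) atTop (𝓝 0) :=
  tendsto_const_div_atTop_nhds_zero_nat c

/-- The bounded classical Cauchy-Riemann derivative of the kernel off the origin is also its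
distributional derivative. -/
lemma kernel_weak {α : ℝ} {k : ℂ → ℂ} {C : ℝ} {β : ℂ} (hk : ContDiffOn ℝ 2 k {0}ᶜ)
    (hloc : LocallyIntegrable k) (hC : ∀ z, z ≠ 0 → ‖cr I k z‖ ≤ C)
    (heq : ∀ z, z ≠ 0 → k z - α * cr (-I) (cr I k) z = β / conj z)
    {φ : ℂ → ℂ} (hφ : ContDiff ℝ 1 φ) (hφc : HasCompactSupport φ) :
    ∫ z, k z * cr I φ z = -∫ z, cr I k z * φ z := by
  have hk1 : ContDiffOn ℝ 1 k {0}ᶜ := hk.of_le (by norm_num)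
  have hC0 : 0 ≤ C := (norm_nonneg _).trans (hC 1 one_ne_zero)
  set S := cr I k with hS
  have hS1 : ContDiffOn ℝ 1 S {0}ᶜ := contDiffOn_cr hk
  have hSm : Measurable S := measurable_of_continuousOn_compl_singleton 0 hS1.continuousOn
  have hne : ∀ᵐ z : ℂ, z ≠ 0 := by
    simp [ae_iff]
  obtain ⟨B, hB, hcut⟩ := exists_cutoff
  have hcut' : ∀ n : ℕ, ∃ η : ℂ → ℂ, 0 < n → _ := fun n => by
    by_cases hn : 0 < n
    · exact (hcut n hn).imp fun η h _ => h
    · exact ⟨0, fun h => absurd h hn⟩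
  choose η hη using hcut'
  obtain ⟨CA, hCA, hann⟩ := exists_integral_annulus_le
  obtain ⟨L, hL⟩ := hφ.lipschitzWith_of_hasCompactSupport hφc one_ne_zero
  have hkball : IntegrableOn k (Metric.closedBall 0 1) :=
    hloc.integrableOn_isCompact (isCompact_closedBall _ _)
  have hkφ : ∀ ψ : ℂ → ℂ, Continuous ψ → HasCompactSupport ψ → Integrable fun z => k z * ψ z :=
    fun ψ h1 h2 => hloc.integrable_smul_right_of_hasCompactSupport h1 h2
  have hcrφ : HasCompactSupport (cr I φ) :=
    hφc.mono' (subset_closure.trans (support_cr_subset I φ))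
  -- the support of the derivative of the cutoffs
  have hsupp : ∀ n, 0 < n → tsupport (cr I (η n)) ⊆ Metric.closedBall 0 1 := by
    intro n hn
    obtain ⟨-, -, -, -, -, h6, -⟩ := hη n hn
    apply closure_minimal _ Metric.isClosed_closedBall
    intro z hz
    rw [mem_closedBall_zero_iff]
    by_contra hcon
    apply hz
    apply h6
    rw [Complex.normSq_eq_norm_sq]
    have : Real.exp (-(n : ℝ)) ≤ 1 := Real.exp_le_one_iff.2 (by simp)
    nlinarith
  have hcomp : ∀ n, 0 < n → HasCompactSupport (cr I (η n)) := fun n hn =>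
    (isCompact_closedBall (0 : ℂ) 1).of_isClosed_subset (isClosed_tsupport _) (hsupp n hn)
  have hcd : ∀ n, 0 < n → ContDiff ℝ 1 (cr I (η n)) := fun n hn => contDiff_cr (hη n hn).1
  have h0cr : ∀ n, 0 < n → (0 : ℂ) ∉ tsupport (cr I (η n)) := fun n hn h =>
    (hη n hn).2.1 (support_cr_subset _ _ h)
  -- the main part of the commutator
  have hmain : ∀ n : ℕ, 0 < n → ‖∫ z, k z * cr I (η n) z‖ ≤ |α| * (C * (4 * B) * CA) / n := by
    intro n hn
    have hn' : (0 : ℝ) < n := by exact_mod_cast hn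
    obtain ⟨h1, h2, h3, h4, h5, h6, h7, h8, h9, h10⟩ := hη n hn
    have hi : ∀ F : ℂ → ℂ, ContinuousOn F {0}ᶜ → Integrable fun z => F z * cr I (η n) z :=
      fun F hF => integrable_mul_of_tsupport hF (hcd n hn).continuous (hcomp n hn) (h0cr n hn)
    have hβ : ContinuousOn (fun z : ℂ => β / conj z) {0}ᶜ := by
      apply continuousOn_const.div Complex.continuous_conj.continuousOn
      intro z hz
      simpa using hz
    have e1 : ∫ z, k z * cr I (η n) z =
        ∫ z, (β / conj z * cr I (η n) z + α * (cr (-I) S z * cr I (η n) z)) := by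
      apply integral_congr_ae
      filter_upwards [hne] with z hz
      have := heq z hz
      linear_combination cr I (η n) z * this
    rw [e1, integral_add (hi _ hβ) ((hi _ (continuousOn_cr hS1)).const_mul _), integral_const_mul,
      integral_eq_zero_of_rotation_odd, zero_add,
      ← neg_neg (∫ z, cr (-I) S z * cr I (η n) z),
      ← integral_mul_cr_of_tsupport hS1 (hcd n hn) (hcomp n hn) (h0cr n hn)]
    · rw [norm_mul, norm_neg, Complex.norm_real, Real.norm_eq_abs, mul_div_assoc]
      gcongr
      calc ‖∫ z, S z * cr (-I) (cr I (η n)) z‖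
          ≤ ∫ z : ℂ, C * (4 * B) / n ^ 2 * (Icc (Real.exp (-n)) (Real.exp (-n / 2))).indicator
              (fun r => (r ^ 2)⁻¹) ‖z‖ := by
            apply norm_integral_le_of_norm_le ((hann n).1.const_mul _)
            filter_upwards [hne] with z hz
            have hz' : 0 < ‖z‖ := norm_pos_iff.2 hz
            by_cases hzA : ‖z‖ ∈ Icc (Real.exp (-n)) (Real.exp (-n / 2))
            · rw [indicator_of_mem hzA, norm_mul]
              calc _ ≤ C * (4 * B / (n ^ 2 * ‖z‖ ^ 2)) := by
                    gcongr
                    · exact hC z hz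
                    · exact h7 z
                _ = _ := by field_simp
            · rw [indicator_of_notMem hzA, mul_zero]
              have : cr (-I) (cr I (η n)) z = 0 := by
                by_cases hlt : ‖z‖ < Real.exp (-n)
                · apply h8
                  rw [Complex.normSq_eq_norm_sq,
                    show -(2 * (n : ℝ)) = -n + -n by ring, Real.exp_add, ← sq]
                  exact pow_le_pow_left₀ hz'.le hlt.le 2
                · apply h9
                  have : Real.exp (-n / 2) ≤ ‖z‖ := by
                    by_contra hcon
                    exact hzA ⟨not_lt.1 hlt, (not_le.1 hcon).le⟩
                  rw [Complex.normSq_eq_norm_sq,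
                    show -(n : ℝ) = -n / 2 + -n / 2 by ring, Real.exp_add, ← sq]
                  exact pow_le_pow_left₀ (Real.exp_pos _).le this 2
              simp [this]
        _ ≤ C * (4 * B) / n ^ 2 * (CA * n) := by
            rw [integral_const_mul]
            gcongr
            exact (hann n).2
        _ = _ := by field_simp
    · intro z
      have e : (I * conj z)⁻¹ = -I * (conj z)⁻¹ := by rw [mul_inv, Complex.inv_I]
      rw [h10, map_mul, Complex.conj_I, div_eq_mul_inv, div_eq_mul_inv, neg_mul, inv_neg, e]
      linear_combination (β * (conj z)⁻¹ * cr I (η n) z) * Complex.I_sq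
  -- the remainder
  have hrem : ∀ n : ℕ, 0 < n → ‖∫ z, k z * ((φ z - φ 0) * cr I (η n) z)‖ ≤
      (L * (2 * B) * ∫ z in Metric.closedBall 0 1, ‖k z‖) / n := by
    intro n hn
    have hn' : (0 : ℝ) < n := by exact_mod_cast hn
    obtain ⟨h1, h2, h3, h4, h5, h6, h7, h8, h9, h10⟩ := hη n hn
    have e1 : ∫ z, k z * ((φ z - φ 0) * cr I (η n) z) =
        ∫ z in Metric.closedBall 0 1, k z * ((φ z - φ 0) * cr I (η n) z) := by
      symm
      apply setIntegral_eq_integral_of_forall_compl_eq_zero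
      intro z hz
      rw [image_eq_zero_of_notMem_tsupport (fun h => hz (hsupp n hn h))]
      simp
    rw [e1, mul_div_right_comm, ← integral_const_mul]
    apply norm_integral_le_of_norm_le (hkball.norm.const_mul _)
    filter_upwards [ae_restrict_of_ae hne] with z hz
    have hz' : 0 < ‖z‖ := norm_pos_iff.2 hz
    rw [norm_mul, norm_mul]
    have hl := hL.dist_le_mul z 0
    rw [dist_eq_norm, dist_zero_right] at hl
    calc ‖k z‖ * (‖φ z - φ 0‖ * ‖cr I (η n) z‖)
        ≤ ‖k z‖ * ((L * ‖z‖) * (2 * B / (n * ‖z‖))) := by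
          gcongr
          exact h5 z
      _ = _ := by field_simp
  have hcommut : Tendsto (fun n : ℕ => ∫ z, k z * (φ z * cr I (η n) z)) atTop (𝓝 0) := by
    apply squeeze_zero_norm' (a := fun n : ℕ => ‖φ 0‖ * (|α| * (C * (4 * B) * CA) / n) +
      (L * (2 * B) * ∫ z in Metric.closedBall 0 1, ‖k z‖) / n)
    · filter_upwards [eventually_gt_atTop 0] with n hn
      have e : ∫ z, k z * (φ z * cr I (η n) z) =
          ∫ z, (φ 0 * (k z * cr I (η n) z) + k z * ((φ z - φ 0) * cr I (η n) z)) := by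
        congr 1; ext z; ring
      rw [e, integral_add, integral_const_mul]
      · refine (norm_add_le _ _).trans (add_le_add ?_ (hrem n hn))
        rw [norm_mul]
        gcongr
        exact hmain n hn
      · exact (hkφ _ (hcd n hn).continuous (hcomp n hn)).const_mul _
      · exact hkφ _ ((hφ.continuous.sub continuous_const).mul (hcd n hn).continuous)
          (hcomp n hn).mul_left
    · simpa using ((tendsto_const_div_nat _).const_mul ‖φ 0‖).add
        (tendsto_const_div_nat (L * (2 * B) * ∫ z in Metric.closedBall 0 1, ‖k z‖))
  have hlimη : ∀ z : ℂ, z ≠ 0 → Tendsto (fun n => η n z) atTop (𝓝 1) := by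
    intro z hz
    apply tendsto_const_nhds.congr'
    filter_upwards [eventually_gt_atTop 0, eventually_exp_neg_le (Complex.normSq_pos.2 hz)]
      with n hn h
    exact ((hη n hn).2.2.2.1 z h).symm
  have hdct : ∀ G : ℂ → ℂ, Integrable G →
      Tendsto (fun n => ∫ z, G z * η n z) atTop (𝓝 (∫ z, G z)) := by
    intro G hG
    apply tendsto_integral_filter_of_dominated_convergence (fun z => ‖G z‖)
    · filter_upwards [eventually_gt_atTop 0] with n hn
      exact hG.aestronglyMeasurable.mul (hη n hn).1.continuous.aestronglyMeasurable
    · filter_upwards [eventually_gt_atTop 0] with n hn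
      filter_upwards with z
      rw [norm_mul]
      exact mul_le_of_le_one_right (norm_nonneg _) ((hη n hn).2.2.1 z)
    · exact hG.norm
    · filter_upwards [hne] with z hz
      simpa using (hlimη z hz).const_mul (G z)
  have hG1 : Integrable fun z => k z * cr I φ z := hkφ _ (continuous_cr hφ) hcrφ
  have hG2 : Integrable fun z => S z * φ z := by
    apply (hφ.continuous.integrable_of_hasCompactSupport hφc).bdd_mul (c := C)
      hSm.aestronglyMeasurable
    filter_upwards [hne] with z hz using hC z hz
  have hid : ∀ n, 0 < n → (∫ z, k z * cr I φ z * η n z) + (∫ z, k z * (φ z * cr I (η n) z)) =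
      -∫ z, S z * φ z * η n z := by
    intro n hn
    have hη1 : ContDiff ℝ 1 (η n) := (hη n hn).1.of_le (by norm_num)
    have h := integral_mul_cr_of_tsupport (c := I) hk1 (hφ.mul hη1) hφc.mul_right (fun h =>
      (hη n hn).2.1 (closure_mono (Function.support_mul_subset_right φ (η n)) h))
    rw [← integral_add]
    · refine Eq.trans ?_ (h.trans ?_)
      · congr 1; ext z
        rw [cr_mul (hφ.differentiable one_ne_zero z) (hη1.differentiable one_ne_zero z)]
        ring
      · congr 2; ext z; ring
    · simp only [mul_assoc]
      exact hkφ _ ((continuous_cr hφ).mul hη1.continuous) hcrφ.mul_right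
    · exact hkφ _ (hφ.continuous.mul (hcd n hn).continuous) hφc.mul_right
  have hlim := (hdct _ hG1).add hcommut
  rw [add_zero] at hlim
  refine tendsto_nhds_unique hlim ((hdct _ hG2).neg.congr' ?_)
  filter_upwards [eventually_gt_atTop 0] with n hn using (hid n hn).symm

end

section

/-- An integrable, compactly supported kernel with bounded, compactly supported weak
Cauchy-Riemann derivative. -/
structure IsCutKernel (f g : ℂ → ℂ) (C : ℝ) : Prop where
  measurable : Measurable f
  integrable : Integrable f
  measurable' : Measurable g
  integrable' : Integrable g
  bound : ∀ z, ‖g z‖ ≤ C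
  weak : ∀ φ : ℂ → ℂ, ContDiff ℝ 1 φ → ∫ z, f z * cr I φ z = -∫ z, g z * φ z

lemma exists_isCutKernel {α : ℝ} {k : ℂ → ℂ} {C : ℝ} {β : ℂ} (hk : ContDiffOn ℝ 2 k {0}ᶜ)
    (hloc : LocallyIntegrable k) (hC : ∀ z, z ≠ 0 → ‖cr I k z‖ ≤ C)
    (heq : ∀ z, z ≠ 0 → k z - α * cr (-I) (cr I k) z = β / conj z) {R : ℝ} (hR : 0 < R) :
    ∃ (f g : ℂ → ℂ) (C' : ℝ), IsCutKernel f g C' ∧ ∀ z, ‖z‖ ≤ R → f z = k z := by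
  let b : ContDiffBump (0 : ℂ) := ⟨R, R + 1, hR, by linarith⟩
  set χ : ℂ → ℂ := fun z => (b z : ℂ) with hχ
  have hχd : ContDiff ℝ 1 χ := Complex.ofRealCLM.contDiff.comp b.contDiff
  have hχc : HasCompactSupport χ := b.hasCompactSupport.comp_left Complex.ofReal_zero
  have hχ1 : ∀ z, ‖z‖ ≤ R → χ z = 1 := by
    intro z hz
    simp only [hχ]
    rw [b.one_of_mem_closedBall (by simpa using hz)]
    simp
  have hχb : ∀ z, ‖χ z‖ ≤ 1 := by
    intro z
    simp only [hχ, Complex.norm_real, Real.norm_eq_abs, abs_of_nonneg b.nonneg]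
    exact b.le_one
  have hk1 : ContDiffOn ℝ 1 k {0}ᶜ := hk.of_le (by norm_num)
  have hS1 : ContDiffOn ℝ 1 (cr I k) {0}ᶜ := contDiffOn_cr hk
  have hSm : Measurable (cr I k) := measurable_of_continuousOn_compl_singleton 0 hS1.continuousOn
  have hkm : Measurable k := measurable_of_continuousOn_compl_singleton 0 hk1.continuousOn
  have hcrχ : HasCompactSupport (cr I χ) :=
    hχc.mono' (subset_closure.trans (support_cr_subset I χ))
  have h0 : (0 : ℂ) ∉ tsupport (cr I χ) := by
    rw [notMem_tsupport_iff_eventuallyEq]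
    have h1 : χ =ᶠ[𝓝 0] fun _ => 1 := by
      filter_upwards [Metric.ball_mem_nhds (0 : ℂ) hR] with z hz
      exact hχ1 z (by simpa using (Metric.mem_ball.1 hz).le)
    filter_upwards [h1.eventually_nhds] with y hy
    rw [cr_congr (g := fun _ => 1) hy]
    simp [cr]
  have hcont2 : Continuous fun z => k z * cr I χ z :=
    continuous_mul_of_tsupport hk1.continuousOn (continuous_cr hχd) h0
  have hc2 : HasCompactSupport fun z => k z * cr I χ z := hcrχ.mul_left
  obtain ⟨C2, hC2⟩ := hcont2.bounded_above_of_compact_support hc2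
  have hCS : ∀ z, ‖cr I k z‖ ≤ max C ‖cr I k 0‖ := by
    intro z
    by_cases hz : z = 0
    · rw [hz]; exact le_max_right _ _
    · exact (hC z hz).trans (le_max_left _ _)
  have hint1 : ∀ ψ : ℂ → ℂ, Continuous ψ → HasCompactSupport ψ →
      Integrable fun z => cr I k z * ψ z := fun ψ h1 h2 =>
    (h1.integrable_of_hasCompactSupport h2).bdd_mul hSm.aestronglyMeasurable
      (Eventually.of_forall hCS)
  have hkψ : ∀ ψ : ℂ → ℂ, Continuous ψ → HasCompactSupport ψ → Integrable fun z => k z * ψ z :=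
    fun ψ h1 h2 => hloc.integrable_smul_right_of_hasCompactSupport h1 h2
  refine ⟨fun z => k z * χ z, fun z => cr I k z * χ z + k z * cr I χ z,
    max C ‖cr I k 0‖ + C2, ⟨?_, ?_, ?_, ?_, ?_, ?_⟩, ?_⟩
  · exact hkm.mul hχd.continuous.measurable
  · exact hkψ _ hχd.continuous hχc
  · exact (hSm.mul hχd.continuous.measurable).add hcont2.measurable
  · exact (hint1 _ hχd.continuous hχc).add (hkψ _ (continuous_cr hχd) hcrχ)
  · intro z
    refine (norm_add_le _ _).trans (add_le_add ?_ (hC2 z))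
    rw [norm_mul]
    exact (mul_le_of_le_one_right (norm_nonneg _) (hχb z)).trans (hCS z)
  · intro φ hφ
    have hmul : ContDiff ℝ 1 fun z => χ z * φ z := hχd.mul hφ
    have h := kernel_weak hk hloc hC heq hmul hχc.mul_right
    have e1 : ∀ z, k z * cr I (fun z => χ z * φ z) z =
        k z * χ z * cr I φ z + k z * (cr I χ z * φ z) := by
      intro z
      rw [cr_mul (hχd.differentiable one_ne_zero z) (hφ.differentiable one_ne_zero z)]
      ring
    have e2 : ∀ z, (cr I k z * χ z + k z * cr I χ z) * φ z =
        cr I k z * (χ z * φ z) + k z * (cr I χ z * φ z) := by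
      intro z; ring
    have i1 : Integrable fun z => k z * χ z * cr I φ z := by
      simp only [mul_assoc]
      exact hkψ _ (hχd.continuous.mul (continuous_cr hφ)) hχc.mul_right
    have i2 : Integrable fun z => k z * (cr I χ z * φ z) :=
      hkψ _ ((continuous_cr hχd).mul hφ.continuous) hcrχ.mul_right
    have i3 : Integrable fun z => cr I k z * (χ z * φ z) :=
      hint1 _ hmul.continuous hχc.mul_right
    simp only [e1] at h
    simp only [e2]
    rw [integral_add i1 i2] at h
    rw [integral_add i3 i2]
    linear_combination h
  · intro z hz
    simp [hχ1 z hz]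

end

section

/-- A regularisation of the Cauchy kernel `1 / z`. -/
def kap (δ : ℝ) (z : ℂ) : ℂ := conj z / (z * conj z + (δ : ℂ) ^ 2)

/-- The (unnormalised) mollifier generated by `kap`. -/
def moll (δ : ℝ) (z : ℂ) : ℝ := δ ^ 2 / (‖z‖ ^ 2 + δ ^ 2) ^ 2

lemma mul_conj_add_sq (δ : ℝ) (z : ℂ) :
    z * conj z + (δ : ℂ) ^ 2 = ((‖z‖ ^ 2 + δ ^ 2 : ℝ) : ℂ) := by
  rw [Complex.mul_conj, Complex.normSq_eq_norm_sq]; push_cast; ring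

lemma norm_sq_add_pos {δ : ℝ} (hδ : 0 < δ) (z : ℂ) : 0 < ‖z‖ ^ 2 + δ ^ 2 := by positivity

lemma mul_conj_add_sq_ne {δ : ℝ} (hδ : 0 < δ) (z : ℂ) : z * conj z + (δ : ℂ) ^ 2 ≠ 0 := by
  rw [mul_conj_add_sq]
  exact_mod_cast (norm_sq_add_pos hδ z).ne'

lemma kap_neg (δ : ℝ) (z : ℂ) : kap δ (-z) = -kap δ z := by
  simp [kap, neg_div]

lemma moll_neg (δ : ℝ) (z : ℂ) : moll δ (-z) = moll δ z := by
  simp [moll]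

lemma moll_nonneg (δ : ℝ) (z : ℂ) : 0 ≤ moll δ z := by
  unfold moll; positivity

lemma contDiff_kap {δ : ℝ} (hδ : 0 < δ) {n : WithTop ℕ∞} : ContDiff ℝ n (kap δ) := by
  have h : ContDiff ℝ n (fun z : ℂ => conj z) := Complex.conjCLE.contDiff
  unfold kap
  simp only [div_eq_mul_inv]
  exact h.mul (((contDiff_id.mul h).add contDiff_const).inv (mul_conj_add_sq_ne hδ))

lemma fderiv_kap {δ : ℝ} (hδ : 0 < δ) (z e : ℂ) :
    fderiv ℝ (kap δ) z e =
      ((δ : ℂ) ^ 2 * conj e - conj z ^ 2 * e) / (z * conj z + (δ : ℂ) ^ 2) ^ 2 := by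
  have hN := mul_conj_add_sq_ne hδ z
  have h0 : HasFDerivAt (fun y : ℂ => conj y) (Complex.conjCLE : ℂ →L[ℝ] ℂ) z :=
    Complex.conjCLE.hasFDerivAt
  have h1 : HasFDerivAt (fun y : ℂ => kap δ y * (y * conj y + (δ : ℂ) ^ 2))
      (Complex.conjCLE : ℂ →L[ℝ] ℂ) z := by
    have e : (fun y : ℂ => kap δ y * (y * conj y + (δ : ℂ) ^ 2)) = fun y => conj y := by
      ext y; exact div_mul_cancel₀ _ (mul_conj_add_sq_ne hδ y)
    rw [e]; exact h0
  have hk : HasFDerivAt (kap δ) (fderiv ℝ (kap δ) z) z :=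
    ((contDiff_kap hδ (n := 1)).differentiable one_ne_zero z).hasFDerivAt
  have h2 := hk.mul (((hasFDerivAt_id z).mul h0).add_const ((δ : ℂ) ^ 2))
  have h3 := DFunLike.congr_fun (h1.unique h2) e
  simp at h3
  have hkz : kap δ z * (z * conj z + (δ : ℂ) ^ 2) = conj z :=
    div_mul_cancel₀ _ hN
  rw [eq_div_iff (pow_ne_zero 2 hN)]
  linear_combination (-(z * conj z + (δ : ℂ) ^ 2)) * h3 - (z * conj e + conj z * e) * hkz

lemma norm_fderiv_kap_le {δ : ℝ} (hδ : 0 < δ) (z e : ℂ) :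
    ‖fderiv ℝ (kap δ) z e‖ ≤ ‖e‖ / (‖z‖ ^ 2 + δ ^ 2) := by
  have hN := norm_sq_add_pos hδ z
  rw [fderiv_kap hδ, mul_conj_add_sq, norm_div, norm_pow, Complex.norm_real,
    Real.norm_of_nonneg hN.le, div_le_div_iff₀ (by positivity) hN]
  have : ‖(δ : ℂ) ^ 2 * conj e - conj z ^ 2 * e‖ ≤ (‖z‖ ^ 2 + δ ^ 2) * ‖e‖ := by
    refine (norm_sub_le _ _).trans (le_of_eq ?_)
    simp only [norm_mul, norm_pow, RCLike.norm_conj, Complex.norm_real, Real.norm_eq_abs, sq_abs]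
    ring
  calc _ ≤ (‖z‖ ^ 2 + δ ^ 2) * ‖e‖ * (‖z‖ ^ 2 + δ ^ 2) := by gcongr
    _ = _ := by ring

lemma cr_kap {δ : ℝ} (hδ : 0 < δ) (z : ℂ) : cr I (kap δ) z = 2 * (moll δ z : ℂ) := by
  have hN := mul_conj_add_sq_ne hδ z
  simp only [cr, fderiv_kap hδ, moll, Complex.ofReal_div, Complex.ofReal_pow, ← mul_conj_add_sq]
  rw [map_one, Complex.conj_I]
  rw [mul_div_assoc', ← mul_div_assoc, ← add_div]
  congr 1
  linear_combination -((δ : ℂ) ^ 2 + conj z ^ 2) * Complex.I_sq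

lemma norm_kap {δ : ℝ} (hδ : 0 < δ) (z : ℂ) : ‖kap δ z‖ = ‖z‖ / (‖z‖ ^ 2 + δ ^ 2) := by
  rw [kap, mul_conj_add_sq, norm_div, Complex.norm_real,
    Real.norm_of_nonneg (norm_sq_add_pos hδ z).le, RCLike.norm_conj]

lemma norm_kap_le {δ : ℝ} (hδ : 0 < δ) (z : ℂ) : ‖kap δ z‖ ≤ 1 / (2 * δ) := by
  rw [norm_kap hδ, div_le_div_iff₀ (norm_sq_add_pos hδ z) (by positivity)]
  nlinarith [sq_nonneg (‖z‖ - δ)]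

lemma norm_kap_le_inv {δ : ℝ} (hδ : 0 < δ) (z : ℂ) : ‖kap δ z‖ ≤ ‖z‖⁻¹ := by
  rw [norm_kap hδ]
  rcases eq_or_lt_of_le (norm_nonneg z) with h | h
  · simp [← h]
  · rw [inv_eq_one_div, div_le_div_iff₀ (norm_sq_add_pos hδ z) h]
    nlinarith [sq_nonneg δ]

lemma continuous_moll {δ : ℝ} (hδ : 0 < δ) : Continuous (moll δ) := by
  unfold moll
  exact continuous_const.div (by fun_prop) fun z => (pow_pos (norm_sq_add_pos hδ z) 2).ne'

lemma integrable_inv_one_add_sq : Integrable fun z : ℂ => ((1 + ‖z‖ ^ 2) ^ 2)⁻¹ := by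
  have h := integrable_rpow_neg_one_add_norm_sq (E := ℂ) (μ := volume) (r := 4)
    (by rw [Complex.finrank_real_complex]; norm_num)
  refine h.congr (Eventually.of_forall fun z => ?_)
  have : (0 : ℝ) ≤ 1 + ‖z‖ ^ 2 := by positivity
  simp only
  rw [show (-4 / 2 : ℝ) = -2 by norm_num, Real.rpow_neg this]
  norm_num

lemma moll_scale {δ : ℝ} (hδ : 0 < δ) (z : ℂ) : moll δ (δ • z) = (δ ^ 2)⁻¹ * moll 1 z := by
  unfold moll
  rw [norm_smul, Real.norm_of_nonneg hδ.le]
  have : (0 : ℝ) < ‖z‖ ^ 2 + 1 := by positivity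
  field_simp

lemma moll_one (z : ℂ) : moll 1 z = ((1 + ‖z‖ ^ 2) ^ 2)⁻¹ := by
  simp [moll, add_comm]

lemma integrable_moll {δ : ℝ} (hδ : 0 < δ) : Integrable (moll δ) := by
  rw [← integrable_comp_smul_iff volume _ hδ.ne']
  simp only [moll_scale hδ, moll_one]
  exact integrable_inv_one_add_sq.const_mul _

/-- Integrals against the mollifier, rescaled. -/
lemma integral_moll_mul {δ : ℝ} (hδ : 0 < δ) (F : ℂ → ℝ) :
    ∫ z, moll δ z * F z = ∫ z, moll 1 z * F (δ • z) := by
  have h := Measure.integral_comp_smul (volume : Measure ℂ) (fun z => moll δ z * F z) δ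
  rw [Complex.finrank_real_complex, abs_of_pos (by positivity)] at h
  simp only [moll_scale hδ, mul_assoc, integral_const_mul, smul_eq_mul] at h
  exact (mul_left_cancel₀ (by positivity) h).symm

/-- The mass of the mollifiers. -/
def mass : ℝ := ∫ z, moll 1 z

lemma integral_moll {δ : ℝ} (hδ : 0 < δ) : ∫ z, moll δ z = mass := by
  simpa [mass] using integral_moll_mul hδ fun _ => 1

lemma mass_pos : 0 < mass := by
  apply (integral_pos_iff_support_of_nonneg (moll_nonneg 1) (integrable_moll one_pos)).2
  have : Function.support (moll 1) = univ := by
    ext z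
    simp only [Function.mem_support, mem_univ, iff_true, moll_one]
    positivity
  rw [this]
  exact Measure.measure_univ_pos.2 (NeZero.ne _)

end

section

/-- The `L¹` modulus of continuity of `f`. -/
def modulus (f : ℂ → ℂ) (ζ : ℂ) : ℝ := ∫ x, ‖f (x - ζ) - f x‖

/-- The `L¹` modulus of continuity averaged against the mollifier. -/
def avgModulus (f : ℂ → ℂ) (δ : ℝ) : ℝ := ∫ ζ, moll δ ζ * modulus f ζ

lemma modulus_nonneg (f : ℂ → ℂ) (ζ : ℂ) : 0 ≤ modulus f ζ :=
  integral_nonneg fun _ => norm_nonneg _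

lemma avgModulus_nonneg (f : ℂ → ℂ) (δ : ℝ) : 0 ≤ avgModulus f δ :=
  integral_nonneg fun ζ => mul_nonneg (moll_nonneg δ ζ) (modulus_nonneg f ζ)

lemma modulus_le {f : ℂ → ℂ} (hf : Integrable f) (ζ : ℂ) : modulus f ζ ≤ 2 * ∫ x, ‖f x‖ := by
  have h : ∫ x, ‖f (x - ζ)‖ = ∫ x, ‖f x‖ := integral_sub_right_eq_self (fun x => ‖f x‖) ζ
  calc modulus f ζ ≤ ∫ x, (‖f (x - ζ)‖ + ‖f x‖) :=
        integral_mono ((hf.comp_sub_right ζ).sub hf).norm ((hf.comp_sub_right ζ).norm.add hf.norm)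
          fun x => norm_sub_le _ _
    _ = _ := by rw [integral_add (hf.comp_sub_right ζ).norm hf.norm, h]; ring

lemma modulus_sub_le {f g : ℂ → ℂ} (hf : Integrable f) (hg : Integrable g) (ζ : ℂ) :
    modulus f ζ ≤ modulus g ζ + 2 * ∫ x, ‖f x - g x‖ := by
  have h := modulus_le (hf.sub hg) ζ
  have h1 : modulus f ζ ≤ modulus g ζ + modulus (f - g) ζ := by
    have i1 : Integrable fun x => ‖g (x - ζ) - g x‖ := ((hg.comp_sub_right ζ).sub hg).norm
    have i2 : Integrable fun x => ‖(f - g) (x - ζ) - (f - g) x‖ :=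
      (((hf.sub hg).comp_sub_right ζ).sub (hf.sub hg)).norm
    unfold modulus
    rw [← integral_add i1 i2]
    refine integral_mono ((hf.comp_sub_right ζ).sub hf).norm (i1.add i2) fun x => ?_
    refine le_trans (le_of_eq ?_) (norm_add_le _ _)
    congr 1
    simp only [Pi.sub_apply]
    ring
  simpa using h1.trans (add_le_add le_rfl h)

lemma tendsto_modulus_of_compact {g : ℂ → ℂ} (hg : Continuous g) (hc : HasCompactSupport g) :
    Tendsto (modulus g) (𝓝 0) (𝓝 0) := by
  obtain ⟨ρ, hρ⟩ := hc.isCompact.isBounded.subset_closedBall (0 : ℂ)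
  have hcont : Continuous fun ζ => ∫ x in Metric.closedBall (0 : ℂ) (ρ + 1), ‖g (x - ζ) - g x‖ :=
    continuous_parametric_integral_of_continuous (by fun_prop) (isCompact_closedBall _ _)
  have h0 := hcont.tendsto 0
  simp only [sub_zero, sub_self, norm_zero, integral_zero] at h0
  refine h0.congr' ?_
  filter_upwards [Metric.closedBall_mem_nhds (0 : ℂ) one_pos] with ζ hζ
  refine setIntegral_eq_integral_of_forall_compl_eq_zero fun x hx => ?_
  have hζ' : ‖ζ‖ ≤ 1 := by simpa using hζ
  have hx' : ρ + 1 < ‖x‖ := by simpa using hx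
  have e1 : g x = 0 := by
    apply image_eq_zero_of_notMem_tsupport
    intro h
    have : ‖x‖ ≤ ρ := by simpa using hρ h
    linarith
  have e2 : g (x - ζ) = 0 := by
    apply image_eq_zero_of_notMem_tsupport
    intro h
    have : ‖x - ζ‖ ≤ ρ := by simpa using hρ h
    have := norm_sub_norm_le x ζ
    linarith
  simp [e1, e2]

lemma tendsto_modulus {f : ℂ → ℂ} (hf : Integrable f) : Tendsto (modulus f) (𝓝 0) (𝓝 0) := by
  rw [Metric.tendsto_nhds]
  intro ε hε
  obtain ⟨g, hgc, hgle, hgcont, hgint⟩ := hf.exists_hasCompactSupport_integral_sub_le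
    (ε := ε / 4) (by positivity)
  have := Metric.tendsto_nhds.1 (tendsto_modulus_of_compact hgcont hgc) (ε / 2) (by positivity)
  filter_upwards [this] with ζ hζ
  have h := modulus_sub_le hf hgint ζ
  rw [Real.dist_0_eq_abs, abs_of_nonneg (modulus_nonneg _ _)] at hζ ⊢
  linarith

lemma measurable_modulus {f : ℂ → ℂ} (hf : Measurable f) : Measurable (modulus f) := by
  have h : StronglyMeasurable (Function.uncurry fun ζ x : ℂ => ‖f (x - ζ) - f x‖) := by
    apply Measurable.stronglyMeasurable
    exact ((hf.comp (measurable_snd.sub measurable_fst)).sub (hf.comp measurable_snd)).norm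
  exact h.integral_prod_right.measurable

lemma tendsto_avgModulus {f : ℂ → ℂ} (hfm : Measurable f) (hf : Integrable f) :
    Tendsto (fun n : ℕ => avgModulus f (1 / ((n : ℝ) + 1))) atTop (𝓝 0) := by
  have hpos : ∀ n : ℕ, (0 : ℝ) < 1 / ((n : ℝ) + 1) := fun n => Nat.one_div_pos_of_nat
  simp only [avgModulus, integral_moll_mul (hpos _)]
  have h : Tendsto (fun n : ℕ => ∫ z, moll 1 z * modulus f ((1 / ((n : ℝ) + 1)) • z)) atTop
      (𝓝 (∫ z : ℂ, (0 : ℝ))) := by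
    apply tendsto_integral_of_dominated_convergence (fun z => moll 1 z * (2 * ∫ x, ‖f x‖))
    · intro n
      refine ((continuous_moll one_pos).measurable.mul ?_).aestronglyMeasurable
      exact (measurable_modulus hfm).comp (measurable_const_smul _)
    · exact (integrable_moll one_pos).mul_const _
    · intro n
      filter_upwards with z
      rw [Real.norm_of_nonneg (mul_nonneg (moll_nonneg _ _) (modulus_nonneg _ _))]
      gcongr
      · exact moll_nonneg _ _
      · exact modulus_le hf _
    · filter_upwards with z
      have h1 : Tendsto (fun n : ℕ => (1 / ((n : ℝ) + 1)) • z) atTop (𝓝 0) := by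
        simpa using (tendsto_one_div_add_atTop_nhds_zero_nat (𝕜 := ℝ)).smul_const z
      simpa using ((tendsto_modulus hf).comp h1).const_mul (moll 1 z)
  simpa using h

/-- Convolution kernels are integrable on the product. -/
lemma integrable_conv {p P : ℂ → ℝ} (hp : Integrable p) (hP : Integrable P) :
    Integrable (fun x : ℂ × ℂ => p x.1 * P (x.1 - x.2)) (volume.prod volume) := by
  have h : MeasurePreserving (fun x : ℂ × ℂ => (x.1, x.1 - x.2)) (volume.prod volume)
      (volume.prod volume) :=
    (MeasurePreserving.id volume).skew_product (g := fun x y => x - y)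
      (measurable_fst.sub measurable_snd)
      (Eventually.of_forall fun x => Measure.map_sub_left_eq_self volume x)
  exact h.integrable_comp_of_integrable (hp.mul_prod hP)

lemma integrable_conv' {p P : ℂ → ℝ} (hp : Integrable p) (hP : Integrable P)
    (heven : ∀ z, P (-z) = P z) :
    Integrable (fun x : ℂ × ℂ => p x.2 * P (x.1 - x.2)) (volume.prod volume) := by
  refine (integrable_conv hp hP).swap.congr (Eventually.of_forall fun x => ?_)
  simp only [Function.comp, Prod.fst_swap, Prod.snd_swap]
  rw [← heven, neg_sub]

lemma integrable_modulus_prod {f : ℂ → ℂ} (hfm : Measurable f) (hf : Integrable f) {δ : ℝ}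
    (hδ : 0 < δ) : Integrable (fun p : ℂ × ℂ => ‖f p.1 - f p.2‖ * moll δ (p.1 - p.2))
      (volume.prod volume) := by
  have hm := (continuous_moll hδ).measurable
  refine ((integrable_conv hf.norm (integrable_moll hδ)).add
    (integrable_conv' hf.norm (integrable_moll hδ) (moll_neg δ))).mono' ?_ ?_
  · exact (((hfm.comp measurable_fst).sub (hfm.comp measurable_snd)).norm.mul
      (hm.comp (measurable_fst.sub measurable_snd))).aestronglyMeasurable
  · filter_upwards with p
    rw [Real.norm_of_nonneg (mul_nonneg (norm_nonneg _) (moll_nonneg _ _))]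
    simp only [Pi.add_apply]
    rw [← add_mul]
    exact mul_le_mul_of_nonneg_right (norm_sub_le _ _) (moll_nonneg _ _)

lemma integral_modulus_prod {f : ℂ → ℂ} (hfm : Measurable f) (hf : Integrable f) {δ : ℝ}
    (hδ : 0 < δ) : ∫ p : ℂ × ℂ, ‖f p.1 - f p.2‖ * moll δ (p.1 - p.2) ∂(volume.prod volume) =
      avgModulus f δ := by
  have h := integrable_modulus_prod hfm hf hδ
  have hmp : MeasurePreserving (fun x : ℂ × ℂ => (x.1, x.1 - x.2)) (volume.prod volume)
      (volume.prod volume) :=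
    (MeasurePreserving.id volume).skew_product (g := fun x y => x - y)
      (measurable_fst.sub measurable_snd)
      (Eventually.of_forall fun x => Measure.map_sub_left_eq_self volume x)
  have h' := hmp.integrable_comp_of_integrable h
  simp only [Function.comp_def, sub_sub_cancel] at h'
  rw [integral_prod _ h]
  calc _ = ∫ x : ℂ, ∫ ζ : ℂ, ‖f x - f (x - ζ)‖ * moll δ ζ := by
        congr 1; ext x
        rw [← integral_sub_left_eq_self _ volume x]
        simp only [sub_sub_cancel]
    _ = ∫ ζ : ℂ, ∫ x : ℂ, ‖f x - f (x - ζ)‖ * moll δ ζ := integral_integral_swap h'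
    _ = _ := by
        unfold avgModulus modulus
        congr 1; ext ζ
        rw [integral_mul_const, mul_comm]
        simp only [norm_sub_rev]

end

section

/-- Functions with `L^∞` and `L¹` norms at most `M`. -/
structure IsBdd (M : ℝ) (q : ℂ → ℝ) : Prop where
  measurable : Measurable q
  bound : ∀ z, |q z| ≤ M
  integrable : Integrable q
  integral_le : ∫ z, |q z| ≤ M

lemma IsBdd.nonneg {M : ℝ} {q : ℂ → ℝ} (h : IsBdd M q) : 0 ≤ M := (abs_nonneg _).trans (h.bound 0)

lemma IsBdd.sub {M M' : ℝ} {q q' : ℂ → ℝ} (h : IsBdd M q) (h' : IsBdd M' q') :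
    IsBdd (M + M') fun z => q z - q' z where
  measurable := h.measurable.sub h'.measurable
  bound z := (abs_sub _ _).trans (add_le_add (h.bound z) (h'.bound z))
  integrable := h.integrable.sub h'.integrable
  integral_le := by
    refine le_trans ?_ (add_le_add h.integral_le h'.integral_le)
    rw [← integral_add h.integrable.abs h'.integrable.abs]
    exact integral_mono (h.integrable.sub h'.integrable).abs
      (h.integrable.abs.add h'.integrable.abs) fun z => abs_sub _ _

/-- The regularised velocity `kap δ ∗ q`. -/
def vel (δ : ℝ) (q : ℂ → ℝ) (z : ℂ) : ℂ := ∫ w, kap δ (z - w) * (q w : ℂ)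

/-- The regularised vorticity `moll δ ∗ q`. -/
def reg (δ : ℝ) (q : ℂ → ℝ) (z : ℂ) : ℝ := ∫ w, moll δ (z - w) * q w

variable {δ : ℝ} {q : ℂ → ℝ}

lemma norm_fderiv_kap_le' (hδ : 0 < δ) (z : ℂ) : ‖fderiv ℝ (kap δ) z‖ ≤ 1 / δ ^ 2 := by
  refine ContinuousLinearMap.opNorm_le_bound _ (by positivity) fun e => ?_
  refine (norm_fderiv_kap_le hδ z e).trans ?_
  rw [div_mul_eq_mul_div, one_mul]
  gcongr
  nlinarith [sq_nonneg ‖z‖]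

lemma continuous_fderiv_kap (hδ : 0 < δ) : Continuous (fderiv ℝ (kap δ)) :=
  (contDiff_kap hδ (n := 1)).continuous_fderiv one_ne_zero

lemma integrable_kap_mul (hδ : 0 < δ) (hq : Integrable q) (z : ℂ) :
    Integrable fun w => kap δ (z - w) * (q w : ℂ) := by
  apply hq.ofReal.bdd_mul (c := 1 / (2 * δ))
  · have := (contDiff_kap hδ (n := 1)).continuous
    exact (this.comp (by fun_prop)).aestronglyMeasurable
  · exact Eventually.of_forall fun w => norm_kap_le hδ _

lemma integrable_fderiv_kap (hδ : 0 < δ) (hq : Integrable q) (z : ℂ) :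
    Integrable fun w => (q w : ℂ) • fderiv ℝ (kap δ) (z - w) := by
  have h := continuous_fderiv_kap hδ
  apply (hq.ofReal (𝕜 := ℂ)).smul_bdd (1 / δ ^ 2)
  · exact (h.comp (by fun_prop)).aestronglyMeasurable
  · exact Eventually.of_forall fun w => norm_fderiv_kap_le' hδ _

lemma hasFDerivAt_vel (hδ : 0 < δ) (hq : Integrable q) (z : ℂ) :
    HasFDerivAt (vel δ q) (∫ w, (q w : ℂ) • fderiv ℝ (kap δ) (z - w)) z := by
  have hc := continuous_fderiv_kap hδ
  unfold vel
  refine hasFDerivAt_integral_of_dominated_of_fderiv_le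
    (F := fun z w => kap δ (z - w) * (q w : ℂ))
    (F' := fun z w => (q w : ℂ) • fderiv ℝ (kap δ) (z - w)) (s := univ)
    (bound := fun w => |q w| * (1 / δ ^ 2)) Filter.univ_mem
    (Eventually.of_forall fun z => (integrable_kap_mul hδ hq z).aestronglyMeasurable)
    (integrable_kap_mul hδ hq z)
    (integrable_fderiv_kap hδ hq z).aestronglyMeasurable ?_ (hq.abs.mul_const _) ?_
  · filter_upwards with w x _
    rw [norm_smul, Complex.norm_real, Real.norm_eq_abs]
    gcongr
    exact norm_fderiv_kap_le' hδ _
  · filter_upwards with w x _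
    have h1 : HasFDerivAt (kap δ) (fderiv ℝ (kap δ) (x - w)) (x - w) :=
      ((contDiff_kap hδ (n := 1)).differentiable one_ne_zero _).hasFDerivAt
    exact (h1.comp x ((hasFDerivAt_id x).sub_const w)).mul_const (q w : ℂ)

lemma contDiff_vel (hδ : 0 < δ) (hq : Integrable q) : ContDiff ℝ 1 (vel δ q) := by
  have hc := continuous_fderiv_kap hδ
  rw [contDiff_one_iff_fderiv]
  refine ⟨fun z => (hasFDerivAt_vel hδ hq z).differentiableAt, ?_⟩
  have : fderiv ℝ (vel δ q) = fun z => ∫ w, (q w : ℂ) • fderiv ℝ (kap δ) (z - w) := by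
    ext1 z; exact (hasFDerivAt_vel hδ hq z).fderiv
  rw [this]
  apply continuous_of_dominated (bound := fun w => |q w| * (1 / δ ^ 2))
  · exact fun z => (integrable_fderiv_kap hδ hq z).aestronglyMeasurable
  · intro z
    filter_upwards with w
    rw [norm_smul, Complex.norm_real, Real.norm_eq_abs]
    gcongr
    exact norm_fderiv_kap_le' hδ _
  · exact hq.abs.mul_const _
  · filter_upwards with w
    fun_prop

lemma cr_vel (hδ : 0 < δ) (hq : Integrable q) (z : ℂ) :
    cr I (vel δ q) z = 2 * (reg δ q z : ℂ) := by
  have hi := integrable_fderiv_kap hδ hq z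
  have happ : ∀ e : ℂ, (∫ w, (q w : ℂ) • fderiv ℝ (kap δ) (z - w)) e =
      ∫ w, (q w : ℂ) * fderiv ℝ (kap δ) (z - w) e := fun e =>
    ContinuousLinearMap.integral_apply hi e
  have hie : ∀ e : ℂ, Integrable fun w => (q w : ℂ) * fderiv ℝ (kap δ) (z - w) e := fun e =>
    hi.apply_continuousLinearMap e
  simp only [cr, (hasFDerivAt_vel hδ hq z).fderiv, happ]
  rw [← integral_const_mul, ← integral_add (hie 1) ((hie I).const_mul I), reg,
    ← integral_complex_ofReal, ← integral_const_mul]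
  congr 1; ext w
  have := cr_kap hδ (z - w)
  simp only [cr] at this
  push_cast
  linear_combination (q w : ℂ) * this

end

section

/-- The Japanese bracket. -/
def jap (z : ℂ) : ℝ := √(1 + ‖z‖ ^ 2)

lemma jap_sq (z : ℂ) : jap z ^ 2 = 1 + ‖z‖ ^ 2 := Real.sq_sqrt (by positivity)

lemma jap_pos (z : ℂ) : 0 < jap z := Real.sqrt_pos.2 (by positivity)

lemma continuous_jap : Continuous jap := by unfold jap; fun_prop

lemma jap_sq_le (z w : ℂ) : jap z ^ 2 ≤ 2 * jap w ^ 2 * jap (z - w) ^ 2 := by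
  simp only [jap_sq]
  have h : ‖z‖ ≤ ‖w‖ + ‖z - w‖ := by simpa using norm_add_le w (z - w)
  nlinarith [norm_nonneg z, norm_nonneg w, norm_nonneg (z - w), sq_nonneg (‖w‖ - ‖z - w‖),
    mul_nonneg (sq_nonneg ‖w‖) (sq_nonneg ‖z - w‖), pow_le_pow_left₀ (norm_nonneg z) h 2]

lemma integrable_jap_inv : Integrable fun z : ℂ => (jap z ^ 3)⁻¹ := by
  have h := integrable_rpow_neg_one_add_norm_sq (E := ℂ) (μ := volume) (r := 3)
    (by rw [Complex.finrank_real_complex]; norm_num)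
  refine h.congr (Eventually.of_forall fun z => ?_)
  have h0 : (0 : ℝ) ≤ 1 + ‖z‖ ^ 2 := by positivity
  simp only
  rw [show (-3 / 2 : ℝ) = -((1 / 2) * 3) by norm_num, Real.rpow_neg h0, Real.rpow_mul h0,
    ← Real.sqrt_eq_rpow, ← jap]
  norm_num

lemma integrable_jap_inv_four : Integrable fun z : ℂ => (jap z ^ 4)⁻¹ := by
  refine integrable_inv_one_add_sq.congr (Eventually.of_forall fun z => ?_)
  simp only [← jap_sq]
  ring

lemma one_le_jap (z : ℂ) : 1 ≤ jap z := by
  unfold jap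
  rw [Real.one_le_sqrt]
  nlinarith [sq_nonneg ‖z‖]

lemma inv_norm_sq_add_le {δ : ℝ} (hδ : 0 < δ) (hδ1 : δ ≤ 1) (z w : ℂ) :
    (‖z - w‖ ^ 2 + δ ^ 2)⁻¹ ≤ 2 * jap w ^ 2 / δ ^ 2 / jap z ^ 2 := by
  have h := jap_sq_le z w
  have h1 : δ ^ 2 * jap (z - w) ^ 2 ≤ ‖z - w‖ ^ 2 + δ ^ 2 := by
    rw [jap_sq]
    have : δ ^ 2 ≤ 1 := pow_le_one₀ hδ.le hδ1
    nlinarith [sq_nonneg ‖z - w‖]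
  have hz := jap_pos z
  have hw := jap_pos w
  rw [div_div, inv_eq_one_div, div_le_div_iff₀ (norm_sq_add_pos hδ _) (by positivity), one_mul]
  calc δ ^ 2 * jap z ^ 2 ≤ δ ^ 2 * (2 * jap w ^ 2 * jap (z - w) ^ 2) := by gcongr
    _ = 2 * jap w ^ 2 * (δ ^ 2 * jap (z - w) ^ 2) := by ring
    _ ≤ _ := by gcongr

lemma norm_fderiv_kap_decay {δ : ℝ} (hδ : 0 < δ) (hδ1 : δ ≤ 1) (z w e : ℂ) :
    ‖fderiv ℝ (kap δ) (z - w) e‖ ≤ 2 * jap w ^ 2 / δ ^ 2 / jap z ^ 2 * ‖e‖ := by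
  refine (norm_fderiv_kap_le hδ _ _).trans ?_
  rw [div_eq_mul_inv, mul_comm]
  gcongr
  exact inv_norm_sq_add_le hδ hδ1 z w

lemma norm_kap_decay {δ : ℝ} (hδ : 0 < δ) (hδ1 : δ ≤ 1) (z w : ℂ) :
    ‖kap δ (z - w)‖ ≤ 2 * jap w / δ / jap z := by
  have hz := jap_pos z
  have hw := jap_pos w
  have hN := norm_sq_add_pos hδ (z - w)
  refine (sq_le_sq₀ (norm_nonneg _) (by positivity)).1 ?_
  calc ‖kap δ (z - w)‖ ^ 2 = ‖z - w‖ ^ 2 / (‖z - w‖ ^ 2 + δ ^ 2) ^ 2 := by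
        rw [norm_kap hδ, div_pow]
    _ ≤ (‖z - w‖ ^ 2 + δ ^ 2)⁻¹ := by
        rw [inv_eq_one_div, div_le_div_iff₀ (by positivity) hN]
        nlinarith [sq_nonneg δ]
    _ ≤ 2 * jap w ^ 2 / δ ^ 2 / jap z ^ 2 := inv_norm_sq_add_le hδ hδ1 z w
    _ ≤ 4 * jap w ^ 2 / δ ^ 2 / jap z ^ 2 := by gcongr; norm_num
    _ = _ := by ring

/-- The first component of the complexified regularised kernel. -/
lemma hasFDerivAt_re_kap {δ : ℝ} (hδ : 0 < δ) (w e z : ℂ) :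
    ∃ L : ℂ →L[ℝ] ℂ, HasFDerivAt (fun z => (((e * kap δ (z - w)).re : ℝ) : ℂ)) L z ∧
      ∀ v, L v = (((e * fderiv ℝ (kap δ) (z - w) v).re : ℝ) : ℂ) := by
  have h1 : HasFDerivAt (kap δ) (fderiv ℝ (kap δ) (z - w)) (z - w) :=
    ((contDiff_kap hδ (n := 1)).differentiable one_ne_zero _).hasFDerivAt
  have h2 := (h1.comp z ((hasFDerivAt_id z).sub_const w)).const_mul e
  exact ⟨_, (Complex.ofRealCLM.comp Complex.reCLM).hasFDerivAt.comp z h2, fun v => by simp⟩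

lemma cr_re_kap {δ : ℝ} (hδ : 0 < δ) (w e z : ℂ) :
    cr I (fun z => (((e * kap δ (z - w)).re : ℝ) : ℂ)) z =
      conj (fderiv ℝ (kap δ) (z - w) e) := by
  obtain ⟨L, hL, hv⟩ := hasFDerivAt_re_kap hδ w e z
  have hN := mul_conj_add_sq_ne hδ (z - w)
  rw [cr, hL.fderiv]
  simp only [hv, fderiv_kap hδ, Complex.re_eq_add_conj]
  generalize z - w = y at hN
  simp only [map_mul, map_div₀, map_sub, map_add, map_pow, Complex.conj_conj, Complex.conj_ofReal,
    Complex.conj_I, map_one, map_neg]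
  rw [mul_comm (conj y) y]
  generalize y * conj y + (δ : ℂ) ^ 2 = n at hN
  field_simp
  linear_combination (-e * δ ^ 2 - e * (conj y)^2+ conj e * δ ^ 2 + conj e * y ^ 2) * Complex.I_sq

end

section

variable {δ : ℝ} {q : ℂ → ℝ}

lemma integrable_of_jap_bound {E : Type*} [NormedAddCommGroup E] {F : ℂ → E}
    (hF : Continuous F) {C : ℝ} (h : ∀ z, ‖F z‖ ≤ C * (jap z ^ 3)⁻¹) : Integrable F :=
  (integrable_jap_inv.const_mul C).mono' hF.aestronglyMeasurable (Eventually.of_forall h)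

lemma norm_fderiv_vel_le (hδ : 0 < δ) (hδ1 : δ ≤ 1) (hq : Integrable q)
    (hqw : Integrable fun w => jap w ^ 2 * |q w|) (z v : ℂ) :
    ‖fderiv ℝ (vel δ q) z v‖ ≤ (2 / δ ^ 2 * ∫ w, jap w ^ 2 * |q w|) * ‖v‖ / jap z ^ 2 := by
  rw [(hasFDerivAt_vel hδ hq z).fderiv,
    ContinuousLinearMap.integral_apply (integrable_fderiv_kap hδ hq z)]
  have e : (2 / δ ^ 2 * ∫ w, jap w ^ 2 * |q w|) * ‖v‖ / jap z ^ 2 =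
      ∫ w, 2 / δ ^ 2 * ‖v‖ / jap z ^ 2 * (jap w ^ 2 * |q w|) := by
    rw [integral_const_mul]; ring
  rw [e]
  refine norm_integral_le_of_norm_le (hqw.const_mul _) (Eventually.of_forall fun w => ?_)
  have h := norm_fderiv_kap_decay hδ hδ1 z w v
  rw [FunLike.coe_smul, Pi.smul_apply, norm_smul, Complex.norm_real, Real.norm_eq_abs]
  calc _ ≤ |q w| * (2 * jap w ^ 2 / δ ^ 2 / jap z ^ 2 * ‖v‖) := by gcongr
    _ = _ := by ring

/-- Integration by parts against the derivative of the regularised kernel. -/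
lemma re_integral_conj_vel_mul (hδ : 0 < δ) (hδ1 : δ ≤ 1) (hq : Integrable q)
    (hqw : Integrable fun w => jap w ^ 2 * |q w|) {C₁ : ℝ}
    (hV : ∀ z, ‖vel δ q z‖ ≤ C₁ / jap z ^ 2) (w e : ℂ) :
    (∫ z, conj (vel δ q z) * fderiv ℝ (kap δ) (z - w) e).re =
      -2 * ∫ z, reg δ q z * (e * kap δ (z - w)).re := by
  set p : ℂ → ℂ := fun z => (((e * kap δ (z - w)).re : ℝ) : ℂ) with hp
  have hkc : ContDiff ℝ 1 fun z => kap δ (z - w) :=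
    (contDiff_kap hδ).comp (contDiff_id.sub contDiff_const)
  have hpc : ContDiff ℝ 1 p := (Complex.ofRealCLM.comp Complex.reCLM).contDiff.comp
    (contDiff_const.mul hkc)
  have hVc : ContDiff ℝ 1 (vel δ q) := contDiff_vel hδ hq
  have hpb : ∀ z, ‖p z‖ ≤ ‖e‖ * (2 * jap w / δ) / jap z := by
    intro z
    simp only [hp, Complex.norm_real]
    refine (Complex.abs_re_le_norm _).trans ?_
    rw [norm_mul, mul_div_assoc]
    gcongr
    exact norm_kap_decay hδ hδ1 z w
  have hpb' : ∀ z v, ‖fderiv ℝ p z v‖ ≤ ‖e‖ * (2 * jap w ^ 2 / δ ^ 2) * ‖v‖ / jap z ^ 2 := by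
    intro z v
    obtain ⟨L, hL, hv⟩ := hasFDerivAt_re_kap hδ w e z
    rw [hL.fderiv, hv, Complex.norm_real]
    refine (Complex.abs_re_le_norm _).trans ?_
    rw [norm_mul]
    calc _ ≤ ‖e‖ * (2 * jap w ^ 2 / δ ^ 2 / jap z ^ 2 * ‖v‖) := by
          gcongr
          exact norm_fderiv_kap_decay hδ hδ1 z w v
      _ = _ := by ring
  have hC₁ : 0 ≤ C₁ := by
    have h1 := (norm_nonneg _).trans (hV 0)
    simpa [jap] using h1
  have hdp := hpc.continuous_fderiv one_ne_zero
  have hdV := hVc.continuous_fderiv one_ne_zero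
  have hpc' := hpc.continuous
  have hVc' := hVc.continuous
  have key := integral_mul_cr (c := I) (f := vel δ q) (g := p)
    (fun z _ => hVc.differentiable one_ne_zero z) (hpc.differentiable one_ne_zero)
    (integrable_of_jap_bound (by fun_prop) (C := C₁ * (‖e‖ * (2 * jap w / δ))) fun z => by
      rw [norm_mul]
      calc _ ≤ C₁ / jap z ^ 2 * (‖e‖ * (2 * jap w / δ) / jap z) := by
            gcongr
            · exact hV z
            · exact hpb z
        _ = _ := by rw [div_mul_div_comm, div_eq_mul_inv, ← pow_succ])
    (fun v => integrable_of_jap_bound (by fun_prop)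
      (C := C₁ * (‖e‖ * (2 * jap w ^ 2 / δ ^ 2) * ‖v‖)) fun z => by
      have h1 := one_le_jap z
      rw [norm_mul]
      calc _ ≤ C₁ / jap z ^ 2 * (‖e‖ * (2 * jap w ^ 2 / δ ^ 2) * ‖v‖ / jap z ^ 2) := by
            gcongr
            · exact hV z
            · exact hpb' z v
        _ = C₁ * (‖e‖ * (2 * jap w ^ 2 / δ ^ 2) * ‖v‖) * (jap z ^ 4)⁻¹ := by
            rw [div_mul_div_comm, div_eq_mul_inv, ← pow_add]
        _ ≤ _ := by
            have := jap_pos z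
            gcongr
            norm_num)
    (fun v => integrable_of_jap_bound (by fun_prop)
      (C := ((2 / δ ^ 2 * ∫ w, jap w ^ 2 * |q w|) * ‖v‖) * (‖e‖ * (2 * jap w / δ))) fun z => by
      have hz := jap_pos z
      have h0 : 0 ≤ ∫ w, jap w ^ 2 * |q w| := integral_nonneg fun w => by positivity
      rw [norm_mul]
      calc _ ≤ ((2 / δ ^ 2 * ∫ w, jap w ^ 2 * |q w|) * ‖v‖) / jap z ^ 2 *
            (‖e‖ * (2 * jap w / δ) / jap z) := by
            gcongr
            · exact norm_fderiv_vel_le hδ hδ1 hq hqw z v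
            · exact hpb z
        _ = _ := by rw [div_mul_div_comm, div_eq_mul_inv, ← pow_succ])
  have e1 : ∀ z, vel δ q z * cr I p z =
      conj (conj (vel δ q z) * fderiv ℝ (kap δ) (z - w) e) := by
    intro z
    rw [hp, cr_re_kap hδ, map_mul, Complex.conj_conj]
  have e2 : ∀ z, cr I (vel δ q) z * p z = ((2 * (reg δ q z * (e * kap δ (z - w)).re) : ℝ) : ℂ) := by
    intro z
    rw [cr_vel hδ hq, hp]
    push_cast
    ring
  simp only [e1, e2] at key
  rw [integral_conj, integral_complex_ofReal, integral_const_mul] at key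
  have := congrArg Complex.re key
  simpa using this

end

section

lemma integrable_indicator_inv_norm :
    Integrable fun z : ℂ => (Iio (1 : ℝ)).indicator (fun r => r⁻¹) ‖z‖ := by
  rw [integrable_fun_norm_addHaar (μ := (volume : Measure ℂ))
    (f := (Iio (1 : ℝ)).indicator (fun r => r⁻¹))]
  have h : IntegrableOn (fun _ : ℝ => (1 : ℝ)) (Ioo 0 1) := by simp
  have h2 := (integrable_indicator_iff measurableSet_Ioo).2 h
  refine h2.integrableOn.congr_fun (fun y hy => ?_) measurableSet_Ioi
  have hy : (0 : ℝ) < y := hy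
  by_cases h1 : y < 1
  · rw [indicator_of_mem (show y ∈ Ioo 0 1 from ⟨hy, h1⟩),
      indicator_of_mem (show y ∈ Iio 1 from h1), Complex.finrank_real_complex]
    simp [hy.ne']
  · rw [indicator_of_notMem (fun h => h1 h.2), indicator_of_notMem (show y ∉ Iio 1 from h1), smul_zero]

lemma exists_norm_vel_le : ∃ C : ℝ, 0 ≤ C ∧ ∀ δ : ℝ, 0 < δ → ∀ (M : ℝ) (q : ℂ → ℝ), IsBdd M q →
    ∀ z, ‖vel δ q z‖ ≤ C * M := by
  set s : ℂ → ℝ := fun z => (Iio (1 : ℝ)).indicator (fun r => r⁻¹) ‖z‖ with hs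
  have hsi : Integrable s := integrable_indicator_inv_norm
  have hs0 : ∀ z, 0 ≤ s z := fun z =>
    indicator_apply_nonneg fun _ => inv_nonneg.2 (norm_nonneg z)
  have hle : ∀ z, ‖z‖⁻¹ ≤ s z + 1 := by
    intro z
    by_cases h : ‖z‖ < 1
    · simp [hs, indicator_of_mem (show ‖z‖ ∈ Iio (1 : ℝ) from h)]
    · have := inv_le_one_of_one_le₀ (not_lt.1 h)
      linarith [hs0 z]
  refine ⟨(∫ z, s z) + 1, add_nonneg (integral_nonneg hs0) zero_le_one, ?_⟩
  intro δ hδ M q hq z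
  have hM := hq.nonneg
  have i1 : Integrable fun w => M * s (z - w) := (hsi.comp_sub_left z).const_mul M
  have h : ∀ w, ‖kap δ (z - w) * (q w : ℂ)‖ ≤ M * s (z - w) + |q w| := by
    intro w
    rw [norm_mul, Complex.norm_real, Real.norm_eq_abs]
    have h1 := (norm_kap_le_inv hδ (z - w)).trans (hle (z - w))
    have h2 := hq.bound w
    have h3 := hs0 (z - w)
    calc _ ≤ (s (z - w) + 1) * |q w| := by gcongr
      _ ≤ _ := by nlinarith
  refine (norm_integral_le_of_norm_le (i1.add hq.integrable.abs)
    (Eventually.of_forall h)).trans ?_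
  simp only [Pi.add_apply]
  rw [integral_add i1 hq.integrable.abs, integral_const_mul, integral_sub_left_eq_self s volume z]
  linarith [hq.integral_le]

lemma moll_le {δ : ℝ} (hδ : 0 < δ) (z : ℂ) : moll δ z ≤ (δ ^ 2)⁻¹ := by
  have h : (δ ^ 2) ^ 2 ≤ (‖z‖ ^ 2 + δ ^ 2) ^ 2 := by
    gcongr
    nlinarith [sq_nonneg ‖z‖]
  unfold moll
  rw [div_le_iff₀ (by positivity), inv_mul_eq_div, le_div_iff₀ (by positivity)]
  linarith

lemma integrable_moll_sub {δ : ℝ} (hδ : 0 < δ) (z : ℂ) : Integrable fun w => moll δ (z - w) :=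
  (integrable_moll hδ).comp_sub_left z

lemma integral_moll_sub {δ : ℝ} (hδ : 0 < δ) (z : ℂ) : ∫ w, moll δ (z - w) = mass := by
  rw [integral_sub_left_eq_self (moll δ) volume z, integral_moll hδ]

lemma integrable_moll_mul {δ : ℝ} (hδ : 0 < δ) {q : ℂ → ℝ} (hq : Integrable q) (z : ℂ) :
    Integrable fun w => moll δ (z - w) * q w := by
  refine hq.bdd_mul (c := (δ ^ 2)⁻¹) ?_ (Eventually.of_forall fun w => ?_)
  · exact ((continuous_moll hδ).comp (by fun_prop)).aestronglyMeasurable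
  · rw [Real.norm_of_nonneg (moll_nonneg _ _)]
    exact moll_le hδ _

lemma integrable_reg_prod {δ : ℝ} (hδ : 0 < δ) {q : ℂ → ℝ} (hq : Integrable q) :
    Integrable (fun x : ℂ × ℂ => moll δ (x.1 - x.2) * q x.2) (volume.prod volume) := by
  simpa only [mul_comm] using integrable_conv' hq (integrable_moll hδ) (moll_neg δ)

lemma integrable_reg {δ : ℝ} (hδ : 0 < δ) {q : ℂ → ℝ} (hq : Integrable q) :
    Integrable (reg δ q) := (integrable_reg_prod hδ hq).integral_prod_left

/-- Mollifying twice. -/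
lemma vel_reg {δ : ℝ} (hδ : 0 < δ) {q : ℂ → ℝ} (hq : Integrable q) (w : ℂ) :
    vel δ (reg δ q) w = ∫ z, (moll δ (w - z) : ℂ) * vel δ q z := by
  have hk : Continuous (kap δ) := (contDiff_kap hδ (n := 1)).continuous
  have i1 : Integrable (fun x : ℂ × ℂ =>
      kap δ (w - x.1) * ((moll δ (x.1 - x.2) * q x.2 : ℝ) : ℂ)) (volume.prod volume) :=
    (integrable_reg_prod hδ hq).ofReal.bdd_mul (c := 1 / (2 * δ))
      (hk.comp (by fun_prop)).aestronglyMeasurable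
      (Eventually.of_forall fun x => norm_kap_le hδ _)
  have i2 : Integrable (fun x : ℂ × ℂ =>
      kap δ (x.1 - x.2) * ((moll δ (w - x.1) * q x.2 : ℝ) : ℂ)) (volume.prod volume) :=
    (((integrable_moll_sub hδ w).mul_prod hq).ofReal).bdd_mul (c := 1 / (2 * δ))
      (hk.comp (by fun_prop)).aestronglyMeasurable
      (Eventually.of_forall fun x => norm_kap_le hδ _)
  calc vel δ (reg δ q) w
      = ∫ z, ∫ y, kap δ (w - z) * ((moll δ (z - y) * q y : ℝ) : ℂ) := by
        simp only [vel, reg, ← integral_complex_ofReal, integral_const_mul]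
    _ = ∫ y, ∫ z, kap δ (w - z) * ((moll δ (z - y) * q y : ℝ) : ℂ) := integral_integral_swap i1
    _ = ∫ y, ∫ z, kap δ (z - y) * ((moll δ (w - z) * q y : ℝ) : ℂ) := by
        congr 1; ext y
        rw [← integral_sub_left_eq_self
          (fun z => kap δ (z - y) * ((moll δ (w - z) * q y : ℝ) : ℂ)) volume (w + y)]
        congr 1; ext z
        rw [show w + y - z - y = w - z by ring, show w - (w + y - z) = z - y by ring]
    _ = ∫ z, ∫ y, kap δ (z - y) * ((moll δ (w - z) * q y : ℝ) : ℂ) :=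
        (integral_integral_swap i2).symm
    _ = _ := by
        simp only [vel, ← integral_const_mul]
        congr 1; ext z
        congr 1; ext y
        push_cast; ring

/-- The rate of change of the regularised velocity under transport of a momentum density `m`. -/
def acc (δ : ℝ) (m : ℂ → ℂ) (z : ℂ) : ℂ := -∫ w, fderiv ℝ (kap δ) (z - w) (m w)

lemma continuous_fderiv_kap_apply {δ : ℝ} (hδ : 0 < δ) :
    Continuous fun p : ℂ × ℂ => fderiv ℝ (kap δ) p.1 p.2 :=
  ((continuous_fderiv_kap hδ).comp continuous_fst).clm_apply continuous_snd

/-- The energy production is the work done by the doubly regularised velocity. -/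
lemma re_integral_conj_vel_mul_acc {δ : ℝ} (hδ : 0 < δ) (hδ1 : δ ≤ 1) {q : ℂ → ℝ}
    (hq : Integrable q) (hqw : Integrable fun w => jap w ^ 2 * |q w|) {C₁ : ℝ}
    (hV : ∀ z, ‖vel δ q z‖ ≤ C₁ / jap z ^ 2) {m : ℂ → ℂ} (hmm : Measurable m)
    (hm : Integrable m) :
    (∫ z, conj (vel δ q z) * acc δ m z).re =
      -2 * ∫ w, (m w * vel δ (reg δ q) w).re := by
  have hk : Continuous (kap δ) := (contDiff_kap hδ (n := 1)).continuous
  have hVc : Continuous (vel δ q) := (contDiff_vel hδ hq).continuous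
  have hV2 : Integrable fun z => ‖vel δ q z‖ ^ 2 := by
    refine (integrable_jap_inv_four.const_mul (C₁ ^ 2)).mono'
      (hVc.norm.pow 2).aestronglyMeasurable (Eventually.of_forall fun z => ?_)
    rw [norm_pow, norm_norm]
    refine (pow_le_pow_left₀ (norm_nonneg _) (hV z) 2).trans (le_of_eq ?_)
    rw [div_pow, ← pow_mul, div_eq_mul_inv]
  have i1 : Integrable (fun x : ℂ × ℂ => conj (vel δ q x.1) *
      fderiv ℝ (kap δ) (x.1 - x.2) (m x.2)) (volume.prod volume) := by
    refine ((hV2.mul_prod hm.norm).add ((integrable_reg_prod hδ hm.norm).const_mul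
      (δ ^ 2)⁻¹)).mono' ?_ (Eventually.of_forall fun x => ?_)
    · refine ((Complex.continuous_conj.measurable.comp (hVc.measurable.comp measurable_fst)).mul
        ((continuous_fderiv_kap_apply hδ).measurable.comp
          ((measurable_fst.sub measurable_snd).prodMk
            (hmm.comp measurable_snd)))).aestronglyMeasurable
    · rw [norm_mul, RCLike.norm_conj]
      have hN := norm_sq_add_pos hδ (x.1 - x.2)
      have h1 := norm_fderiv_kap_le hδ (x.1 - x.2) (m x.2)
      have h2 : (δ ^ 2)⁻¹ * (moll δ (x.1 - x.2) * ‖m x.2‖) =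
          ‖m x.2‖ * ((‖x.1 - x.2‖ ^ 2 + δ ^ 2)⁻¹) ^ 2 := by
        unfold moll
        field_simp
      simp only [Pi.add_apply]
      rw [h2]
      calc _ ≤ ‖vel δ q x.1‖ * (‖m x.2‖ / (‖x.1 - x.2‖ ^ 2 + δ ^ 2)) := by gcongr
        _ = ‖m x.2‖ * (‖vel δ q x.1‖ * (‖x.1 - x.2‖ ^ 2 + δ ^ 2)⁻¹) := by
          rw [div_eq_mul_inv]; ring
        _ ≤ ‖m x.2‖ * (‖vel δ q x.1‖ ^ 2 + ((‖x.1 - x.2‖ ^ 2 + δ ^ 2)⁻¹) ^ 2) := by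
          gcongr
          nlinarith [sq_nonneg (‖vel δ q x.1‖ - (‖x.1 - x.2‖ ^ 2 + δ ^ 2)⁻¹),
            sq_nonneg ‖vel δ q x.1‖, sq_nonneg (‖x.1 - x.2‖ ^ 2 + δ ^ 2)⁻¹]
        _ = _ := by ring
  have e1 : ∫ z, conj (vel δ q z) * acc δ m z =
      -∫ w, ∫ z, conj (vel δ q z) * fderiv ℝ (kap δ) (z - w) (m w) := by
    rw [← integral_integral_swap i1, ← integral_neg]
    congr 1; ext z
    rw [integral_const_mul, acc, mul_neg]
  have hreg := integrable_reg hδ hq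
  rw [e1, Complex.neg_re, ← RCLike.re_eq_complex_re, ← integral_re i1.integral_prod_right,
    ← integral_neg, ← integral_const_mul]
  congr 1; ext w
  rw [RCLike.re_eq_complex_re, re_integral_conj_vel_mul hδ hδ1 hq hqw hV w (m w), vel]
  have i3 : Integrable fun z => m w * (kap δ (w - z) * (reg δ q z : ℂ)) :=
    (integrable_kap_mul hδ hreg w).const_mul _
  rw [← integral_const_mul (m w), ← RCLike.re_eq_complex_re, ← integral_re i3]
  have : ∀ z, RCLike.re (m w * (kap δ (w - z) * (reg δ q z : ℂ))) =
      -(reg δ q z * (m w * kap δ (z - w)).re) := by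
    intro z
    rw [RCLike.re_eq_complex_re, ← neg_sub z w, kap_neg,
      show m w * (-kap δ (z - w) * (reg δ q z : ℂ)) =
        -(((reg δ q z : ℝ) : ℂ) * (m w * kap δ (z - w))) by ring,
      Complex.neg_re, Complex.re_ofReal_mul]
  simp only [this, integral_neg, RCLike.re_eq_complex_re]
  ring

end

section

lemma sq_integral_mul_le {p v : ℂ → ℝ} (hp : ∀ z, 0 ≤ p z) (i0 : Integrable p)
    (i1 : Integrable fun z => p z * v z) (i2 : Integrable fun z => p z * v z ^ 2) :
    (∫ z, p z * v z) ^ 2 ≤ (∫ z, p z) * ∫ z, p z * v z ^ 2 := by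
  have h : ∀ t : ℝ, 0 ≤ (∫ z, p z) * (t * t) + (-2 * ∫ z, p z * v z) * t +
      ∫ z, p z * v z ^ 2 := by
    intro t
    have e : (∫ z, p z) * (t * t) + (-2 * ∫ z, p z * v z) * t + ∫ z, p z * v z ^ 2 =
        ∫ z, p z * (v z - t) ^ 2 := by
      rw [← integral_mul_const, mul_assoc, ← integral_mul_const, ← integral_const_mul,
        ← integral_add (i0.mul_const _) ((i1.mul_const _).const_mul _),
        ← integral_add (f := fun z => p z * (t * t) + -2 * (p z * v z * t))
          ((i0.mul_const _).add ((i1.mul_const _).const_mul _)) i2]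
      congr 1; ext z; ring
    rw [e]
    exact integral_nonneg fun z => mul_nonneg (hp z) (sq_nonneg _)
  have := discrim_le_zero h
  unfold discrim at this
  nlinarith

/-- Mollification (without normalisation). -/
def mol (δ : ℝ) (A : ℂ → ℂ) (w : ℂ) : ℂ := ∫ z, (moll δ (w - z) : ℂ) * A z

/-- A mollifier can be moved across a product at the cost of the `L¹` modulus of continuity of the
remaining factor. -/
lemma norm_integral_mol_sub_le {δ : ℝ} (hδ : 0 < δ) {F A B : ℂ → ℂ} (hFm : Measurable F)
    (hF : Integrable F) (hA : Measurable A) (hB : Measurable B) {a b : ℝ} (ha : ∀ z, ‖A z‖ ≤ a)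
    (hb : ∀ z, ‖B z‖ ≤ b) :
    ‖(∫ w, F w * (A w * mol δ B w)) - ∫ w, F w * (B w * mol δ A w)‖ ≤ a * b * avgModulus F δ := by
  have ha0 := (norm_nonneg _).trans (ha 0)
  have hc : Measurable fun x : ℂ × ℂ => (moll δ (x.1 - x.2) : ℂ) :=
    Complex.measurable_ofReal.comp
      ((continuous_moll hδ).measurable.comp (measurable_fst.sub measurable_snd))
  have hA1 : Measurable fun x : ℂ × ℂ => A x.1 := hA.comp measurable_fst
  have hB2 : Measurable fun x : ℂ × ℂ => B x.2 := hB.comp measurable_snd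
  have hF1 : Measurable fun x : ℂ × ℂ => F x.1 := hFm.comp measurable_fst
  have hF2 : Measurable fun x : ℂ × ℂ => F x.2 := hFm.comp measurable_snd
  have hbd : ∀ (c : ℂ) (x : ℂ × ℂ), ‖c * (A x.1 * ((moll δ (x.1 - x.2) : ℂ) * B x.2))‖ ≤
      a * b * (‖c‖ * moll δ (x.1 - x.2)) := by
    intro c x
    rw [norm_mul, norm_mul, norm_mul, Complex.norm_real, Real.norm_of_nonneg (moll_nonneg _ _)]
    have := moll_nonneg δ (x.1 - x.2)
    calc _ ≤ ‖c‖ * (a * (moll δ (x.1 - x.2) * b)) := by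
          gcongr
          · exact ha _
          · exact hb _
      _ = _ := by ring
  have i1 : Integrable (fun x : ℂ × ℂ =>
      F x.1 * (A x.1 * ((moll δ (x.1 - x.2) : ℂ) * B x.2))) (volume.prod volume) :=
    ((integrable_conv hF.norm (integrable_moll hδ)).const_mul (a * b)).mono'
      (hF1.mul (hA1.mul (hc.mul hB2))).aestronglyMeasurable
      (Eventually.of_forall fun x => hbd _ x)
  have i2 : Integrable (fun x : ℂ × ℂ =>
      F x.2 * (A x.1 * ((moll δ (x.1 - x.2) : ℂ) * B x.2))) (volume.prod volume) :=
    ((integrable_conv' hF.norm (integrable_moll hδ) (moll_neg δ)).const_mul (a * b)).mono'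
      (hF2.mul (hA1.mul (hc.mul hB2))).aestronglyMeasurable
      (Eventually.of_forall fun x => hbd _ x)
  have e1 : ∫ w, F w * (A w * mol δ B w) = ∫ x : ℂ × ℂ,
      F x.1 * (A x.1 * ((moll δ (x.1 - x.2) : ℂ) * B x.2)) ∂(volume.prod volume) := by
    rw [integral_prod _ i1]
    simp only [integral_const_mul, mol]
  have e2 : ∫ w, F w * (B w * mol δ A w) = ∫ x : ℂ × ℂ,
      F x.2 * (A x.1 * ((moll δ (x.1 - x.2) : ℂ) * B x.2)) ∂(volume.prod volume) := by
    rw [integral_prod_symm _ i2]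
    simp only [integral_const_mul, mol]
    congr 1; ext w
    rw [← integral_const_mul]
    congr 2; ext z
    rw [← moll_neg, neg_sub]
    ring
  rw [e1, e2, ← integral_sub i1 i2, ← integral_modulus_prod hFm hF hδ, ← integral_const_mul]
  refine norm_integral_le_of_norm_le ((integrable_modulus_prod hFm hF hδ).const_mul _)
    (Eventually.of_forall fun x => ?_)
  rw [← sub_mul]
  exact hbd _ x

lemma modulus_comp_sub_right (f : ℂ → ℂ) (y : ℂ) : modulus (fun z => f (z - y)) = modulus f := by
  ext ζ
  unfold modulus
  rw [← integral_sub_right_eq_self (fun x => ‖f (x - ζ) - f x‖) y]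
  congr 1; ext x
  rw [sub_right_comm]

lemma modulus_comp_sub_left (f : ℂ → ℂ) (y : ℂ) : modulus (fun z => f (y - z)) = modulus f := by
  ext ζ
  unfold modulus
  rw [← integral_sub_left_eq_self (fun x => ‖f (x - ζ) - f x‖) volume (y + ζ)]
  congr 1; ext x
  rw [← norm_sub_rev, show y + ζ - x - ζ = y - x by ring, show y + ζ - x = y - (x - ζ) by ring]

/-- The convolution `f ∗ q`. -/
def conv (f : ℂ → ℂ) (q : ℂ → ℝ) (x : ℂ) : ℂ := ∫ y, f (x - y) * (q y : ℂ)

lemma integrable_conv_mul {f : ℂ → ℂ} {q : ℂ → ℝ} (hf : Integrable f)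
    {M : ℝ} (hq : IsBdd M q) (x : ℂ) : Integrable fun y => f (x - y) * (q y : ℂ) := by
  refine (hf.comp_sub_left x).mul_bdd (c := M) ?_ (Eventually.of_forall fun y => ?_)
  · exact (Complex.measurable_ofReal.comp hq.measurable).aestronglyMeasurable
  · rw [Complex.norm_real]; exact hq.bound y

lemma measurable_conv {f : ℂ → ℂ} {q : ℂ → ℝ} (hf : Measurable f) (hq : Measurable q) :
    Measurable (conv f q) := by
  have h : StronglyMeasurable (Function.uncurry fun x y : ℂ => f (x - y) * (q y : ℂ)) := by
    apply Measurable.stronglyMeasurable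
    exact (hf.comp (measurable_fst.sub measurable_snd)).mul
      (Complex.measurable_ofReal.comp (hq.comp measurable_snd))
  exact h.integral_prod_right.measurable

lemma norm_conv_le {f : ℂ → ℂ} {q : ℂ → ℝ} (hf : Integrable f) {M : ℝ} (hq : IsBdd M q) (x : ℂ) :
    ‖conv f q x‖ ≤ M * ∫ z, ‖f z‖ := by
  rw [← integral_sub_left_eq_self (fun z => ‖f z‖) volume x, ← integral_const_mul]
  refine norm_integral_le_of_norm_le ((hf.comp_sub_left x).norm.const_mul _)
    (Eventually.of_forall fun y => ?_)
  rw [norm_mul, Complex.norm_real, mul_comm]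
  gcongr
  exact hq.bound y

lemma conv_sub {f : ℂ → ℂ} {q q' : ℂ → ℝ} (hf : Integrable f) {M M' : ℝ}
    (hq : IsBdd M q) (hq' : IsBdd M' q') (x : ℂ) :
    conv f (fun z => q z - q' z) x = conv f q x - conv f q' x := by
  unfold conv
  rw [← integral_sub (integrable_conv_mul hf hq x) (integrable_conv_mul hf hq' x)]
  congr 1; ext y; push_cast; ring

end

section

lemma mol_ofReal (δ : ℝ) (q : ℂ → ℝ) (w : ℂ) : mol δ (fun z => (q z : ℂ)) w = (reg δ q w : ℂ) := by
  unfold mol reg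
  rw [← integral_complex_ofReal]
  push_cast
  rfl

lemma mol_one {δ : ℝ} (hδ : 0 < δ) (w : ℂ) : mol δ (fun _ => 1) w = (mass : ℂ) := by
  simp only [mol, mul_one]
  rw [integral_complex_ofReal, integral_moll_sub hδ]

lemma measurable_mol {δ : ℝ} (hδ : 0 < δ) {A : ℂ → ℂ} (hA : Measurable A) :
    Measurable (mol δ A) := by
  have h : StronglyMeasurable (Function.uncurry fun w z : ℂ => (moll δ (w - z) : ℂ) * A z) := by
    apply Measurable.stronglyMeasurable
    exact (Complex.measurable_ofReal.comp
      ((continuous_moll hδ).measurable.comp (measurable_fst.sub measurable_snd))).mul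
      (hA.comp measurable_snd)
  exact h.integral_prod_right.measurable

lemma norm_mol_le_integral {δ : ℝ} {A : ℂ → ℂ} (w : ℂ) :
    ‖mol δ A w‖ ≤ ∫ z, moll δ (w - z) * ‖A z‖ := by
  refine (norm_integral_le_integral_norm _).trans (le_of_eq ?_)
  congr 1; ext z
  rw [norm_mul, Complex.norm_real, Real.norm_of_nonneg (moll_nonneg _ _)]

lemma norm_mol_le {δ : ℝ} (hδ : 0 < δ) {A : ℂ → ℂ} {b : ℝ} (hb : ∀ z, ‖A z‖ ≤ b) (w : ℂ) :
    ‖mol δ A w‖ ≤ mass * b := by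
  rw [← integral_moll_sub hδ w, ← integral_mul_const]
  refine norm_integral_le_of_norm_le ((integrable_moll_sub hδ w).mul_const b)
    (Eventually.of_forall fun z => ?_)
  rw [norm_mul, Complex.norm_real, Real.norm_of_nonneg (moll_nonneg _ _)]
  have := moll_nonneg δ (w - z)
  gcongr
  exact hb z

/-- The work of the velocity against a bounded weak Cauchy-Riemann kernel is controlled by the
energy. -/
lemma norm_integral_kernel_mul_vel_le {f g : ℂ → ℂ} {C : ℝ} (hK : IsCutKernel f g C) {δ : ℝ}
    (hδ : 0 < δ) {q : ℂ → ℝ} {a b : ℝ} (hq : IsBdd a q) (hb : ∀ z, ‖vel δ q z‖ ≤ b)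
    (hE : Integrable fun z => ‖vel δ q z‖ ^ 2) (y : ℂ) :
    ‖∫ w, f (w - y) * ((q w : ℂ) * mol δ (vel δ q) w)‖ ≤
      a * b * avgModulus f δ + C / 4 * ∫ z, ‖vel δ q z‖ ^ 2 := by
  have hVc := contDiff_vel hδ hq.integrable
  have h := norm_integral_mol_sub_le hδ (F := fun w => f (w - y)) (A := fun w => (q w : ℂ))
    (B := vel δ q) (hK.measurable.comp (measurable_id.sub_const y))
    (hK.integrable.comp_sub_right y) (Complex.measurable_ofReal.comp hq.measurable)
    hVc.continuous.measurable (fun z => by rw [Complex.norm_real]; exact hq.bound z) hb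
  simp only [mol_ofReal] at h
  have ha : avgModulus (fun w => f (w - y)) δ = avgModulus f δ := by
    unfold avgModulus; rw [modulus_comp_sub_right]
  rw [ha] at h
  set φ : ℂ → ℂ := fun ζ => vel δ q (ζ + y) ^ 2 with hφ
  have hφd : ContDiff ℝ 1 φ := (hVc.comp (contDiff_id.add contDiff_const)).pow 2
  have hcr : ∀ ζ, cr I φ ζ = 4 * (vel δ q (ζ + y) * (reg δ q (ζ + y) : ℂ)) := by
    intro ζ
    have h1 : HasFDerivAt (fun ζ => vel δ q (ζ + y)) (fderiv ℝ (vel δ q) (ζ + y)) ζ :=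
      ((hVc.differentiable one_ne_zero _).hasFDerivAt).comp ζ ((hasFDerivAt_id ζ).add_const y)
    have h2 := cr_vel hδ hq.integrable (ζ + y)
    simp only [cr] at h2
    simp only [hφ, cr, (h1.pow 2).fderiv, FunLike.coe_smul, Pi.smul_apply, smul_eq_mul]
    norm_num
    linear_combination 2 * vel δ q (ζ + y) * h2
  have hw := hK.weak φ hφd
  have e1 : ∫ w, f (w - y) * (vel δ q w * (reg δ q w : ℂ)) = -(1 / 4) * ∫ ζ, g ζ * φ ζ := by
    rw [← integral_add_right_eq_self _ y]
    simp only [add_sub_cancel_right]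
    have : ∀ ζ, f ζ * cr I φ ζ = 4 * (f ζ * (vel δ q (ζ + y) * (reg δ q (ζ + y) : ℂ))) := by
      intro ζ; rw [hcr]; ring
    simp only [this, integral_const_mul] at hw
    linear_combination hw / 4
  have h2 : ‖∫ ζ, g ζ * φ ζ‖ ≤ C * ∫ z, ‖vel δ q z‖ ^ 2 := by
    rw [← integral_add_right_eq_self (fun z => ‖vel δ q z‖ ^ 2) y, ← integral_const_mul]
    refine norm_integral_le_of_norm_le ((hE.comp_add_right y).const_mul C)
      (Eventually.of_forall fun ζ => ?_)
    rw [norm_mul, norm_pow]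
    gcongr
    exact hK.bound ζ
  rw [e1] at h
  calc _ ≤ _ := norm_le_norm_sub_add _ (-(1 / 4) * ∫ ζ, g ζ * φ ζ)
    _ ≤ a * b * avgModulus f δ + 1 / 4 * (C * ∫ z, ‖vel δ q z‖ ^ 2) := by
      gcongr
      rw [norm_mul]
      gcongr
      norm_num
    _ = _ := by ring

/-- The velocity difference is controlled by the regularised velocity. -/
lemma norm_conv_le_vel {f g : ℂ → ℂ} {C : ℝ} (hK : IsCutKernel f g C) {δ : ℝ}
    (hδ : 0 < δ) {q : ℂ → ℝ} {a : ℝ} (hq : IsBdd a q) (x : ℂ) :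
    mass * ‖conv f q x‖ ≤ a * avgModulus f δ + 1 / 2 * ∫ z, ‖g (x - z)‖ * ‖vel δ q z‖ := by
  have hVc := contDiff_vel hδ hq.integrable
  have h := norm_integral_mol_sub_le hδ (F := fun w => f (x - w)) (A := fun w => (q w : ℂ))
    (B := fun _ => 1) (hK.measurable.comp (measurable_id.const_sub x))
    (hK.integrable.comp_sub_left x) (Complex.measurable_ofReal.comp hq.measurable)
    measurable_const (fun z => by rw [Complex.norm_real]; exact hq.bound z)
    (b := 1) (fun z => by simp)
  have ha : avgModulus (fun w => f (x - w)) δ = avgModulus f δ := by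
    unfold avgModulus; rw [modulus_comp_sub_left]
  simp only [mol_ofReal, mol_one hδ, one_mul, mul_one, ha, ← mul_assoc] at h
  rw [integral_mul_const] at h
  set φ : ℂ → ℂ := fun ζ => vel δ q (x - ζ) with hφ
  have hφd : ContDiff ℝ 1 φ := hVc.comp (contDiff_const.sub contDiff_id)
  have hcr : ∀ ζ, cr I φ ζ = -2 * (reg δ q (x - ζ) : ℂ) := by
    intro ζ
    have h1 := ((hVc.differentiable one_ne_zero (x - ζ)).hasFDerivAt).comp ζ
      ((hasFDerivAt_id ζ).const_sub x)
    have h2 := cr_vel hδ hq.integrable (x - ζ)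
    simp only [cr] at h2
    have h3 : fderiv ℝ φ ζ = _ := h1.fderiv
    simp only [cr, h3, ContinuousLinearMap.comp_apply, FunLike.coe_neg, Pi.neg_apply,
      ContinuousLinearMap.id_apply, map_neg]
    linear_combination -h2
  have hw := hK.weak φ hφd
  have e1 : ∫ w, f (x - w) * (reg δ q w : ℂ) = 1 / 2 * ∫ ζ, g ζ * φ ζ := by
    rw [← integral_sub_left_eq_self _ volume x]
    simp only [sub_sub_cancel]
    have : ∀ ζ, f ζ * cr I φ ζ = -2 * (f ζ * (reg δ q (x - ζ) : ℂ)) := by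
      intro ζ; rw [hcr]; ring
    simp only [this, integral_const_mul] at hw
    linear_combination -hw / 2
  have h2 : ‖∫ ζ, g ζ * φ ζ‖ ≤ ∫ z, ‖g (x - z)‖ * ‖vel δ q z‖ := by
    rw [← integral_sub_left_eq_self (fun z => ‖g (x - z)‖ * ‖vel δ q z‖) volume x]
    simp only [sub_sub_cancel]
    refine (norm_integral_le_integral_norm _).trans (le_of_eq ?_)
    simp only [norm_mul, hφ]
  rw [e1] at h
  have h3 : mass * ‖conv f q x‖ = ‖(∫ y, f (x - y) * (q y : ℂ)) * (mass : ℂ)‖ := by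
    rw [norm_mul, Complex.norm_real, Real.norm_of_nonneg mass_pos.le, mul_comm]
    rfl
  rw [h3]
  calc _ ≤ _ := norm_le_norm_sub_add _ (1 / 2 * ∫ ζ, g ζ * φ ζ)
    _ ≤ _ := by
      gcongr
      rw [norm_mul]
      gcongr
      norm_num

end

section

lemma integral_reg {δ : ℝ} (hδ : 0 < δ) {q : ℂ → ℝ} (hq : Integrable q) :
    ∫ z, reg δ q z = mass * ∫ w, q w := by
  unfold reg
  rw [integral_integral_swap (integrable_reg_prod hδ hq), ← integral_const_mul]
  congr 1; ext w
  rw [integral_mul_const, integral_sub_right_eq_self (moll δ) w, integral_moll hδ]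

lemma vel_reg' {δ : ℝ} (hδ : 0 < δ) {q : ℂ → ℝ} (hq : Integrable q) :
    vel δ (reg δ q) = mol δ (vel δ q) := funext fun w => vel_reg hδ hq w

lemma sq_norm_mol_le {δ : ℝ} (hδ : 0 < δ) {V : ℂ → ℂ} (hV : Measurable V) {b : ℝ}
    (hb : ∀ z, ‖V z‖ ≤ b) (hE : Integrable fun z => ‖V z‖ ^ 2) (x : ℂ) :
    ‖mol δ V x‖ ^ 2 ≤ mass * reg δ (fun z => ‖V z‖ ^ 2) x := by
  have i1 : Integrable fun z => moll δ (x - z) * ‖V z‖ :=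
    (integrable_moll_sub hδ x).mul_bdd (c := b) hV.norm.aestronglyMeasurable
      (Eventually.of_forall fun z => by rw [norm_norm]; exact hb z)
  have h := sq_integral_mul_le (fun z => moll_nonneg δ (x - z)) (integrable_moll_sub hδ x) i1
    (integrable_moll_mul hδ hE x)
  rw [integral_moll_sub hδ] at h
  exact (pow_le_pow_left₀ (norm_nonneg _) (norm_mol_le_integral x) 2).trans h

lemma sq_integral_norm_mul_le {g : ℂ → ℂ} (hgm : Measurable g) (hg : Integrable g) {C : ℝ}
    (hC : ∀ z, ‖g z‖ ≤ C) {V : ℂ → ℂ} (hV : Measurable V) {b : ℝ}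
    (hb : ∀ z, ‖V z‖ ≤ b) (hE : Integrable fun z => ‖V z‖ ^ 2) (x : ℂ) :
    (∫ z, ‖g (x - z)‖ * ‖V z‖) ^ 2 ≤ (∫ z, ‖g z‖) * (C * ∫ z, ‖V z‖ ^ 2) := by
  have i0 : Integrable fun z => ‖g (x - z)‖ := (hg.comp_sub_left x).norm
  have hgx : Measurable fun z => ‖g (x - z)‖ := (hgm.comp (measurable_id.const_sub x)).norm
  have i1 : Integrable fun z => ‖g (x - z)‖ * ‖V z‖ :=
    i0.mul_bdd (c := b) hV.norm.aestronglyMeasurable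
      (Eventually.of_forall fun z => by rw [norm_norm]; exact hb z)
  have i2 : Integrable fun z => ‖g (x - z)‖ * ‖V z‖ ^ 2 :=
    hE.bdd_mul (c := C) hgx.aestronglyMeasurable
      (Eventually.of_forall fun z => by rw [norm_norm]; exact hC _)
  refine (sq_integral_mul_le (fun z => norm_nonneg _) i0 i1 i2).trans ?_
  rw [integral_sub_left_eq_self (fun z => ‖g z‖) volume x]
  refine mul_le_mul_of_nonneg_left ?_ (integral_nonneg fun z => norm_nonneg _)
  rw [← integral_const_mul]
  exact integral_mono i2 (hE.const_mul C) fun z => by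
    simp only
    gcongr
    exact hC _

/-- The momentum density `q u` with `u = f ∗ q + γ f`. -/
def flux (γ : ℝ) (f : ℂ → ℂ) (q : ℂ → ℝ) (z : ℂ) : ℂ := (q z : ℂ) * (conv f q z + γ * f z)

lemma measurable_flux (γ : ℝ) {f : ℂ → ℂ} {q : ℂ → ℝ} (hf : Measurable f) (hq : Measurable q) :
    Measurable (flux γ f q) :=
  (Complex.measurable_ofReal.comp hq).mul ((measurable_conv hf hq).add (hf.const_mul _))

lemma norm_flux_le (γ : ℝ) {f : ℂ → ℂ} {q : ℂ → ℝ} (hf : Integrable f) {M : ℝ} (hq : IsBdd M q)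
    (z : ℂ) : ‖flux γ f q z‖ ≤ M * (∫ z, ‖f z‖) * |q z| + M * |γ| * ‖f z‖ := by
  unfold flux
  have h1 := norm_conv_le hf hq z
  have h2 := hq.bound z
  rw [norm_mul, Complex.norm_real, Real.norm_eq_abs]
  calc _ ≤ |q z| * (M * (∫ z, ‖f z‖) + |γ| * ‖f z‖) := by
        gcongr
        refine (norm_add_le _ _).trans (add_le_add h1 ?_)
        rw [norm_mul, Complex.norm_real, Real.norm_eq_abs]
    _ = M * (∫ z, ‖f z‖) * |q z| + |q z| * (|γ| * ‖f z‖) := by ring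
    _ ≤ M * (∫ z, ‖f z‖) * |q z| + M * (|γ| * ‖f z‖) := by gcongr
    _ = _ := by ring

lemma integrable_flux (γ : ℝ) {f : ℂ → ℂ} {q : ℂ → ℝ} (hfm : Measurable f) (hf : Integrable f)
    {M : ℝ} (hq : IsBdd M q) : Integrable (flux γ f q) :=
  ((hq.integrable.abs.const_mul _).add (hf.norm.const_mul _)).mono'
    (measurable_flux γ hfm hq.measurable).aestronglyMeasurable
    (Eventually.of_forall fun z => norm_flux_le γ hf hq z)

lemma integral_norm_flux_le (γ : ℝ) {f : ℂ → ℂ} {q : ℂ → ℝ} (hfm : Measurable f)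
    (hf : Integrable f) {M : ℝ} (hq : IsBdd M q) :
    ∫ z, ‖flux γ f q z‖ ≤ (M ^ 2 + M * |γ|) * ∫ z, ‖f z‖ := by
  have h0 : 0 ≤ ∫ z, ‖f z‖ := integral_nonneg fun z => norm_nonneg _
  have hM := hq.nonneg
  calc _ ≤ ∫ z, (M * (∫ z, ‖f z‖) * |q z| + M * |γ| * ‖f z‖) :=
        integral_mono (integrable_flux γ hfm hf hq).norm
          ((hq.integrable.abs.const_mul _).add (hf.norm.const_mul _))
          fun z => norm_flux_le γ hf hq z
    _ = M * (∫ z, ‖f z‖) * (∫ z, |q z|) + M * |γ| * ∫ z, ‖f z‖ := by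
        rw [integral_add (hq.integrable.abs.const_mul _) (hf.norm.const_mul _),
          integral_const_mul, integral_const_mul]
    _ ≤ M * (∫ z, ‖f z‖) * M + M * |γ| * ∫ z, ‖f z‖ := by gcongr; exact hq.integral_le
    _ = _ := by ring

lemma norm_integral_conv_mul_le {f : ℂ → ℂ} (hf : Integrable f)
    {M : ℝ} {q : ℂ → ℝ} (hq : IsBdd M q) {G : ℂ → ℂ} (hG : Measurable G) {c : ℝ}
    (hc : ∀ z, ‖G z‖ ≤ c) {B : ℝ} (hB : ∀ y, ‖∫ w, f (w - y) * G w‖ ≤ B) :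
    ‖∫ w, conv f q w * G w‖ ≤ M * B := by
  have i0 : Integrable (fun x : ℂ × ℂ => f (x.1 - x.2) * (q x.2 : ℂ)) (volume.prod volume) := by
    have := (hq.integrable.ofReal (𝕜 := ℂ)).convolution_integrand
      (ContinuousLinearMap.mul ℝ ℂ) hf
    refine this.congr (Eventually.of_forall fun x => ?_)
    simp [mul_comm]
  have i1 : Integrable (fun x : ℂ × ℂ => f (x.1 - x.2) * (q x.2 : ℂ) * G x.1)
      (volume.prod volume) :=
    i0.mul_bdd (c := c) (hG.comp measurable_fst).aestronglyMeasurable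
      (Eventually.of_forall fun x => hc _)
  have hB0 : 0 ≤ B := (norm_nonneg _).trans (hB 0)
  calc _ = ‖∫ w, ∫ y, f (w - y) * (q y : ℂ) * G w‖ := by simp only [integral_mul_const, conv]
    _ = ‖∫ y, ∫ w, f (w - y) * (q y : ℂ) * G w‖ := by rw [integral_integral_swap i1]
    _ = ‖∫ y, (q y : ℂ) * ∫ w, f (w - y) * G w‖ := by
        congr 2; ext y
        rw [← integral_const_mul]
        congr 1; ext w; ring
    _ ≤ ∫ y, |q y| * B := by
        refine norm_integral_le_of_norm_le (hq.integrable.abs.mul_const B)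
          (Eventually.of_forall fun y => ?_)
        rw [norm_mul, Complex.norm_real, Real.norm_eq_abs]
        gcongr
        exact hB y
    _ ≤ _ := by
        rw [integral_mul_const]
        gcongr
        exact hq.integral_le

/-- The work done on the difference of two momentum densities. -/
lemma exists_norm_integral_flux_le {f g : ℂ → ℂ} {C : ℝ} (hK : IsCutKernel f g C) (M γ : ℝ) :
    ∃ C₀ : ℝ, 0 ≤ C₀ ∧ ∀ δ : ℝ, 0 < δ → ∀ q q' : ℂ → ℝ, IsBdd M q → IsBdd M q' →
      (Integrable fun z => ‖vel δ (fun z => q z - q' z) z‖ ^ 2) →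
      ‖∫ w, (flux γ f q w - flux γ f q' w) * vel δ (reg δ fun z => q z - q' z) w‖ ≤
        C₀ * ((∫ z, ‖vel δ (fun z => q z - q' z) z‖ ^ 2) + avgModulus f δ) := by
  obtain ⟨CV, hCV, hvel⟩ := exists_norm_vel_le
  by_cases hM : 0 ≤ M
  swap
  · exact ⟨0, le_rfl, fun δ _ q q' hq => absurd hq.nonneg hM⟩
  have hC : 0 ≤ C := (norm_nonneg _).trans (hK.bound 0)
  set G₁ := ∫ z, ‖g z‖ with hG₁
  have hG₁0 : 0 ≤ G₁ := integral_nonneg fun z => norm_nonneg _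
  have hm := mass_pos
  set a := M + M with ha
  have ha0 : 0 ≤ a := by positivity
  set b := CV * a with hb
  have hb0 : 0 ≤ b := by positivity
  refine ⟨(M + |γ|) * (a * b + C / 4) + M * a * b +
    mass⁻¹ * (M / 4 * (G₁ * C) + M / 4 * mass ^ 2), by positivity, ?_⟩
  intro δ hδ q q' hq hq' hE
  set qb : ℂ → ℝ := fun z => q z - q' z with hqb
  have hqbd : IsBdd a qb := hq.sub hq'
  set V := vel δ qb with hV
  have hVb : ∀ z, ‖V z‖ ≤ b := hvel δ hδ a qb hqbd
  have hVm : Measurable V := (contDiff_vel hδ hqbd.integrable).continuous.measurable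
  set E := ∫ z, ‖V z‖ ^ 2 with hEdef
  have hE0 : 0 ≤ E := integral_nonneg fun z => by positivity
  set η := avgModulus f δ with hη
  have hη0 : 0 ≤ η := avgModulus_nonneg f δ
  rw [vel_reg' hδ hqbd.integrable]
  set W := mol δ V with hW
  have hWm : Measurable W := measurable_mol hδ hVm
  have hWb : ∀ z, ‖W z‖ ≤ mass * b := norm_mol_le hδ hVb
  have hWi : Integrable (fun z => (q' z : ℂ) * W z) :=
    hq'.integrable.ofReal.mul_bdd (c := mass * b) hWm.aestronglyMeasurable
      (Eventually.of_forall hWb)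
  set G : ℂ → ℂ := fun w => (qb w : ℂ) * W w with hG
  have hGm : Measurable G := (Complex.measurable_ofReal.comp hqbd.measurable).mul hWm
  have hGb : ∀ z, ‖G z‖ ≤ a * (mass * b) := by
    intro z
    rw [norm_mul, Complex.norm_real]
    exact mul_le_mul (hqbd.bound z) (hWb z) (norm_nonneg _) ha0
  set B := a * b * η + C / 4 * E with hB
  have hTB : ∀ y, ‖∫ w, f (w - y) * G w‖ ≤ B :=
    norm_integral_kernel_mul_vel_le hK hδ hqbd hVb hE
  have t1 := norm_integral_conv_mul_le hK.integrable hq hGm hGb hTB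
  have t1' := hTB 0
  simp only [sub_zero] at t1'
  have hcb := norm_conv_le hK.integrable hqbd
  have hcm := measurable_conv hK.measurable hqbd.measurable
  have t2 : ‖∫ w, conv f qb w * ((q' w : ℂ) * W w)‖ ≤
      M * a * b * η + mass⁻¹ * (M / 4 * (G₁ * C) + M / 4 * mass ^ 2) * E := by
    set P : ℂ → ℝ := fun w => |q' w| * (a * b * η + mass⁻¹ * (1 / 4 * (G₁ * (C * E)))) +
      mass⁻¹ * (M / 4) * (mass * reg δ (fun z => ‖V z‖ ^ 2) w) with hP
    have hri := integrable_reg hδ hE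
    have hle : ∀ w, ‖conv f qb w * ((q' w : ℂ) * W w)‖ ≤ P w := by
      intro w
      have h1 := norm_conv_le_vel hK hδ hqbd w
      have h2 := sq_integral_norm_mul_le hK.measurable' hK.integrable' hK.bound hVm hVb hE w
      have h3 := sq_norm_mol_le hδ hVm hVb hE w
      have h4 := hq'.bound w
      have h5 := hWb w
      set S := ∫ z, ‖g (w - z)‖ * ‖vel δ qb z‖ with hS
      rw [norm_mul, norm_mul, Complex.norm_real, Real.norm_eq_abs]
      have h6 : ‖conv f qb w‖ ≤ mass⁻¹ * (a * η + 1 / 2 * S) := by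
        rw [inv_mul_eq_div, le_div_iff₀ hm, mul_comm]
        exact h1
      have hr0 : 0 ≤ mass * reg δ (fun z => ‖V z‖ ^ 2) w := (sq_nonneg _).trans h3
      have h7 : S * ‖W w‖ ≤ 1 / 2 * (G₁ * (C * E)) +
          1 / 2 * (mass * reg δ (fun z => ‖V z‖ ^ 2) w) := by
        nlinarith [sq_nonneg (S - ‖W w‖)]
      calc _ ≤ mass⁻¹ * (a * η + 1 / 2 * S) * (|q' w| * ‖W w‖) := by gcongr
        _ = |q' w| * (mass⁻¹ * (a * η * ‖W w‖) + mass⁻¹ * (1 / 2 * (S * ‖W w‖))) := by ring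
        _ ≤ |q' w| * (mass⁻¹ * (a * η * (mass * b)) + mass⁻¹ * (1 / 2 * (1 / 2 * (G₁ * (C * E)) +
          1 / 2 * (mass * reg δ (fun z => ‖V z‖ ^ 2) w)))) := by gcongr
        _ = |q' w| * (a * b * η + mass⁻¹ * (1 / 4 * (G₁ * (C * E)))) +
            mass⁻¹ * (|q' w| / 4) * (mass * reg δ (fun z => ‖V z‖ ^ 2) w) := by
          field_simp
          ring
        _ ≤ _ := by
          simp only [hP]
          gcongr
    refine (norm_integral_le_of_norm_le ((hq'.integrable.abs.mul_const _).add
      ((hri.const_mul _).const_mul _)) (Eventually.of_forall hle)).trans ?_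
    rw [integral_add' (hq'.integrable.abs.mul_const _) ((hri.const_mul _).const_mul _),
      integral_mul_const, integral_const_mul, integral_const_mul, integral_reg hδ hE]
    have h8 := hq'.integral_le
    calc _ ≤ M * (a * b * η + mass⁻¹ * (1 / 4 * (G₁ * (C * E)))) +
          mass⁻¹ * (M / 4) * (mass * (mass * E)) := by gcongr
      _ = _ := by ring
  have i1 : Integrable fun w => conv f q w * G w := by
    have hG1 : Integrable G :=
      hqbd.integrable.ofReal.mul_bdd (c := mass * b) hWm.aestronglyMeasurable
        (Eventually.of_forall hWb)
    exact hG1.bdd_mul (measurable_conv hK.measurable hq.measurable).aestronglyMeasurable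
      (Eventually.of_forall (norm_conv_le hK.integrable hq))
  have i2 : Integrable fun w => f w * G w :=
    hK.integrable.mul_bdd hGm.aestronglyMeasurable (Eventually.of_forall hGb)
  have i3 : Integrable fun w => conv f qb w * ((q' w : ℂ) * W w) :=
    hWi.bdd_mul hcm.aestronglyMeasurable (Eventually.of_forall hcb)
  have e : ∀ w, (flux γ f q w - flux γ f q' w) * W w =
      conv f q w * G w + γ * (f w * G w) + conv f qb w * ((q' w : ℂ) * W w) := by
    intro w
    rw [hqb, conv_sub hK.integrable hq hq']
    simp only [flux, hG, hqb]
    push_cast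
    ring
  simp only [e]
  rw [integral_add (f := fun w => conv f q w * G w + γ * (f w * G w))
      (i1.add (i2.const_mul _)) i3, integral_add i1 (i2.const_mul _),
    integral_const_mul]
  have hB' : B ≤ (a * b + C / 4) * (E + η) := by
    rw [hB]
    have h1 : 0 ≤ a * b * E := by positivity
    have h2 : 0 ≤ C / 4 * η := by positivity
    linarith
  calc _ ≤ ‖∫ w, conv f q w * G w‖ + ‖(γ : ℂ) * ∫ w, f w * G w‖ +
        ‖∫ w, conv f qb w * ((q' w : ℂ) * W w)‖ := norm_add₃_le
    _ ≤ M * ((a * b + C / 4) * (E + η)) + |γ| * ((a * b + C / 4) * (E + η)) +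
        (M * a * b * η + mass⁻¹ * (M / 4 * (G₁ * C) + M / 4 * mass ^ 2) * E) := by
      rw [norm_mul, Complex.norm_real, Real.norm_eq_abs]
      gcongr
      · exact t1.trans (by gcongr)
      · exact t1'.trans hB'
    _ ≤ M * ((a * b + C / 4) * (E + η)) + |γ| * ((a * b + C / 4) * (E + η)) +
        (M * a * b * (E + η) + mass⁻¹ * (M / 4 * (G₁ * C) + M / 4 * mass ^ 2) * (E + η)) := by
      gcongr <;> linarith
    _ = _ := by ring

end

section

/-- Integration by parts for two primitives. -/
lemma integral_primitive_mul_add {𝕜 : Type*} [RCLike 𝕜] {t : ℝ} {p r : ℝ → 𝕜}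
    (hp : IntegrableOn p (Ioc 0 t)) (hr : IntegrableOn r (Ioc 0 t)) :
    (∫ s in Ioc 0 t, p s * ∫ u in Ioc 0 s, r u) + ∫ s in Ioc 0 t, (∫ u in Ioc 0 s, p u) * r s =
      (∫ s in Ioc 0 t, p s) * ∫ s in Ioc 0 t, r s := by
  set μ := (volume : Measure ℝ).restrict (Ioc 0 t) with hμ
  have hF : Integrable (fun x : ℝ × ℝ => p x.1 * r x.2) (μ.prod μ) := hp.mul_prod hr
  set S : Set (ℝ × ℝ) := {x | x.2 ≤ x.1} with hS
  have hSm : MeasurableSet S := measurableSet_le measurable_snd measurable_fst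
  rw [← integral_prod_mul, ← integral_add_compl hSm hF]
  congr 1
  · rw [← integral_indicator hSm, integral_prod _ (hF.indicator hSm)]
    refine setIntegral_congr_fun measurableSet_Ioc fun x hx => ?_
    have : ∀ y, S.indicator (fun x : ℝ × ℝ => p x.1 * r x.2) (x, y) =
        p x * (Iic x).indicator r y := by
      intro y
      by_cases h : y ≤ x
      · rw [indicator_of_mem (show (x, y) ∈ S from h), indicator_of_mem (show y ∈ Iic x from h)]
      · rw [indicator_of_notMem (show (x, y) ∉ S from h),
          indicator_of_notMem (show y ∉ Iic x from h), mul_zero]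
    simp only [this]
    rw [integral_const_mul, integral_indicator measurableSet_Iic, hμ,
      Measure.restrict_restrict measurableSet_Iic]
    congr 3
    ext y
    simp only [mem_Ioc, mem_inter_iff, mem_Iic] at hx ⊢
    constructor
    · rintro ⟨h1, h2⟩; exact ⟨h2, h1, h2.trans hx.2⟩
    · rintro ⟨h1, h2, _⟩; exact ⟨h2, h1⟩
  · rw [← integral_indicator hSm.compl, integral_prod_symm _ (hF.indicator hSm.compl)]
    refine setIntegral_congr_fun measurableSet_Ioc fun y hy => ?_
    have : ∀ x, Sᶜ.indicator (fun x : ℝ × ℝ => p x.1 * r x.2) (x, y) =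
        (Iio y).indicator p x * r y := by
      intro x
      by_cases h : x < y
      · rw [indicator_of_mem (show (x, y) ∈ Sᶜ from not_le.2 h),
          indicator_of_mem (show x ∈ Iio y from h)]
      · rw [indicator_of_notMem (show (x, y) ∉ Sᶜ from fun h' => h (not_le.1 h')),
          indicator_of_notMem (show x ∉ Iio y from h), zero_mul]
    simp only [this]
    rw [integral_mul_const, integral_indicator measurableSet_Iio, hμ,
      Measure.restrict_restrict measurableSet_Iio]
    congr 1
    rw [integral_Ioc_eq_integral_Ioo]
    congr 2
    ext x
    simp only [mem_Ioc, mem_Ioo, mem_inter_iff, mem_Iio] at hy ⊢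
    constructor
    · rintro ⟨h1, h2⟩; exact ⟨h2, h1, h2.le.trans hy.2⟩
    · rintro ⟨h1, h2, _⟩; exact ⟨h2, h1⟩

lemma norm_sq_primitive {t : ℝ} {A : ℝ → ℂ} (hA : IntegrableOn A (Ioc 0 t)) :
    ‖∫ s in Ioc 0 t, A s‖ ^ 2 =
      2 * (∫ s in Ioc 0 t, conj (∫ u in Ioc 0 s, A u) * A s).re := by
  have hc : IntegrableOn (fun s => conj (A s)) (Ioc 0 t) := by
    have := Complex.conjCLE.toContinuousLinearMap.integrable_comp hA
    exact this
  have h := integral_primitive_mul_add hc hA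
  simp only [integral_conj] at h
  have e : ∫ s in Ioc 0 t, conj (A s) * ∫ u in Ioc 0 s, A u =
      conj (∫ s in Ioc 0 t, conj (∫ u in Ioc 0 s, A u) * A s) := by
    rw [← integral_conj]
    congr 1; ext s
    rw [map_mul, Complex.conj_conj, mul_comm]
  rw [e] at h
  have h2 := congrArg Complex.re h
  rw [Complex.add_re, Complex.conj_re, mul_comm, Complex.mul_conj, Complex.ofReal_re,
    Complex.normSq_eq_norm_sq] at h2
  linarith

/-- A function whose distributional derivative is `P` and which vanishes initially is the
primitive of `P`. -/
lemma ae_eq_primitive {T : ℝ} (hT : 0 < T) {Q P : ℝ → ℝ} (hQ : IntegrableOn Q (Ioc 0 T))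
    (hP : IntegrableOn P (Ioc 0 T))
    (h : ∀ a : ℝ → ℝ, ContDiff ℝ (⊤ : ℕ∞) a → HasCompactSupport a → (∀ t, T ≤ t → a t = 0) →
      ∫ t in Ioc 0 T, (deriv a t * Q t + a t * P t) = 0) :
    ∀ᵐ t, t ∈ Ioo 0 T → Q t = ∫ s in Ioc 0 t, P s := by
  set N : ℝ → ℝ := fun t => ∫ s in Ioc 0 t, P s with hN
  have hNc : ContinuousOn N (Icc 0 T) :=
    intervalIntegral.continuousOn_primitive ((integrableOn_Icc_iff_integrableOn_Ioc (by simp)).2 hP)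
  have hNi : IntegrableOn N (Ioc 0 T) := hNc.integrableOn_Icc.mono_set Ioc_subset_Icc_self
  have key : ∀ᵐ t, t ∈ Ioo 0 T → Q t - N t = 0 := by
    refine isOpen_Ioo.ae_eq_zero_of_integral_contDiff_smul_eq_zero
      ((hQ.sub hNi).mono_set Ioo_subset_Ioc_self).locallyIntegrableOn ?_
    intro ψ hψ hψc hψs
    have hψ0 : ∀ t, t ∉ Ioo 0 T → ψ t = 0 := fun t ht =>
      image_eq_zero_of_notMem_tsupport fun h' => ht (hψs h')
    have hcont := hψ.continuous
    let b : ContDiffBump (0 : ℝ) := ⟨T, T + 1, hT, by linarith⟩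
    set p : ℝ → ℝ := fun t => ∫ s in (0 : ℝ)..t, ψ s with hp
    have hpd : ∀ t, HasDerivAt p (ψ t) t := fun t =>
      intervalIntegral.integral_hasDerivAt_right (hcont.intervalIntegrable _ _)
        (hcont.stronglyMeasurableAtFilter _ _) hcont.continuousAt
    have hps : ContDiff ℝ (⊤ : ℕ∞) p := by
      rw [contDiff_infty_iff_deriv]
      refine ⟨fun t => (hpd t).differentiableAt, ?_⟩
      rw [show deriv p = ψ from funext fun t => (hpd t).deriv]
      exact hψ
    set a : ℝ → ℝ := fun t => b t * (p t - p T) with ha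
    have ha1 : ∀ t ∈ Ioo (-T) T, a t = p t - p T := by
      intro t ht
      simp only [ha]
      rw [b.one_of_mem_closedBall, one_mul]
      rw [mem_closedBall_zero_iff, Real.norm_eq_abs, abs_le]
      exact ⟨ht.1.le, ht.2.le⟩
    have hpT : ∀ t, T ≤ t → p t = p T := by
      intro t ht
      simp only [hp]
      rw [← intervalIntegral.integral_add_adjacent_intervals (b := T)
        (hcont.intervalIntegrable _ _) (hcont.intervalIntegrable _ _), add_eq_left]
      refine intervalIntegral.integral_zero_ae (Eventually.of_forall fun s hs => ?_)
      rw [uIoc_of_le ht] at hs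
      exact hψ0 s fun h' => not_lt.2 h'.2.le hs.1
    have had : ∀ t ∈ Ioo (-T) T, deriv a t = ψ t := by
      intro t ht
      have : a =ᶠ[𝓝 t] fun t => p t - p T := by
        filter_upwards [isOpen_Ioo.mem_nhds ht] with s hs using ha1 s hs
      rw [this.deriv_eq]
      exact ((hpd t).sub_const _).deriv
    have hh := h a (b.contDiff.mul (hps.sub contDiff_const)) b.hasCompactSupport.mul_right
      (fun t ht => by simp only [ha]; rw [hpT t ht, sub_self, mul_zero])
    have e1 : ∫ t in Ioc 0 T, (deriv a t * Q t + a t * P t) =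
        ∫ t in Ioc 0 T, (ψ t * Q t + (p t * P t - p T * P t)) := by
      rw [integral_Ioc_eq_integral_Ioo, integral_Ioc_eq_integral_Ioo]
      refine setIntegral_congr_fun measurableSet_Ioo fun t ht => ?_
      have ht' : t ∈ Ioo (-T) T := ⟨by linarith [ht.1], ht.2⟩
      simp only [ha1 t ht', had t ht', sub_mul]
    obtain ⟨Cψ, hCψ⟩ := hψc.exists_bound_of_continuous hcont
    have i1 : IntegrableOn (fun t => ψ t * Q t) (Ioc 0 T) :=
      hQ.bdd_mul hcont.aestronglyMeasurable (Eventually.of_forall hCψ)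
    have i2 : IntegrableOn (fun t => ψ t * N t) (Ioc 0 T) :=
      hNi.bdd_mul hcont.aestronglyMeasurable (Eventually.of_forall hCψ)
    have hψi : IntegrableOn ψ (Ioc 0 T) := (hcont.integrable_of_hasCompactSupport hψc).integrableOn
    have hpi : IntegrableOn (fun t => p t * P t) (Ioc 0 T) := by
      have hpc : ContinuousOn p (Icc 0 T) := hps.continuous.continuousOn
      have := ((integrableOn_Icc_iff_integrableOn_Ioc (by simp)).2 hP).continuousOn_mul hpc isCompact_Icc
      exact this.mono_set Ioc_subset_Icc_self
    have hIBP := integral_primitive_mul_add hψi hP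
    have e2 : ∫ s in Ioc 0 T, (∫ u in Ioc 0 s, ψ u) * P s = ∫ s in Ioc 0 T, p s * P s := by
      refine setIntegral_congr_fun measurableSet_Ioc fun s hs => ?_
      simp only [hp, intervalIntegral.integral_of_le hs.1.le]
    have e3 : ∫ s in Ioc 0 T, ψ s = p T := by
      simp only [hp, intervalIntegral.integral_of_le hT.le]
    rw [e2, e3] at hIBP
    rw [e1, integral_add (g := fun t => p t * P t - p T * P t) i1 (hpi.sub (hP.const_mul _)),
      integral_sub (g := fun t => p T * P t) hpi (hP.const_mul _), integral_const_mul] at hh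
    have e4 : ∫ t, ψ t • (Q t - N t) = ∫ t in Ioc 0 T, (ψ t * Q t - ψ t * N t) := by
      rw [← setIntegral_eq_integral_of_forall_compl_eq_zero (s := Ioc 0 T)]
      · simp only [smul_eq_mul, mul_sub]
      · intro t ht
        rw [hψ0 t fun h' => ht (Ioo_subset_Ioc_self h'), zero_smul]
    rw [e4, integral_sub i1 i2]
    linarith
  filter_upwards [key] with t ht h1
  exact sub_eq_zero.1 (ht h1)

end

section

/-- Grönwall's inequality in integral form. -/
lemma le_exp_of_le_integral {T C η : ℝ} (hC : 0 < C) (hη : 0 ≤ η) {E : ℝ → ℝ}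
    (hE : ContinuousOn E (Icc 0 T)) (h0 : ∀ t ∈ Icc 0 T, 0 ≤ E t)
    (h : ∀ t ∈ Icc 0 T, E t ≤ C * ∫ s in Ioc 0 t, (E s + η)) :
    ∀ t ∈ Icc 0 T, E t ≤ η * Real.exp (C * T) := by
  intro t ht
  have hT : 0 ≤ T := ht.1.trans ht.2
  set G : ℝ → ℝ := IccExtend hT ((Icc 0 T).domRestrict E) with hG
  have hGc : Continuous G := (continuousOn_iff_continuous_domRestrict.1 hE).Icc_extend'
  have hGE : ∀ s ∈ Icc 0 T, G s = E s := fun s hs => IccExtend_of_mem hT _ hs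
  set y : ℝ → ℝ := fun t => ∫ s in (0 : ℝ)..t, (G s + η) with hy
  have hyd : ∀ s, HasDerivAt y (G s + η) s := fun s =>
    intervalIntegral.integral_hasDerivAt_right ((hGc.add continuous_const).intervalIntegrable _ _)
      ((hGc.add continuous_const).stronglyMeasurableAtFilter _ _)
      (hGc.add continuous_const).continuousAt
  have hyE : ∀ s ∈ Icc 0 T, y s = ∫ r in Ioc 0 s, (E r + η) := by
    intro s hs
    simp only [hy, intervalIntegral.integral_of_le hs.1]
    refine setIntegral_congr_fun measurableSet_Ioc fun r hr => ?_
    simp only [hGE r ⟨hr.1.le, hr.2.trans hs.2⟩]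
  have hy0 : ∀ s ∈ Icc 0 T, 0 ≤ y s := by
    intro s hs
    rw [hyE s hs]
    exact setIntegral_nonneg measurableSet_Ioc fun r hr =>
      add_nonneg (h0 r ⟨hr.1.le, hr.2.trans hs.2⟩) hη
  have hb := norm_le_gronwallBound_of_norm_deriv_right_le (f := y) (f' := fun s => G s + η)
    (δ := 0) (K := C) (ε := η) (a := 0) (b := T)
    (fun s _ => (hyd s).continuousAt.continuousWithinAt) (fun s _ => (hyd s).hasDerivWithinAt)
    (by simp [hy]) (fun s hs => by
      have hs' : s ∈ Icc 0 T := Ico_subset_Icc_self hs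
      rw [hGE s hs', Real.norm_of_nonneg (add_nonneg (h0 s hs') hη),
        Real.norm_of_nonneg (hy0 s hs'), hyE s hs']
      linarith [h s hs']) t ht
  rw [Real.norm_of_nonneg (hy0 t ht), gronwallBound_of_K_ne_0 hC.ne', sub_zero] at hb
  simp only [zero_mul, zero_add] at hb
  rw [hyE t ht] at hb
  calc E t ≤ C * ∫ s in Ioc 0 t, (E s + η) := h t ht
    _ ≤ C * (η / C * (Real.exp (C * t) - 1)) := by gcongr
    _ = η * (Real.exp (C * t) - 1) := by field_simp
    _ ≤ η * Real.exp (C * T) := by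
      gcongr
      have : Real.exp (C * t) ≤ Real.exp (C * T) := by
        gcongr
        exact ht.2
      linarith

/-- A bounded, compactly supported solution of `∂ₜ q + div m = 0` on `(0, T)` with zero initial
datum, tested against products of functions of time and of space. -/
structure IsTransport (T R M : ℝ) (q : ℝ → ℂ → ℝ) (m : ℝ → ℂ → ℂ) : Prop where
  measurable : Measurable fun p : ℝ × ℂ => q p.1 p.2
  measurable_flux : Measurable fun p : ℝ × ℂ => m p.1 p.2
  isBdd : ∀ t, IsBdd M (q t)
  support : ∀ t z, R < ‖z‖ → q t z = 0
  integrable_flux : ∀ t, Integrable (m t)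
  integral_flux_le : ∀ t, ∫ z, ‖m t z‖ ≤ M
  support_flux : ∀ t z, R < ‖z‖ → m t z = 0
  weak : ∀ (a : ℝ → ℝ) (b : ℂ → ℝ), ContDiff ℝ (⊤ : ℕ∞) a → HasCompactSupport a →
    ContDiff ℝ (⊤ : ℕ∞) b → HasCompactSupport b → (∀ t, T ≤ t → a t = 0) →
    ∫ t in Ioc 0 T, (deriv a t * (∫ z, q t z * b z) + a t * ∫ z, fderiv ℝ b z (m t z)) = 0

variable {T R M δ : ℝ} {q : ℝ → ℂ → ℝ} {m : ℝ → ℂ → ℂ}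

lemma jap_sq_le_of_norm_le {w : ℂ} (hw : ‖w‖ ≤ R) : jap w ^ 2 ≤ 1 + R ^ 2 := by
  rw [jap_sq]
  gcongr

lemma norm_fderiv_kap_flux_le (h : IsTransport T R M q m) (hδ : 0 < δ) (hδ1 : δ ≤ 1) (t : ℝ)
    (z w : ℂ) :
    ‖fderiv ℝ (kap δ) (z - w) (m t w)‖ ≤ 2 * (1 + R ^ 2) / δ ^ 2 / jap z ^ 2 * ‖m t w‖ := by
  rcases le_or_gt ‖w‖ R with hw | hw
  · refine (norm_fderiv_kap_decay hδ hδ1 z w _).trans ?_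
    gcongr
    exact jap_sq_le_of_norm_le hw
  · simp [h.support_flux t w hw]

lemma integrable_fderiv_kap_flux (h : IsTransport T R M q m) (hδ : 0 < δ) (hδ1 : δ ≤ 1) (t : ℝ)
    (z : ℂ) : Integrable fun w => fderiv ℝ (kap δ) (z - w) (m t w) := by
  refine ((h.integrable_flux t).norm.const_mul (2 * (1 + R ^ 2) / δ ^ 2 / jap z ^ 2)).mono' ?_
    (Eventually.of_forall fun w => norm_fderiv_kap_flux_le h hδ hδ1 t z w)
  have hm : Measurable (m t) := h.measurable_flux.comp measurable_prodMk_left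
  exact ((continuous_fderiv_kap_apply hδ).measurable.comp
    ((measurable_const.sub measurable_id).prodMk hm)).aestronglyMeasurable

lemma norm_acc_le (h : IsTransport T R M q m) (hδ : 0 < δ) (hδ1 : δ ≤ 1) (t : ℝ) (z : ℂ) :
    ‖acc δ (m t) z‖ ≤ 2 * (1 + R ^ 2) / δ ^ 2 * M / jap z ^ 2 := by
  rw [acc, norm_neg]
  refine (norm_integral_le_of_norm_le ((h.integrable_flux t).norm.const_mul _)
    (Eventually.of_forall fun w => norm_fderiv_kap_flux_le h hδ hδ1 t z w)).trans ?_
  rw [integral_const_mul, div_mul_eq_mul_div]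
  gcongr
  exact h.integral_flux_le t

lemma stronglyMeasurable_acc (h : IsTransport T R M q m) (hδ : 0 < δ) :
    StronglyMeasurable fun p : ℝ × ℂ => acc δ (m p.1) p.2 := by
  have hm : Measurable fun p : (ℝ × ℂ) × ℂ => fderiv ℝ (kap δ) (p.1.2 - p.2) (m p.1.1 p.2) :=
    (continuous_fderiv_kap_apply hδ).measurable.comp
      ((measurable_fst.snd.sub measurable_snd).prodMk
        (h.measurable_flux.comp (measurable_fst.fst.prodMk measurable_snd)))
  exact hm.stronglyMeasurable.integral_prod_right.neg

lemma stronglyMeasurable_vel (h : IsTransport T R M q m) (hδ : 0 < δ) :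
    StronglyMeasurable fun p : ℝ × ℂ => vel δ (q p.1) p.2 := by
  have hk : Measurable (kap δ) := (contDiff_kap hδ (n := 1)).continuous.measurable
  have hm : Measurable fun p : (ℝ × ℂ) × ℂ => kap δ (p.1.2 - p.2) * (q p.1.1 p.2 : ℂ) :=
    (hk.comp (measurable_fst.snd.sub measurable_snd)).mul
      (Complex.measurable_ofReal.comp
        (h.measurable.comp (measurable_fst.fst.prodMk measurable_snd)))
  exact hm.stronglyMeasurable.integral_prod_right

lemma integrableOn_acc (h : IsTransport T R M q m) (hδ : 0 < δ) (hδ1 : δ ≤ 1) (z : ℂ) (t : ℝ) :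
    IntegrableOn (fun s => acc δ (m s) z) (Ioc 0 t) := by
  refine IntegrableOn.of_bound (by simp) ?_ (2 * (1 + R ^ 2) / δ ^ 2 * M / jap z ^ 2)
    (Eventually.of_forall fun s => norm_acc_le h hδ hδ1 s z)
  exact ((stronglyMeasurable_acc h hδ).comp_measurable
    (measurable_id.prodMk measurable_const)).aestronglyMeasurable

lemma vel_ae_eq_primitive_aux (h : IsTransport T R M q m) (hT : 0 < T) (hδ : 0 < δ) (hδ1 : δ ≤ 1)
    (z : ℂ) (L : ℂ →L[ℝ] ℝ) :
    ∀ᵐ t, t ∈ Ioo 0 T → L (vel δ (q t) z) = L (∫ s in Ioc 0 t, acc δ (m s) z) := by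
  have hk : ContDiff ℝ (⊤ : ℕ∞) (kap δ) := contDiff_kap hδ
  have hsub : ContDiff ℝ (⊤ : ℕ∞) fun w : ℂ => z - w := by fun_prop
  let χ : ContDiffBump (0 : ℂ) := ⟨|R| + 1, |R| + 2, by positivity, by linarith⟩
  set b : ℂ → ℝ := fun w => χ w * L (kap δ (z - w)) with hb
  have hbs : ContDiff ℝ (⊤ : ℕ∞) b := χ.contDiff.mul (L.contDiff.comp (hk.comp hsub))
  have hbc : HasCompactSupport b := χ.hasCompactSupport.mul_right
  have hb1 : ∀ w ∈ Metric.ball (0 : ℂ) (|R| + 1), b w = L (kap δ (z - w)) := fun w hw => by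
    simp only [hb, χ.one_of_mem_closedBall (Metric.ball_subset_closedBall hw), one_mul]
  have hR : ∀ w : ℂ, ‖w‖ ≤ R → w ∈ Metric.ball (0 : ℂ) (|R| + 1) := fun w hw => by
    rw [mem_ball_zero_iff]
    linarith [le_abs_self R]
  have hb2 : ∀ w : ℂ, ‖w‖ ≤ R → ∀ v, fderiv ℝ b w v = -L (fderiv ℝ (kap δ) (z - w) v) := by
    intro w hw v
    have he : b =ᶠ[𝓝 w] fun w => L (kap δ (z - w)) := by
      filter_upwards [Metric.isOpen_ball.mem_nhds (hR w hw)] with y hy using hb1 y hy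
    have hd : HasFDerivAt (kap δ) (fderiv ℝ (kap δ) (z - w)) (z - w) :=
      (hk.differentiable (by simp)).differentiableAt.hasFDerivAt
    have hs : HasFDerivAt (fun w : ℂ => z - w) (-ContinuousLinearMap.id ℝ ℂ) w :=
      (hasFDerivAt_id w).const_sub z
    have := L.hasFDerivAt.comp w (hd.comp w hs)
    rw [he.fderiv_eq]
    erw [this.fderiv]
    simp
  have hQ : ∀ t, ∫ w, q t w * b w = L (vel δ (q t) z) := by
    intro t
    rw [vel, ← L.integral_comp_comm (integrable_kap_mul hδ (h.isBdd t).integrable z)]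
    refine integral_congr_ae (Eventually.of_forall fun w => ?_)
    simp only
    rcases le_or_gt ‖w‖ R with hw | hw
    · rw [hb1 w (hR w hw), mul_comm (kap δ (z - w)), ← Complex.real_smul, map_smul, smul_eq_mul]
    · simp [h.support t w hw]
  have hP : ∀ t, ∫ w, fderiv ℝ b w (m t w) = L (acc δ (m t) z) := by
    intro t
    rw [acc, map_neg, ← L.integral_comp_comm (integrable_fderiv_kap_flux h hδ hδ1 t z),
      ← integral_neg]
    refine integral_congr_ae (Eventually.of_forall fun w => ?_)
    simp only
    rcases le_or_gt ‖w‖ R with hw | hw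
    · rw [hb2 w hw]
    · simp [h.support_flux t w hw]
  have hQi : IntegrableOn (fun t => L (vel δ (q t) z)) (Ioc 0 T) := by
    refine L.integrable_comp (IntegrableOn.of_bound (by simp) ?_ (1 / (2 * δ) * M)
      (Eventually.of_forall fun s => ?_))
    · exact ((stronglyMeasurable_vel h hδ).comp_measurable
        (measurable_id.prodMk measurable_const)).aestronglyMeasurable
    · rw [vel]
      refine (norm_integral_le_of_norm_le ((h.isBdd s).integrable.abs.const_mul (1 / (2 * δ)))
        (Eventually.of_forall fun w => ?_)).trans ?_
      · rw [norm_mul, Complex.norm_real, Real.norm_eq_abs]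
        gcongr
        exact norm_kap_le hδ _
      · rw [integral_const_mul]
        gcongr
        exact (h.isBdd s).integral_le
  have hPi : IntegrableOn (fun t => L (acc δ (m t) z)) (Ioc 0 T) :=
    L.integrable_comp (integrableOn_acc h hδ hδ1 z T)
  have key := ae_eq_primitive hT hQi hPi fun a ha hac ha0 => by
    have := h.weak a b ha hac hbs hbc ha0
    simpa only [hQ, hP] using this
  filter_upwards [key] with t ht htT
  rw [ht htT, ← L.integral_comp_comm (integrableOn_acc h hδ hδ1 z t)]

/-- For fixed `z`, the regularised velocity is the time primitive of its forcing. -/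
lemma vel_ae_eq_primitive (h : IsTransport T R M q m) (hT : 0 < T) (hδ : 0 < δ) (hδ1 : δ ≤ 1)
    (z : ℂ) : ∀ᵐ t, t ∈ Ioo 0 T → vel δ (q t) z = ∫ s in Ioc 0 t, acc δ (m s) z := by
  filter_upwards [vel_ae_eq_primitive_aux h hT hδ hδ1 z Complex.reCLM,
    vel_ae_eq_primitive_aux h hT hδ hδ1 z Complex.imCLM] with t h1 h2 ht
  exact Complex.ext (h1 ht) (h2 ht)

end

section

/-- The time primitive of the forcing of the regularised velocity. -/
def prim (δ : ℝ) (m : ℝ → ℂ → ℂ) (t : ℝ) (z : ℂ) : ℂ := ∫ s in Ioc 0 t, acc δ (m s) z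

variable {T R M δ : ℝ} {q : ℝ → ℂ → ℝ} {m : ℝ → ℂ → ℂ}

lemma IsTransport.nonneg (h : IsTransport T R M q m) : 0 ≤ M := (h.isBdd 0).nonneg

lemma stronglyMeasurable_prim (h : IsTransport T R M q m) (hδ : 0 < δ) :
    StronglyMeasurable fun p : ℝ × ℂ => prim δ m p.1 p.2 := by
  have hS : MeasurableSet {p : (ℝ × ℂ) × ℝ | 0 < p.2 ∧ p.2 ≤ p.1.1} :=
    (measurableSet_lt measurable_const measurable_snd).inter
      (measurableSet_le measurable_snd measurable_fst.fst)
  have hA : StronglyMeasurable fun p : (ℝ × ℂ) × ℝ => acc δ (m p.2) p.1.2 :=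
    (stronglyMeasurable_acc h hδ).comp_measurable (measurable_snd.prodMk measurable_fst.snd)
  have := (hA.indicator hS).integral_prod_right' (ν := volume)
  refine (congrArg StronglyMeasurable (funext fun p => ?_)).mp this
  rw [prim, ← integral_indicator measurableSet_Ioc]
  rfl

lemma norm_prim_le (h : IsTransport T R M q m) (hT : 0 ≤ T) (hδ : 0 < δ) (hδ1 : δ ≤ 1) {t : ℝ}
    (ht : t ≤ T) (z : ℂ) :
    ‖prim δ m t z‖ ≤ T * (2 * (1 + R ^ 2) / δ ^ 2 * M) / jap z ^ 2 := by
  have hM := h.nonneg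
  have hj := jap_pos z
  rw [prim]
  refine (norm_setIntegral_le_of_norm_le_const (by simp)
    fun s _ => norm_acc_le h hδ hδ1 s z).trans ?_
  rw [mul_comm, mul_div_assoc T]
  refine mul_le_mul_of_nonneg_right (α := ℝ) ?_ (by positivity)
  rw [measureReal_def, Real.volume_Ioc, sub_zero, ENNReal.toReal_ofReal']
  exact max_le ht hT

lemma vel_ae_eq_prim (h : IsTransport T R M q m) (hT : 0 < T) (hδ : 0 < δ) (hδ1 : δ ≤ 1) :
    ∀ᵐ t, t ∈ Ioo 0 T → vel δ (q t) =ᵐ[volume] prim δ m t := by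
  have hm : MeasurableSet {p : ℂ × ℝ | p.2 ∈ Ioo 0 T → vel δ (q p.2) p.1 = prim δ m p.2 p.1} := by
    have h1 : MeasurableSet {p : ℂ × ℝ | p.2 ∈ Ioo 0 T} := measurable_snd measurableSet_Ioo
    have h2 : MeasurableSet {p : ℂ × ℝ | vel δ (q p.2) p.1 = prim δ m p.2 p.1} :=
      measurableSet_eq_fun
        ((stronglyMeasurable_vel h hδ).comp_measurable measurable_swap).measurable
        ((stronglyMeasurable_prim h hδ).comp_measurable measurable_swap).measurable
    exact h1.imp h2
  have := (Measure.ae_ae_comm (μ := (volume : Measure ℂ)) (ν := (volume : Measure ℝ)) hm).1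
    (Eventually.of_forall fun z => vel_ae_eq_primitive h hT hδ hδ1 z)
  filter_upwards [this] with t ht htT
  filter_upwards [ht] with z hz using hz htT

lemma norm_vel_le_of_ae_eq (h : IsTransport T R M q m) (hT : 0 ≤ T) (hδ : 0 < δ) (hδ1 : δ ≤ 1)
    {t : ℝ} (ht : t ≤ T) (he : vel δ (q t) =ᵐ[volume] prim δ m t) (z : ℂ) :
    ‖vel δ (q t) z‖ ≤ T * (2 * (1 + R ^ 2) / δ ^ 2 * M) / jap z ^ 2 := by
  set B := T * (2 * (1 + R ^ 2) / δ ^ 2 * M) with hB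
  have hc : Continuous (vel δ (q t)) := (contDiff_vel hδ (h.isBdd t).integrable).continuous
  have hj : Continuous fun z => B / jap z ^ 2 :=
    continuous_const.div (continuous_jap.pow 2) fun z => (pow_pos (jap_pos z) 2).ne'
  have := (Continuous.ae_eq_iff_eq volume (hc.norm.max hj) hj).1 (by
    filter_upwards [he] with w hw
    rw [hw]
    exact max_eq_right (norm_prim_le h hT hδ hδ1 ht w))
  have hz := congrFun this z
  exact max_eq_right_iff.1 hz

lemma integrable_sq_prim (h : IsTransport T R M q m) (hT : 0 ≤ T) (hδ : 0 < δ) (hδ1 : δ ≤ 1)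
    {t : ℝ} (ht : t ≤ T) : Integrable fun z => ‖prim δ m t z‖ ^ 2 := by
  set B := T * (2 * (1 + R ^ 2) / δ ^ 2 * M) with hB
  refine (integrable_jap_inv_four.const_mul (B ^ 2)).mono' ?_ (Eventually.of_forall fun z => ?_)
  · exact ((stronglyMeasurable_prim h hδ).comp_measurable
      measurable_prodMk_left).norm.pow 2 |>.aestronglyMeasurable
  · rw [Real.norm_of_nonneg (by positivity)]
    calc ‖prim δ m t z‖ ^ 2 ≤ (B / jap z ^ 2) ^ 2 := by
          gcongr
          exact norm_prim_le h hT hδ hδ1 ht z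
      _ = B ^ 2 * (jap z ^ 4)⁻¹ := by
          have := jap_pos z
          field_simp

lemma integrable_prim_mul_acc (h : IsTransport T R M q m) (hT : 0 ≤ T) (hδ : 0 < δ)
    (hδ1 : δ ≤ 1) {t : ℝ} (ht : t ≤ T) :
    Integrable (fun p : ℝ × ℂ => conj (prim δ m p.1 p.2) * acc δ (m p.1) p.2)
      (((volume : Measure ℝ).restrict (Ioc 0 t)).prod volume) := by
  have hM := h.nonneg
  set B := T * (2 * (1 + R ^ 2) / δ ^ 2 * M) with hB
  set B' := 2 * (1 + R ^ 2) / δ ^ 2 * M with hB'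
  have hi : Integrable (fun p : ℝ × ℂ => B * B' * (jap p.2 ^ 4)⁻¹)
      (((volume : Measure ℝ).restrict (Ioc 0 t)).prod volume) := by
    have h1 : Integrable (fun _ : ℝ => B * B') ((volume : Measure ℝ).restrict (Ioc 0 t)) :=
      integrable_const _
    exact h1.mul_prod integrable_jap_inv_four
  refine hi.mono' ?_ ?_
  · have h1 := (stronglyMeasurable_prim h hδ).measurable
    have h2 := (stronglyMeasurable_acc h hδ).measurable
    exact ((Complex.continuous_conj.measurable.comp h1).mul h2).aestronglyMeasurable
  · have h0 : ∀ᵐ s ∂((volume : Measure ℝ).restrict (Ioc 0 t)), s ∈ Ioc 0 t :=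
      ae_restrict_mem measurableSet_Ioc
    filter_upwards [Measure.quasiMeasurePreserving_fst.ae h0] with p hp
    have hj := jap_pos p.2
    rw [norm_mul, RCLike.norm_conj]
    calc ‖prim δ m p.1 p.2‖ * ‖acc δ (m p.1) p.2‖ ≤ B / jap p.2 ^ 2 * (B' / jap p.2 ^ 2) :=
          mul_le_mul (norm_prim_le h hT hδ hδ1 (hp.2.trans ht) _) (norm_acc_le h hδ hδ1 _ _)
            (norm_nonneg _) (by positivity)
      _ = B * B' * (jap p.2 ^ 4)⁻¹ := by field_simp

/-- The energy identity. -/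
lemma integral_sq_prim (h : IsTransport T R M q m) (hT : 0 ≤ T) (hδ : 0 < δ) (hδ1 : δ ≤ 1)
    {t : ℝ} (ht : t ≤ T) :
    ∫ z, ‖prim δ m t z‖ ^ 2 =
      ∫ s in Ioc 0 t, 2 * (∫ z, conj (prim δ m s z) * acc δ (m s) z).re := by
  have hi := integrable_prim_mul_acc h hT hδ hδ1 ht
  have h1 : ∀ z, ‖prim δ m t z‖ ^ 2 =
      2 * (∫ s in Ioc 0 t, conj (prim δ m s z) * acc δ (m s) z).re := fun z =>
    norm_sq_primitive (integrableOn_acc h hδ hδ1 z t)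
  simp only [h1]
  rw [integral_const_mul, integral_const_mul]
  congr 1
  have e1 := integral_re (𝕜 := ℂ) hi.integral_prod_right
  have e2 := integral_re (𝕜 := ℂ) hi.integral_prod_left
  simp only [RCLike.re_eq_complex_re] at e1 e2
  rw [e1, e2]
  congr 1
  exact (integral_integral_swap hi).symm

lemma continuousOn_integral_sq_prim (h : IsTransport T R M q m) (hT : 0 ≤ T) (hδ : 0 < δ)
    (hδ1 : δ ≤ 1) : ContinuousOn (fun t => ∫ z, ‖prim δ m t z‖ ^ 2) (Icc 0 T) := by
  have hi := integrable_prim_mul_acc h hT hδ hδ1 le_rfl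
  have hg : IntegrableOn (fun s => 2 * (∫ z, conj (prim δ m s z) * acc δ (m s) z).re)
      (Ioc 0 T) := by
    have := hi.integral_prod_left.re
    exact this.const_mul 2
  refine (intervalIntegral.continuousOn_primitive
    ((integrableOn_Icc_iff_integrableOn_Ioc enorm_ne_top).2 hg)).congr fun t ht => ?_
  exact integral_sq_prim h hT hδ hδ1 ht.2

lemma integrable_jap_sq_mul (h : IsTransport T R M q m) (t : ℝ) :
    Integrable fun w => jap w ^ 2 * |q t w| := by
  refine ((h.isBdd t).integrable.abs.const_mul (1 + R ^ 2)).mono' ?_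
    (Eventually.of_forall fun w => ?_)
  · exact ((continuous_jap.pow 2).measurable.mul
      (h.isBdd t).measurable.abs).aestronglyMeasurable
  · rw [Real.norm_of_nonneg (by positivity)]
    rcases le_or_gt ‖w‖ R with hw | hw
    · gcongr
      exact jap_sq_le_of_norm_le hw
    · simp [h.support t w hw]

/-- The energy of the regularised velocity is controlled by the defect `ω` of the flux bound. -/
lemma integral_sq_vel_le (h : IsTransport T R M q m) (hT : 0 < T) (hδ : 0 < δ) (hδ1 : δ ≤ 1)
    {C η : ℝ} (hC : 0 ≤ C) (hη : 0 ≤ η)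
    (hflux : ∀ t, Integrable (fun z => ‖vel δ (q t) z‖ ^ 2) →
      ‖∫ w, m t w * vel δ (reg δ (q t)) w‖ ≤ C * ((∫ z, ‖vel δ (q t) z‖ ^ 2) + η)) :
    ∀ᵐ t, t ∈ Ioo 0 T → Integrable (fun z => ‖vel δ (q t) z‖ ^ 2) ∧
      ∫ z, ‖vel δ (q t) z‖ ^ 2 ≤ η * Real.exp (4 * (C + 1) * T) := by
  have hae := vel_ae_eq_prim h hT hδ hδ1
  obtain ⟨C₁, hC₁, hvel⟩ := exists_norm_vel_le
  have hsq : ∀ t, vel δ (q t) =ᵐ[volume] prim δ m t →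
      (fun z => ‖vel δ (q t) z‖ ^ 2) =ᵐ[volume] fun z => ‖prim δ m t z‖ ^ 2 := fun t ht => by
    filter_upwards [ht] with z hz
    rw [hz]
  have hprod : ∀ t, t ≤ T → vel δ (q t) =ᵐ[volume] prim δ m t →
      2 * (∫ z, conj (prim δ m t z) * acc δ (m t) z).re ≤
        4 * (C + 1) * ((∫ z, ‖prim δ m t z‖ ^ 2) + η) := by
    intro t ht he
    have hint : Integrable fun z => ‖vel δ (q t) z‖ ^ 2 :=
      (integrable_sq_prim h hT.le hδ hδ1 ht).congr (hsq t he).symm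
    have e0 : ∫ z, conj (prim δ m t z) * acc δ (m t) z =
        ∫ z, conj (vel δ (q t) z) * acc δ (m t) z := by
      refine integral_congr_ae ?_
      filter_upwards [he] with z hz
      rw [hz]
    have hmm : Measurable (m t) := h.measurable_flux.comp measurable_prodMk_left
    have hreg : Integrable (reg δ (q t)) := integrable_reg hδ (h.isBdd t).integrable
    have hvc : Continuous (vel δ (reg δ (q t))) := (contDiff_vel hδ hreg).continuous
    have hi : Integrable fun w => m t w * vel δ (reg δ (q t)) w := by
      refine (h.integrable_flux t).mul_bdd (c := 1 / (2 * δ) * ∫ z, |reg δ (q t) z|)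
        hvc.aestronglyMeasurable (Eventually.of_forall fun w => ?_)
      rw [vel, ← integral_const_mul]
      refine norm_integral_le_of_norm_le (hreg.abs.const_mul _) (Eventually.of_forall fun y => ?_)
      rw [norm_mul, Complex.norm_real, Real.norm_eq_abs]
      gcongr
      exact norm_kap_le hδ _
    have e1 := re_integral_conj_vel_mul_acc hδ hδ1 (h.isBdd t).integrable
      (integrable_jap_sq_mul h t) (norm_vel_le_of_ae_eq h hT.le hδ hδ1 ht he) hmm
      (h.integrable_flux t)
    have e2 := integral_re (𝕜 := ℂ) hi
    simp only [RCLike.re_eq_complex_re] at e2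
    rw [e0, e1, e2]
    have e3 := hflux t hint
    rw [integral_congr_ae (hsq t he)] at e3
    have e4 := (abs_le.1 (Complex.abs_re_le_norm (∫ w, m t w * vel δ (reg δ (q t)) w))).1
    have e5 : 0 ≤ ∫ z, ‖prim δ m t z‖ ^ 2 := integral_nonneg fun z => by positivity
    nlinarith
  have hcont := continuousOn_integral_sq_prim h hT.le hδ hδ1
  have key := le_exp_of_le_integral (C := 4 * (C + 1)) (η := η) (by positivity) hη hcont
    (fun t _ => integral_nonneg fun z => by positivity) (fun t ht => by
      rw [integral_sq_prim h hT.le hδ hδ1 ht.2, ← integral_const_mul]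
      refine setIntegral_mono_on_ae ?_ ?_ measurableSet_Ioc ?_
      · have := (integrable_prim_mul_acc h hT.le hδ hδ1 ht.2).integral_prod_left.re
        exact this.const_mul 2
      · have : IntegrableOn (fun s => (∫ z, ‖prim δ m s z‖ ^ 2) + η) (Ioc 0 t) := by
          refine IntegrableOn.mono_set ?_ ((Ioc_subset_Ioc_right ht.2).trans Ioc_subset_Icc_self)
          exact (hcont.add continuousOn_const).integrableOn_Icc
        exact this.const_mul _
      · have hT0 : ∀ᵐ s : ℝ, s ≠ T := by
          rw [ae_iff]
          simp
        filter_upwards [hae, hT0] with s hs hsT hst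
        exact hprod s (hst.2.trans ht.2)
          (hs ⟨hst.1, lt_of_le_of_ne (hst.2.trans ht.2) hsT⟩))
  filter_upwards [hae] with t ht htT
  refine ⟨(integrable_sq_prim h hT.le hδ hδ1 htT.2.le).congr (hsq t (ht htT)).symm, ?_⟩
  rw [integral_congr_ae (hsq t (ht htT))]
  exact key t ⟨htT.1.le, htT.2.le⟩

end

section

lemma exists_sq_norm_integral_mul_reg_le {φ : ℂ → ℂ} (hφ : ContDiff ℝ 1 φ)
    (hφc : HasCompactSupport φ) :
    ∃ C : ℝ, ∀ δ, 0 < δ → ∀ q : ℂ → ℝ, Integrable q →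
      Integrable (fun z => ‖vel δ q z‖ ^ 2) →
      ‖∫ z, φ z * (reg δ q z : ℂ)‖ ^ 2 ≤ C * ∫ z, ‖vel δ q z‖ ^ 2 := by
  have hcc : Continuous (cr I φ) := continuous_cr hφ
  have hcs : HasCompactSupport (cr I φ) := by
    rw [HasCompactSupport]
    exact hφc.isCompact.of_isClosed_subset (isClosed_tsupport _) (support_cr_subset _ _)
  obtain ⟨B, hB⟩ := hcs.exists_bound_of_continuous hcc
  have hci : Integrable (cr I φ) := hcc.integrable_of_hasCompactSupport hcs
  set A := ∫ z, ‖cr I φ z‖ with hA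
  have hA0 : 0 ≤ A := integral_nonneg fun z => norm_nonneg _
  refine ⟨A * B, fun δ hδ q hq hE => ?_⟩
  have hV := contDiff_vel hδ hq
  have hVc := hV.continuous
  have hVf := hV.continuous_fderiv one_ne_zero
  have hφf := hφ.continuous_fderiv one_ne_zero
  have hi : ∀ F : ℂ → ℂ, Continuous F → Integrable fun z => F z * φ z := fun F hF =>
    (hF.mul hφ.continuous).integrable_of_hasCompactSupport hφc.mul_left
  have e1 : ∫ z, vel δ q z * cr I φ z = -∫ z, cr I (vel δ q) z * φ z := by
    refine integral_mul_cr (fun z _ => hV.differentiable one_ne_zero z)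
      (hφ.differentiable one_ne_zero) (hi _ hVc) (fun v => ?_) fun v => ?_
    · refine (hVc.mul (hφf.clm_apply continuous_const)).integrable_of_hasCompactSupport ?_
      exact (hφc.fderiv_apply (𝕜 := ℝ) v).mul_left
    · exact hi _ (hVf.clm_apply continuous_const)
  have e2 : ∫ z, cr I (vel δ q) z * φ z = 2 * ∫ z, φ z * (reg δ q z : ℂ) := by
    rw [← integral_const_mul]
    congr 1; ext z
    rw [cr_vel hδ hq]
    ring
  have e3 : ‖∫ z, φ z * (reg δ q z : ℂ)‖ ≤ ∫ z, ‖cr I φ z‖ * ‖vel δ q z‖ := by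
    have h1 : ‖∫ z, vel δ q z * cr I φ z‖ ≤ ∫ z, ‖cr I φ z‖ * ‖vel δ q z‖ := by
      refine (norm_integral_le_integral_norm _).trans (le_of_eq ?_)
      congr 1; ext z
      rw [norm_mul, mul_comm]
    rw [e1, e2, norm_neg, norm_mul, Complex.norm_ofNat] at h1
    linarith [norm_nonneg (∫ z, φ z * (reg δ q z : ℂ))]
  have i1 : Integrable fun z => ‖cr I φ z‖ * ‖vel δ q z‖ :=
    (hcc.norm.mul hVc.norm).integrable_of_hasCompactSupport hcs.norm.mul_right
  have i2 : Integrable fun z => ‖cr I φ z‖ * ‖vel δ q z‖ ^ 2 :=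
    (hcc.norm.mul (hVc.norm.pow 2)).integrable_of_hasCompactSupport hcs.norm.mul_right
  calc ‖∫ z, φ z * (reg δ q z : ℂ)‖ ^ 2 ≤ (∫ z, ‖cr I φ z‖ * ‖vel δ q z‖) ^ 2 := by gcongr
    _ ≤ A * ∫ z, ‖cr I φ z‖ * ‖vel δ q z‖ ^ 2 :=
        sq_integral_mul_le (fun z => norm_nonneg _) hci.norm i1 i2
    _ ≤ A * (B * ∫ z, ‖vel δ q z‖ ^ 2) := by
        rw [← integral_const_mul B]
        refine mul_le_mul_of_nonneg_left (integral_mono i2 (hE.const_mul B) fun z => ?_) hA0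
        exact mul_le_mul_of_nonneg_right (hB z) (by positivity)
    _ = A * B * ∫ z, ‖vel δ q z‖ ^ 2 := by ring

/-- A vorticity whose regularised velocities vanish in the limit is zero. -/
lemma ae_eq_zero_of_tendsto {M : ℝ} {q : ℂ → ℝ} (hq : IsBdd M q)
    (hE : ∀ n : ℕ, Integrable fun z => ‖vel (1 / ((n : ℝ) + 1)) q z‖ ^ 2)
    (hlim : Tendsto (fun n : ℕ => ∫ z, ‖vel (1 / ((n : ℝ) + 1)) q z‖ ^ 2) atTop (𝓝 0)) :
    q =ᵐ[volume] 0 := by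
  have hpos : ∀ n : ℕ, (0 : ℝ) < 1 / ((n : ℝ) + 1) := fun n => Nat.one_div_pos_of_nat
  refine ae_eq_zero_of_integral_contDiff_smul_eq_zero hq.integrable.locallyIntegrable
    fun g hg hgc => ?_
  set φ : ℂ → ℂ := fun z => (g z : ℂ) with hφ
  have hφs : ContDiff ℝ 1 φ := Complex.ofRealCLM.contDiff.comp (hg.of_le (by exact_mod_cast le_top))
  have hφc : HasCompactSupport φ := hgc.comp_left (g := fun x : ℝ => (x : ℂ)) Complex.ofReal_zero
  have hφi : Integrable φ := hφs.continuous.integrable_of_hasCompactSupport hφc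
  obtain ⟨C, hC⟩ := exists_sq_norm_integral_mul_reg_le hφs hφc
  have h1 : Tendsto (fun n : ℕ => ‖∫ z, φ z * (reg (1 / ((n : ℝ) + 1)) q z : ℂ)‖) atTop (𝓝 0) := by
    have h2 : Tendsto (fun n : ℕ => √(C * ∫ z, ‖vel (1 / ((n : ℝ) + 1)) q z‖ ^ 2)) atTop (𝓝 0) := by
      have := (hlim.const_mul C).sqrt
      rwa [mul_zero, Real.sqrt_zero] at this
    refine squeeze_zero (fun n => norm_nonneg _) (fun n => ?_) h2
    exact Real.le_sqrt_of_sq_le (hC _ (hpos n) q hq.integrable (hE n))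
  have h3 : Tendsto (fun n : ℕ => ‖∫ z, φ z * (reg (1 / ((n : ℝ) + 1)) q z : ℂ)‖ +
      1 * M * avgModulus φ (1 / ((n : ℝ) + 1))) atTop (𝓝 0) := by
    have := h1.add ((tendsto_avgModulus hφs.continuous.measurable hφi).const_mul (1 * M))
    rwa [mul_zero, add_zero] at this
  have h4 : ∀ n : ℕ, ‖∫ z, φ z * ((q z : ℂ) * mass)‖ ≤
      ‖∫ z, φ z * (reg (1 / ((n : ℝ) + 1)) q z : ℂ)‖ +
      1 * M * avgModulus φ (1 / ((n : ℝ) + 1)) := by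
    intro n
    have := norm_integral_mol_sub_le (hpos n) hφs.continuous.measurable hφi
      (A := fun _ => 1) (B := fun z => (q z : ℂ)) measurable_const
      (Complex.measurable_ofReal.comp hq.measurable) (a := 1) (b := M) (fun z => by simp)
      (fun z => by rw [Complex.norm_real]; exact hq.bound z)
    simp only [mol_ofReal, mol_one (hpos n), one_mul] at this ⊢
    have h5 := norm_sub_norm_le (∫ z, φ z * ((q z : ℂ) * mass))
      (∫ z, φ z * (reg (1 / ((n : ℝ) + 1)) q z : ℂ))
    rw [norm_sub_rev] at h5
    linarith
  have h6 : ∫ z, φ z * ((q z : ℂ) * mass) = 0 := by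
    rw [← norm_eq_zero]
    exact le_antisymm (ge_of_tendsto' h3 h4) (norm_nonneg _)
  have h7 : ∫ z, φ z * ((q z : ℂ) * mass) = ((mass * ∫ z, g z • q z : ℝ) : ℂ) := by
    rw [← integral_const_mul, ← integral_complex_ofReal]
    congr 1; ext z
    simp only [hφ, smul_eq_mul]
    push_cast
    ring
  rw [h7, Complex.ofReal_eq_zero] at h6
  exact (mul_eq_zero.1 h6).resolve_left mass_pos.ne'

/-- Uniqueness for the transport system with the cut-off kernel. -/
lemma ae_eq_of_isTransport {T R M N C γ : ℝ} (hT : 0 < T) {f g : ℂ → ℂ} (hK : IsCutKernel f g C)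
    {q q' : ℝ → ℂ → ℝ} (hq : ∀ t, IsBdd M (q t)) (hq' : ∀ t, IsBdd M (q' t))
    (h : IsTransport T R N (fun t z => q t z - q' t z)
      fun t z => flux γ f (q t) z - flux γ f (q' t) z) :
    ∀ᵐ t, t ∈ Ioo 0 T → (fun z => q t z - q' t z) =ᵐ[volume] 0 := by
  have hpos : ∀ n : ℕ, (0 : ℝ) < 1 / ((n : ℝ) + 1) := fun n => Nat.one_div_pos_of_nat
  obtain ⟨C₀, hC₀, hflux⟩ := exists_norm_integral_flux_le hK M γ
  have hall : ∀ᵐ t, ∀ n : ℕ, t ∈ Ioo 0 T →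
      Integrable (fun z => ‖vel (1 / ((n : ℝ) + 1)) (fun z => q t z - q' t z) z‖ ^ 2) ∧
      ∫ z, ‖vel (1 / ((n : ℝ) + 1)) (fun z => q t z - q' t z) z‖ ^ 2 ≤
        avgModulus f (1 / ((n : ℝ) + 1)) * Real.exp (4 * (C₀ + 1) * T) := by
    rw [ae_all_iff]
    intro n
    refine integral_sq_vel_le h hT (hpos n) ?_ hC₀ (avgModulus_nonneg _ _)
      fun t ht => hflux _ (hpos n) _ _ (hq t) (hq' t) ht
    rw [div_le_one (by positivity)]
    linarith [(Nat.cast_nonneg n : (0 : ℝ) ≤ n)]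
  filter_upwards [hall] with t ht htT
  refine ae_eq_zero_of_tendsto (h.isBdd t) (fun n => (ht n htT).1) ?_
  refine squeeze_zero (fun n => integral_nonneg fun z => by positivity)
    (fun n => (ht n htT).2) ?_
  have := (tendsto_avgModulus hK.measurable hK.integrable).mul_const
    (Real.exp (4 * (C₀ + 1) * T))
  rwa [zero_mul] at this

end

section

/-- The identification of `ℂ` with `ℝ × ℝ`. -/
abbrev pr : ℂ ≃L[ℝ] ℝ × ℝ := Complex.equivRealProdCLM

lemma pr_apply (z : ℂ) : pr z = (z.re, z.im) := rfl

lemma pr_symm_apply (x : ℝ × ℝ) : pr.symm x = ⟨x.1, x.2⟩ := rfl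

lemma measurePreserving_pr : MeasurePreserving (pr : ℂ → ℝ × ℝ) :=
  Complex.volume_preserving_equiv_real_prod

lemma measurableEmbedding_pr : MeasurableEmbedding (pr : ℂ → ℝ × ℝ) :=
  Complex.measurableEquivRealProd.measurableEmbedding

lemma norm2_pr (z : ℂ) : norm2 (pr z) = ‖z‖ := by
  rw [norm2, pr_apply, Complex.norm_eq_sqrt_sq_add_sq]

/-- The complex function with the given real and imaginary parts. -/
def cplx (g h : ℝ × ℝ → ℝ) (z : ℂ) : ℂ := (g (pr z) : ℂ) + h (pr z) * I

lemma fderiv_cplx {g h : ℝ × ℝ → ℝ} {z : ℂ} (hg : DifferentiableAt ℝ g (pr z))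
    (hh : DifferentiableAt ℝ h (pr z)) (v : ℂ) :
    fderiv ℝ (cplx g h) z v =
      (fderiv ℝ g (pr z) (pr v) : ℂ) + fderiv ℝ h (pr z) (pr v) * I := by
  have h1 : HasFDerivAt (fun z : ℂ => g (pr z)) _ z := hg.hasFDerivAt.comp z pr.hasFDerivAt
  have h2 : HasFDerivAt (fun z : ℂ => h (pr z)) _ z := hh.hasFDerivAt.comp z pr.hasFDerivAt
  have h3 := (Complex.ofRealCLM.hasFDerivAt.comp z h1).add
    ((Complex.ofRealCLM.hasFDerivAt.comp z h2).mul_const I)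
  have h4 : HasFDerivAt (cplx g h) _ z := h3
  rw [h4.fderiv]
  simp [mul_comm]

lemma cr_cplx (c : ℂ) {g h : ℝ × ℝ → ℝ} {z : ℂ} (hg : DifferentiableAt ℝ g (pr z))
    (hh : DifferentiableAt ℝ h (pr z)) :
    cr c (cplx g h) z =
      (pd1 g (pr z) : ℂ) + pd1 h (pr z) * I + c * (pd2 g (pr z) + pd2 h (pr z) * I) := by
  rw [cr, fderiv_cplx hg hh, fderiv_cplx hg hh]
  simp only [pd1, pd2, pr_apply, Complex.one_re, Complex.one_im, Complex.I_re, Complex.I_im]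

lemma differentiableAt_pd {g : ℝ × ℝ → ℝ} {x : ℝ × ℝ} (hg : ContDiffAt ℝ 2 g x) :
    DifferentiableAt ℝ (fderiv ℝ g) x :=
  (hg.fderiv_right (m := 1) (by norm_num [one_add_one_eq_two])).differentiableAt one_ne_zero

lemma differentiableAt_pd1 {g : ℝ × ℝ → ℝ} {x : ℝ × ℝ} (hg : ContDiffAt ℝ 2 g x) :
    DifferentiableAt ℝ (pd1 g) x :=
  (differentiableAt_pd hg).clm_apply (differentiableAt_const _)

lemma differentiableAt_pd2 {g : ℝ × ℝ → ℝ} {x : ℝ × ℝ} (hg : ContDiffAt ℝ 2 g x) :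
    DifferentiableAt ℝ (pd2 g) x :=
  (differentiableAt_pd hg).clm_apply (differentiableAt_const _)

lemma pd1_pd2 {g : ℝ × ℝ → ℝ} {x : ℝ × ℝ} (hg : ContDiffAt ℝ 2 g x) :
    pd1 (pd2 g) x = pd2 (pd1 g) x := by
  have hd := differentiableAt_pd hg
  have hs := hg.isSymmSndFDerivAt (by simp) (1, 0) (0, 1)
  have h1 : fderiv ℝ (pd2 g) x (1, 0) = fderiv ℝ (fderiv ℝ g) x (1, 0) (0, 1) := by
    have := hd.hasFDerivAt.clm_apply (hasFDerivAt_const ((0 : ℝ), (1 : ℝ)) x)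
    have h' : HasFDerivAt (pd2 g) _ x := this
    rw [h'.fderiv]
    simp
  have h2 : fderiv ℝ (pd1 g) x (0, 1) = fderiv ℝ (fderiv ℝ g) x (0, 1) (1, 0) := by
    have := hd.hasFDerivAt.clm_apply (hasFDerivAt_const ((1 : ℝ), (0 : ℝ)) x)
    have h' : HasFDerivAt (pd1 g) _ x := this
    rw [h'.fderiv]
    simp
  rw [pd1, pd2, h1, h2, hs]

variable {K : ℝ × ℝ → ℝ × ℝ}

/-- The kernel in complex notation. -/
def ker (K : ℝ × ℝ → ℝ × ℝ) : ℂ → ℂ := cplx (fun y => (K y).1) fun y => (K y).2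

lemma ker_eq (K : ℝ × ℝ → ℝ × ℝ) (z : ℂ) : ker K z = pr.symm (K (pr z)) := by
  apply Complex.ext <;> simp [ker, cplx, pr_symm_apply]

lemma pr_ne_zero {z : ℂ} (hz : z ≠ 0) : pr z ≠ 0 := fun h =>
  hz (pr.injective (h.trans (map_zero pr).symm))

lemma contDiffAt_fst (hK : ContDiffOn ℝ 2 K {x : ℝ × ℝ | x ≠ 0}) {x : ℝ × ℝ} (hx : x ≠ 0) :
    ContDiffAt ℝ 2 (fun y => (K y).1) x :=
  (hK.contDiffAt (isOpen_compl_singleton.mem_nhds hx)).fst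

lemma contDiffAt_snd (hK : ContDiffOn ℝ 2 K {x : ℝ × ℝ | x ≠ 0}) {x : ℝ × ℝ} (hx : x ≠ 0) :
    ContDiffAt ℝ 2 (fun y => (K y).2) x :=
  (hK.contDiffAt (isOpen_compl_singleton.mem_nhds hx)).snd

lemma contDiffOn_ker (hK : ContDiffOn ℝ 2 K {x : ℝ × ℝ | x ≠ 0}) :
    ContDiffOn ℝ 2 (ker K) {0}ᶜ := by
  have h1 : ContDiffOn ℝ 2 (fun z => pr.symm (K (pr z))) {0}ᶜ :=
    pr.symm.contDiff.comp_contDiffOn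
      (hK.comp pr.contDiff.contDiffOn fun z hz => pr_ne_zero hz)
  exact h1.congr fun z _ => ker_eq K z

lemma locallyIntegrable_ker (hK : LocallyIntegrable K) : LocallyIntegrable (ker K) := by
  have h1 : LocallyIntegrable (K ∘ pr) := by
    have := (locallyIntegrable_map_homeomorph pr.toHomeomorph (f := K) (μ := volume)).1 (by
      have e : Measure.map (pr.toHomeomorph : ℂ → ℝ × ℝ) volume = volume :=
        measurePreserving_pr.map_eq
      rwa [e])
    exact this
  intro z
  obtain ⟨s, hs, hi⟩ := h1 z
  refine ⟨s, hs, ?_⟩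
  have := (pr.symm : ℝ × ℝ →L[ℝ] ℂ).integrable_comp hi
  exact this.congr (Eventually.of_forall fun z => (ker_eq K z).symm)

lemma cr_ker (hK : ContDiffOn ℝ 2 K {x : ℝ × ℝ | x ≠ 0}) {z : ℂ} (hz : z ≠ 0) :
    cr I (ker K) z = cplx (fun x => pd1 (fun y => (K y).1) x - pd2 (fun y => (K y).2) x)
      (fun x => pd2 (fun y => (K y).1) x + pd1 (fun y => (K y).2) x) z := by
  have hx := pr_ne_zero hz
  rw [ker, cr_cplx I ((contDiffAt_fst hK hx).differentiableAt two_ne_zero)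
    ((contDiffAt_snd hK hx).differentiableAt two_ne_zero)]
  simp only [cplx]
  push_cast
  linear_combination (pd2 (fun y => (K y).2) (pr z) : ℂ) * Complex.I_mul_I

lemma norm_cr_ker_le (hK : ContDiffOn ℝ 2 K {x : ℝ × ℝ | x ≠ 0}) {C : ℝ}
    (hC : ∀ x : ℝ × ℝ, x ≠ 0 →
      |pd2 (fun y => (K y).1) x + pd1 (fun y => (K y).2) x| ≤ C ∧
      |pd1 (fun y => (K y).1) x - pd2 (fun y => (K y).2) x| ≤ C) {z : ℂ} (hz : z ≠ 0) :
    ‖cr I (ker K) z‖ ≤ C + C := by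
  obtain ⟨h1, h2⟩ := hC _ (pr_ne_zero hz)
  rw [cr_ker hK hz, cplx]
  refine (norm_add_le _ _).trans (add_le_add ?_ ?_)
  · rwa [Complex.norm_real]
  · rwa [norm_mul, Complex.norm_I, mul_one, Complex.norm_real]

lemma ker_equation (hK : ContDiffOn ℝ 2 K {x : ℝ × ℝ | x ≠ 0}) {α : ℝ}
    (hKeq : ∀ x : ℝ × ℝ, x ≠ 0 →
      (K x).1 - α * lap (fun y => (K y).1) x = (Hvec x).1 ∧
      (K x).2 - α * lap (fun y => (K y).2) x = (Hvec x).2) {z : ℂ} (hz : z ≠ 0) :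
    ker K z - α * cr (-I) (cr I (ker K)) z = (I / (2 * π)) / conj z := by
  have hx := pr_ne_zero hz
  obtain ⟨e1, e2⟩ := hKeq _ hx
  have c1 := contDiffAt_fst hK hx
  have c2 := contDiffAt_snd hK hx
  have he : cr I (ker K) =ᶠ[𝓝 z]
      cplx (fun x => pd1 (fun y => (K y).1) x - pd2 (fun y => (K y).2) x)
      (fun x => pd2 (fun y => (K y).1) x + pd1 (fun y => (K y).2) x) := by
    filter_upwards [isOpen_compl_singleton.mem_nhds hz] with w hw using cr_ker hK hw
  have d11 := differentiableAt_pd1 c1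
  have d12 := differentiableAt_pd2 c1
  have d21 := differentiableAt_pd1 c2
  have d22 := differentiableAt_pd2 c2
  have s1 : ∀ v, fderiv ℝ (fun x => pd1 (fun y => (K y).1) x - pd2 (fun y => (K y).2) x) (pr z) v =
      fderiv ℝ (pd1 fun y => (K y).1) (pr z) v - fderiv ℝ (pd2 fun y => (K y).2) (pr z) v := by
    intro v
    have := (d11.hasFDerivAt.sub d22.hasFDerivAt).fderiv
    exact congrArg (fun L : ℝ × ℝ →L[ℝ] ℝ => L v) this
  have s2 : ∀ v, fderiv ℝ (fun x => pd2 (fun y => (K y).1) x + pd1 (fun y => (K y).2) x) (pr z) v =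
      fderiv ℝ (pd2 fun y => (K y).1) (pr z) v + fderiv ℝ (pd1 fun y => (K y).2) (pr z) v := by
    intro v
    have := (d12.hasFDerivAt.add d21.hasFDerivAt).fderiv
    exact congrArg (fun L : ℝ × ℝ →L[ℝ] ℝ => L v) this
  rw [cr_congr he, cr_cplx (-I)
    (g := fun x => pd1 (fun y => (K y).1) x - pd2 (fun y => (K y).2) x)
    (h := fun x => pd2 (fun y => (K y).1) x + pd1 (fun y => (K y).2) x)
    (d11.sub d22) (d12.add d21)]
  have p1 := pd1_pd2 c1
  have p2 := pd1_pd2 c2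
  have hlap : ((pd1 (fun x => pd1 (fun y => (K y).1) x - pd2 (fun y => (K y).2) x) (pr z) : ℝ) : ℂ) +
      pd1 (fun x => pd2 (fun y => (K y).1) x + pd1 (fun y => (K y).2) x) (pr z) * I +
      -I * (pd2 (fun x => pd1 (fun y => (K y).1) x - pd2 (fun y => (K y).2) x) (pr z) +
      pd2 (fun x => pd2 (fun y => (K y).1) x + pd1 (fun y => (K y).2) x) (pr z) * I) =
      (lap (fun y => (K y).1) (pr z) : ℂ) + lap (fun y => (K y).2) (pr z) * I := by
    have t1 : pd1 (fun x => pd1 (fun y => (K y).1) x - pd2 (fun y => (K y).2) x) (pr z) =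
      pd1 (pd1 fun y => (K y).1) (pr z) - pd1 (pd2 fun y => (K y).2) (pr z) := s1 _
    have t2 : pd1 (fun x => pd2 (fun y => (K y).1) x + pd1 (fun y => (K y).2) x) (pr z) =
      pd1 (pd2 fun y => (K y).1) (pr z) + pd1 (pd1 fun y => (K y).2) (pr z) := s2 _
    have t3 : pd2 (fun x => pd1 (fun y => (K y).1) x - pd2 (fun y => (K y).2) x) (pr z) =
      pd2 (pd1 fun y => (K y).1) (pr z) - pd2 (pd2 fun y => (K y).2) (pr z) := s1 _
    have t4 : pd2 (fun x => pd2 (fun y => (K y).1) x + pd1 (fun y => (K y).2) x) (pr z) =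
      pd2 (pd2 fun y => (K y).1) (pr z) + pd2 (pd1 fun y => (K y).2) (pr z) := s2 _
    rw [t1, t2, t3, t4, p1, p2, lap, lap]
    push_cast
    linear_combination (-(pd2 (pd2 fun y => (K y).1) (pr z) : ℂ) -
      (pd2 (pd1 fun y => (K y).2) (pr z) : ℂ)) * Complex.I_mul_I
  rw [hlap]
  have hN : z.re ^ 2 + z.im ^ 2 = ‖z‖ ^ 2 := by
    rw [← Complex.normSq_eq_norm_sq, Complex.normSq_apply]; ring
  have hn : (‖z‖ : ℂ) ≠ 0 := by simpa using hz
  have hc : conj z ≠ 0 := by simpa using hz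
  have e3 : ker K z - α * ((lap (fun y => (K y).1) (pr z) : ℂ) + lap (fun y => (K y).2) (pr z) * I) =
      ((Hvec (pr z)).1 : ℂ) + (Hvec (pr z)).2 * I := by
    rw [← e1, ← e2, ker, cplx]
    push_cast
    ring
  rw [e3]
  simp only [Hvec, pr_apply, hN, Prod.smul_mk, smul_eq_mul]
  push_cast
  have hzc : z * conj z = (‖z‖ : ℂ) ^ 2 := Complex.mul_conj' z
  have hz' : z = z.re + z.im * I := (Complex.re_add_im z).symm
  have hpi : (π : ℂ) ≠ 0 := by exact_mod_cast Real.pi_ne_zero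
  rw [← hzc]
  field_simp
  linear_combination -I * hz' - (z.im : ℂ) * Complex.I_mul_I

end

section

variable {T M R γ : ℝ} {K : ℝ × ℝ → ℝ × ℝ} {q₀ : ℝ × ℝ → ℝ} {q q' : ℝ → ℝ × ℝ → ℝ}

lemma IsBdd.mono {N : ℝ} {p : ℂ → ℝ} (h : IsBdd M p) (hMN : M ≤ N) : IsBdd N p where
  measurable := h.measurable
  bound z := (h.bound z).trans hMN
  integrable := h.integrable
  integral_le := h.integral_le.trans hMN

/-- The restriction to the times in `(0, T]` of a function on the plane, in complex notation. -/
def trunc (T : ℝ) (q : ℝ → ℝ × ℝ → ℝ) (t : ℝ) (z : ℂ) : ℝ :=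
  (Ioc 0 T).indicator (fun s => q s (pr z)) t

lemma trunc_of_mem {t : ℝ} (ht : t ∈ Ioc 0 T) (z : ℂ) : trunc T q t z = q t (pr z) :=
  indicator_of_mem ht _

lemma trunc_of_notMem {t : ℝ} (ht : t ∉ Ioc 0 T) : trunc T q t = 0 :=
  funext fun _ => indicator_of_notMem ht _

lemma measurable_trunc (T : ℝ) (hq : Measurable fun p : ℝ × (ℝ × ℝ) => q p.1 p.2) :
    Measurable fun p : ℝ × ℂ => trunc T q p.1 p.2 := by
  have h : Measurable fun p : ℝ × ℂ => q p.1 (pr p.2) :=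
    hq.comp (measurable_fst.prodMk (measurableEmbedding_pr.measurable.comp measurable_snd))
  exact h.indicator (measurable_fst measurableSet_Ioc : MeasurableSet (Prod.fst ⁻¹' Ioc 0 T))

lemma exists_isBdd_trunc (h : IsSol γ K q₀ q) (hT : 0 < T) :
    ∃ M R, (∀ t, IsBdd M (trunc T q t)) ∧ ∀ t z, R < ‖z‖ → trunc T q t z = 0 := by
  obtain ⟨hm, ⟨C, hC⟩, hs, -⟩ := h
  obtain ⟨R, hR⟩ := hs T hT
  have hC0 : 0 ≤ C := (abs_nonneg _).trans ((hC 0 le_rfl).2 0)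
  have hsupp : ∀ t z, R < ‖z‖ → trunc T q t z = 0 := by
    intro t z hz
    by_cases ht : t ∈ Ioc 0 T
    · rw [trunc_of_mem ht]
      exact hR t ⟨ht.1.le, ht.2⟩ _ (by rwa [norm2_pr])
    · rw [trunc_of_notMem ht]; rfl
  have hmt : ∀ t, Measurable (trunc T q t) := fun t =>
    (measurable_trunc T hm).comp (measurable_const.prodMk measurable_id)
  have hbd : ∀ t z, |trunc T q t z| ≤ C := by
    intro t z
    by_cases ht : t ∈ Ioc 0 T
    · rw [trunc_of_mem ht]
      exact (hC t ht.1.le).2 _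
    · rw [trunc_of_notMem ht]; simpa using hC0
  refine ⟨C, R, fun t => ⟨hmt t, hbd t, ?_, ?_⟩, hsupp⟩
  · refine IntegrableOn.integrable_of_forall_notMem_eq_zero (s := Metric.closedBall 0 R) ?_ ?_
    · exact IntegrableOn.of_bound measure_closedBall_lt_top (hmt t).aestronglyMeasurable C
        (Eventually.of_forall fun z => hbd t z)
    · intro z hz
      exact hsupp t z (by simpa using hz)
  · by_cases ht : t ∈ Ioc 0 T
    · simp only [trunc_of_mem ht]
      rw [measurePreserving_pr.integral_comp measurableEmbedding_pr fun x => |q t x|]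
      exact (hC t ht.1.le).1
    · simpa [trunc_of_notMem ht] using hC0

lemma uvel_eq {f : ℂ → ℂ} (hs : ∀ t z, R < ‖z‖ → trunc T q t z = 0)
    (hf : ∀ z, ‖z‖ ≤ 2 * R → f z = ker K z) {t : ℝ} (ht : t ∈ Ioc 0 T) {z : ℂ} (hz : ‖z‖ ≤ R) :
    pr.symm (uvel γ K (q t) (pr z)) = conv f (trunc T q t) z + γ * f z := by
  have hz2 : ‖z‖ ≤ 2 * R := by linarith [norm_nonneg z]
  rw [uvel, map_add, map_smul, ← ker_eq, hf z hz2, Complex.real_smul]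
  congr 1
  rw [← ContinuousLinearEquiv.integral_comp_comm,
    ← measurePreserving_pr.integral_comp measurableEmbedding_pr, conv]
  congr 1; ext1 w
  rcases le_or_gt ‖w‖ R with hw | hw
  · rw [hf (z - w) ((norm_sub_le _ _).trans (by linarith)), ker_eq, trunc_of_mem ht, map_smul,
      map_sub, Complex.real_smul, mul_comm]
  · have := hs t w hw
    rw [this, (trunc_of_mem (q := q) ht w).symm.trans this]
    simp

lemma measurable_flux_trunc (γ : ℝ) {f : ℂ → ℂ} (hf : Measurable f) {p : ℝ → ℂ → ℝ}
    (hp : Measurable fun x : ℝ × ℂ => p x.1 x.2) :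
    Measurable fun x : ℝ × ℂ => flux γ f (p x.1) x.2 := by
  have h : StronglyMeasurable fun y : (ℝ × ℂ) × ℂ => f (y.1.2 - y.2) * (p y.1.1 y.2 : ℂ) := by
    apply Measurable.stronglyMeasurable
    exact (hf.comp (measurable_fst.snd.sub measurable_snd)).mul
      (Complex.measurable_ofReal.comp (hp.comp (measurable_fst.fst.prodMk measurable_snd)))
  have hc : Measurable fun x : ℝ × ℂ => conv f (p x.1) x.2 := h.integral_prod_right'.measurable
  exact (Complex.measurable_ofReal.comp hp).mul (hc.add ((hf.comp measurable_snd).const_mul _))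

lemma flux_zero (γ : ℝ) (f : ℂ → ℂ) {p : ℂ → ℝ} {z : ℂ} (h : p z = 0) : flux γ f p z = 0 := by
  simp [flux, h]

/-- A measurable function whose slices have uniformly bounded `L¹` norms is integrable. -/
lemma integrable_prod_of_slices {F : ℝ × ℂ → ℝ} (hF : Measurable F)
    (hi : ∀ t, Integrable fun z => F (t, z)) {N : ℝ} (hN : ∀ t, ∫ z, ‖F (t, z)‖ ≤ N) :
    Integrable F ((volume.restrict (Ioc 0 T)).prod volume) := by
  refine (integrable_prod_iff hF.aestronglyMeasurable).2 ⟨Eventually.of_forall hi, ?_⟩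
  refine IntegrableOn.of_bound (by simp) ?_ N (Eventually.of_forall fun t => ?_)
  · exact (hF.norm.stronglyMeasurable.integral_prod_right').aestronglyMeasurable
  · rw [Real.norm_of_nonneg (integral_nonneg fun z => norm_nonneg _)]
    exact hN t

end

section

variable {T M R γ : ℝ} {K : ℝ × ℝ → ℝ × ℝ} {q₀ : ℝ × ℝ → ℝ} {q q' : ℝ → ℝ × ℝ → ℝ}

lemma fderiv_mul_comp_symm {a : ℝ → ℝ} {b : ℂ → ℝ} (ha : ContDiff ℝ (⊤ : ℕ∞) a)
    (hb : ContDiff ℝ (⊤ : ℕ∞) b) (t : ℝ) (z : ℂ) (s : ℝ) (v : ℝ × ℝ) :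
    fderiv ℝ (fun p : ℝ × (ℝ × ℝ) => a p.1 * b (pr.symm p.2)) (t, pr z) (s, v) =
      s * deriv a t * b z + a t * fderiv ℝ b z (pr.symm v) := by
  have h1 : HasFDerivAt (fun p : ℝ × (ℝ × ℝ) => a p.1) _ (t, pr z) :=
    ((ha.differentiable (by simp) t).hasFDerivAt).comp (t, pr z) hasFDerivAt_fst
  have h2 : HasFDerivAt (fun p : ℝ × (ℝ × ℝ) => b (pr.symm p.2)) _ (t, pr z) :=
    ((hb.differentiable (by simp) (pr.symm (pr z))).hasFDerivAt).comp (t, pr z)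
      (pr.symm.hasFDerivAt.comp (t, pr z) hasFDerivAt_snd)
  have h3 : HasFDerivAt (fun p : ℝ × (ℝ × ℝ) => a p.1 * b (pr.symm p.2)) _ (t, pr z) := h1.mul h2
  rw [h3.fderiv]
  simp only [pr.symm_apply_apply]
  have : fderiv ℝ a t s = s * deriv a t := by
    rw [← mul_one s, ← smul_eq_mul s 1, map_smul, smul_eq_mul, smul_eq_mul, mul_one,
      fderiv_apply_one_eq_deriv]
  simp only [add_apply, smul_apply, ContinuousLinearMap.comp_apply,
    smul_eq_mul, ContinuousLinearMap.coe_fst', ContinuousLinearMap.coe_snd']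
  rw [this]
  simp only [ContinuousLinearEquiv.coe_coe]
  ring

lemma hasCompactSupport_mul_comp_symm {a : ℝ → ℝ} {b : ℂ → ℝ} (ha : HasCompactSupport a)
    (hb : HasCompactSupport b) :
    HasCompactSupport fun p : ℝ × (ℝ × ℝ) => a p.1 * b (pr.symm p.2) := by
  refine HasCompactSupport.intro
    (IsCompact.prod ha (IsCompact.image hb pr.continuous)) fun p hp => ?_
  by_contra hne
  refine hp ⟨subset_tsupport _ (left_ne_zero_of_mul hne),
    pr.symm p.2, subset_tsupport _ (right_ne_zero_of_mul hne), pr.apply_symm_apply _⟩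

lemma contDiff_mul_comp_symm {a : ℝ → ℝ} {b : ℂ → ℝ} (ha : ContDiff ℝ (⊤ : ℕ∞) a)
    (hb : ContDiff ℝ (⊤ : ℕ∞) b) :
    ContDiff ℝ (⊤ : ℕ∞) fun p : ℝ × (ℝ × ℝ) => a p.1 * b (pr.symm p.2) :=
  (ha.comp contDiff_fst).mul (hb.comp (pr.symm.contDiff.comp contDiff_snd))

lemma measurePreserving_prod_pr :
    MeasurePreserving (Prod.map id pr : ℝ × ℂ → ℝ × (ℝ × ℝ)) :=
  (MeasurePreserving.id volume).prod measurePreserving_pr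

lemma measurableEmbedding_prod_pr :
    MeasurableEmbedding (Prod.map id pr : ℝ × ℂ → ℝ × (ℝ × ℝ)) :=
  MeasurableEmbedding.id.prodMap measurableEmbedding_pr

section

variable {f : ℂ → ℂ} {p : ℝ → ℂ → ℝ} {a : ℝ → ℝ} {b : ℂ → ℝ}

lemma integrable_test_flux (hfm : Measurable f) (hf : Integrable f)
    (hp : Measurable fun x : ℝ × ℂ => p x.1 x.2) (hpb : ∀ t, IsBdd M (p t))
    (ha : ContDiff ℝ (⊤ : ℕ∞) a) (has : HasCompactSupport a) (hb : ContDiff ℝ (⊤ : ℕ∞) b)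
    (hbs : HasCompactSupport b) :
    Integrable (fun x : ℝ × ℂ => a x.1 * fderiv ℝ b x.2 (flux γ f (p x.1) x.2))
      ((volume.restrict (Ioc 0 T)).prod volume) := by
  have hM := (hpb 0).nonneg
  obtain ⟨A, hA⟩ := has.exists_bound_of_continuous ha.continuous
  have hbc : Continuous (fderiv ℝ b) := hb.continuous_fderiv (by simp)
  obtain ⟨B, hB⟩ := (hbs.fderiv (𝕜 := ℝ)).exists_bound_of_continuous hbc
  have hA0 := (norm_nonneg _).trans (hA 0)
  have hB0 := (norm_nonneg _).trans (hB 0)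
  have hle : ∀ t z, ‖a t * fderiv ℝ b z (flux γ f (p t) z)‖ ≤ A * B * ‖flux γ f (p t) z‖ := by
    intro t z
    rw [norm_mul, mul_assoc]
    gcongr
    · exact hA t
    · exact ((fderiv ℝ b z).le_opNorm _).trans (by gcongr; exact hB z)
  have hfx := measurable_flux_trunc γ hfm hp
  have hm : Measurable fun x : ℝ × ℂ => a x.1 * fderiv ℝ b x.2 (flux γ f (p x.1) x.2) := by
    have hc : Continuous fun y : ℂ × ℂ => fderiv ℝ b y.1 y.2 :=
      (hbc.comp continuous_fst).clm_apply continuous_snd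
    exact (ha.continuous.measurable.comp measurable_fst).mul
      (hc.measurable.comp (measurable_snd.prodMk hfx))
  have hi : ∀ t, Integrable fun z => A * B * ‖flux γ f (p t) z‖ := fun t =>
    (integrable_flux γ hfm hf (hpb t)).norm.const_mul _
  have hs : ∀ t, Integrable fun z => a t * fderiv ℝ b z (flux γ f (p t) z) := fun t =>
    (hi t).mono' (hm.comp (measurable_const.prodMk measurable_id)).aestronglyMeasurable
      (Eventually.of_forall fun z => hle t z)
  refine integrable_prod_of_slices hm hs
    (N := A * B * ((M ^ 2 + M * |γ|) * ∫ z, ‖f z‖)) fun t => ?_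
  refine (integral_mono (hs t).norm (hi t) fun z => hle t z).trans ?_
  rw [integral_const_mul]
  gcongr
  exact integral_norm_flux_le γ hfm hf (hpb t)

lemma integrable_deriv_test (hp : Measurable fun x : ℝ × ℂ => p x.1 x.2)
    (hpb : ∀ t, IsBdd M (p t))
    (ha : ContDiff ℝ (⊤ : ℕ∞) a) (has : HasCompactSupport a) (hb : ContDiff ℝ (⊤ : ℕ∞) b)
    (hbs : HasCompactSupport b) :
    Integrable (fun x : ℝ × ℂ => deriv a x.1 * (p x.1 x.2 * b x.2))
      ((volume.restrict (Ioc 0 T)).prod volume) := by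
  have hac : Continuous (deriv a) := ha.continuous_deriv (by simp)
  obtain ⟨A, hA⟩ := has.deriv.exists_bound_of_continuous hac
  obtain ⟨B, hB⟩ := hbs.exists_bound_of_continuous hb.continuous
  have hA0 := (norm_nonneg _).trans (hA 0)
  have hB0 := (norm_nonneg _).trans (hB 0)
  have hle : ∀ t z, ‖deriv a t * (p t z * b z)‖ ≤ A * B * |p t z| := by
    intro t z
    rw [norm_mul, norm_mul, mul_assoc, mul_comm ‖p t z‖, Real.norm_eq_abs (p t z)]
    gcongr
    · exact hA t
    · exact hB z
  have hm : Measurable fun x : ℝ × ℂ => deriv a x.1 * (p x.1 x.2 * b x.2) :=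
    (hac.measurable.comp measurable_fst).mul (hp.mul (hb.continuous.measurable.comp measurable_snd))
  have hi : ∀ t, Integrable fun z => A * B * |p t z| := fun t =>
    (hpb t).integrable.abs.const_mul _
  have hs : ∀ t, Integrable fun z => deriv a t * (p t z * b z) := fun t =>
    (hi t).mono' (hm.comp (measurable_const.prodMk measurable_id)).aestronglyMeasurable
      (Eventually.of_forall fun z => hle t z)
  refine integrable_prod_of_slices hm hs (N := A * B * M) fun t => ?_
  refine (integral_mono (hs t).norm (hi t) fun z => hle t z).trans ?_
  rw [integral_const_mul]
  gcongr
  exact (hpb t).integral_le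

end

lemma weak_trunc (h : IsSol γ K q₀ q) (hb : ∀ t, IsBdd M (trunc T q t))
    (hs : ∀ t z, R < ‖z‖ → trunc T q t z = 0) {f : ℂ → ℂ} (hfm : Measurable f)
    (hf : Integrable f) (hfk : ∀ z, ‖z‖ ≤ 2 * R → f z = ker K z) {a : ℝ → ℝ} {b : ℂ → ℝ}
    (ha : ContDiff ℝ (⊤ : ℕ∞) a) (has : HasCompactSupport a) (hb' : ContDiff ℝ (⊤ : ℕ∞) b)
    (hbs : HasCompactSupport b) (haT : ∀ t, T ≤ t → a t = 0) :
    IntegrableOn (fun t => deriv a t * (∫ z, trunc T q t z * b z) +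
      a t * ∫ z, fderiv ℝ b z (flux γ f (trunc T q t) z)) (Ioc 0 T) ∧
    ∫ t in Ioc 0 T, (deriv a t * (∫ z, trunc T q t z * b z) +
      a t * ∫ z, fderiv ℝ b z (flux γ f (trunc T q t) z)) =
      -∫ x, q₀ x * (a 0 * b (pr.symm x)) := by
  have hm := measurable_trunc T h.1
  have i1 := integrable_deriv_test (T := T) hm hb ha has hb' hbs
  have i2 := integrable_test_flux (T := T) (γ := γ) hfm hf hm hb ha has hb' hbs
  simp_rw [← integral_const_mul]
  refine ⟨(i1.integral_prod_left).add i2.integral_prod_left, ?_⟩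
  have hw := h.2.2.2 _ (contDiff_mul_comp_symm ha hb') (hasCompactSupport_mul_comp_symm has hbs)
  rw [← eq_neg_iff_add_eq_zero] at hw
  rw [← hw, ← measurePreserving_prod_pr.setIntegral_preimage_emb measurableEmbedding_prod_pr]
  have hda : ∀ t, T < t → deriv a t = 0 := by
    intro t ht
    have : a =ᶠ[𝓝 t] fun _ => 0 := by
      filter_upwards [Ioi_mem_nhds ht] with s hs using haT s (le_of_lt hs)
    rw [this.deriv_eq, deriv_const]
  have key : ∀ t z, q t (pr z) * (fderiv ℝ (fun p : ℝ × (ℝ × ℝ) => a p.1 * b (pr.symm p.2))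
        (t, pr z) (1, (0, 0)) +
      (uvel γ K (q t) (pr z)).1 * fderiv ℝ (fun p : ℝ × (ℝ × ℝ) => a p.1 * b (pr.symm p.2))
        (t, pr z) (0, (1, 0)) +
      (uvel γ K (q t) (pr z)).2 * fderiv ℝ (fun p : ℝ × (ℝ × ℝ) => a p.1 * b (pr.symm p.2))
        (t, pr z) (0, (0, 1))) =
      deriv a t * (q t (pr z) * b z) +
        a t * fderiv ℝ b z ((q t (pr z) : ℂ) * pr.symm (uvel γ K (q t) (pr z))) := by
    intro t z
    set u := uvel γ K (q t) (pr z)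
    have hu : pr.symm u = u.1 • pr.symm (1, 0) + u.2 • pr.symm (0, 1) := by
      rw [← map_smul, ← map_smul, ← map_add]
      simp
    rw [fderiv_mul_comp_symm ha hb', fderiv_mul_comp_symm ha hb', fderiv_mul_comp_symm ha hb',
      ← Complex.real_smul, map_smul, hu, map_add, map_smul, map_smul,
      show ((0 : ℝ), (0 : ℝ)) = 0 from rfl, map_zero, map_zero]
    simp only [smul_eq_mul]
    ring
  have hset : (Prod.map id pr : ℝ × ℂ → ℝ × (ℝ × ℝ)) ⁻¹' (Ioi 0 ×ˢ univ) = Ioi 0 ×ˢ univ := by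
    ext; simp
  rw [hset]
  simp only [Prod.map_fst, Prod.map_snd, id_eq]
  have e1 : ∫ x in Ioi (0 : ℝ) ×ˢ (univ : Set ℂ),
      q x.1 (pr x.2) * (fderiv ℝ (fun p : ℝ × (ℝ × ℝ) => a p.1 * b (pr.symm p.2))
        (x.1, pr x.2) (1, (0, 0)) +
      (uvel γ K (q x.1) (pr x.2)).1 * fderiv ℝ (fun p : ℝ × (ℝ × ℝ) => a p.1 * b (pr.symm p.2))
        (x.1, pr x.2) (0, (1, 0)) +
      (uvel γ K (q x.1) (pr x.2)).2 * fderiv ℝ (fun p : ℝ × (ℝ × ℝ) => a p.1 * b (pr.symm p.2))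
        (x.1, pr x.2) (0, (0, 1))) =
      ∫ x in Ioc (0 : ℝ) T ×ˢ (univ : Set ℂ), (deriv a x.1 * (trunc T q x.1 x.2 * b x.2) +
        a x.1 * fderiv ℝ b x.2 (flux γ f (trunc T q x.1) x.2)) := by
    simp_rw [key]
    rw [setIntegral_eq_of_subset_of_forall_sdiff_eq_zero (s := Ioc (0 : ℝ) T ×ˢ (univ : Set ℂ))
      (measurableSet_Ioi.prod MeasurableSet.univ) (prod_mono Ioc_subset_Ioi_self subset_rfl)]
    · refine setIntegral_congr_fun (measurableSet_Ioc.prod MeasurableSet.univ) fun x hx => ?_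
      have ht : x.1 ∈ Ioc 0 T := hx.1
      have hx2 : (q x.1 (pr x.2) : ℂ) * pr.symm (uvel γ K (q x.1) (pr x.2)) =
          flux γ f (trunc T q x.1) x.2 := by
        rw [flux, trunc_of_mem ht]
        rcases le_or_gt ‖x.2‖ R with hz | hz
        · rw [uvel_eq hs hfk ht hz]
        · rw [(trunc_of_mem (q := q) ht x.2).symm.trans (hs x.1 x.2 hz)]
          simp
      simp only [hx2, trunc_of_mem ht]
    · intro x hx
      have ht : T < x.1 := by
        by_contra hc
        exact hx.2 ⟨⟨hx.1.1, not_lt.1 hc⟩, trivial⟩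
      rw [hda _ ht, haT _ ht.le]
      ring
  refine Eq.trans ?_ e1.symm
  rw [Measure.volume_eq_prod, ← Measure.prod_restrict, Measure.restrict_univ]
  refine Eq.trans (integral_congr_ae ?_) (integral_prod _ (i1.add i2)).symm
  filter_upwards [i1.prod_right_ae, i2.prod_right_ae] with t h1 h2
  exact (integral_add h1 h2).symm

end

section

variable {T M R γ : ℝ} {K : ℝ × ℝ → ℝ × ℝ} {q₀ : ℝ × ℝ → ℝ} {q q' : ℝ → ℝ × ℝ → ℝ}

lemma isTransport_trunc (h : IsSol γ K q₀ q) (h' : IsSol γ K q₀ q')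
    (hb : ∀ t, IsBdd M (trunc T q t)) (hb' : ∀ t, IsBdd M (trunc T q' t))
    (hs : ∀ t z, R < ‖z‖ → trunc T q t z = 0) (hs' : ∀ t z, R < ‖z‖ → trunc T q' t z = 0)
    {f : ℂ → ℂ} (hfm : Measurable f) (hf : Integrable f)
    (hfk : ∀ z, ‖z‖ ≤ 2 * R → f z = ker K z) :
    IsTransport T R (M + M + ((M ^ 2 + M * |γ|) * (∫ z, ‖f z‖) + (M ^ 2 + M * |γ|) * ∫ z, ‖f z‖))
      (fun t z => trunc T q t z - trunc T q' t z)
      fun t z => flux γ f (trunc T q t) z - flux γ f (trunc T q' t) z := by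
  have hM := (hb 0).nonneg
  have hI : 0 ≤ (M ^ 2 + M * |γ|) * ∫ z, ‖f z‖ :=
    mul_nonneg (by positivity) (integral_nonneg fun _ => norm_nonneg _)
  have j1 : ∀ t, Integrable (flux γ f (trunc T q t)) := fun t => integrable_flux γ hfm hf (hb t)
  have j2 : ∀ t, Integrable (flux γ f (trunc T q' t)) := fun t => integrable_flux γ hfm hf (hb' t)
  refine ⟨(measurable_trunc T h.1).sub (measurable_trunc T h'.1),
    (measurable_flux_trunc γ hfm (measurable_trunc T h.1)).sub
      (measurable_flux_trunc γ hfm (measurable_trunc T h'.1)),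
    fun t => ((hb t).sub (hb' t)).mono (by linarith),
    fun t z hz => by simp only [hs t z hz, hs' t z hz, sub_zero], fun t => (j1 t).sub (j2 t),
    fun t => ?_, fun t z hz => by
      simp only [flux_zero γ f (hs t z hz), flux_zero γ f (hs' t z hz), sub_zero],
    fun a b ha has hbd hbs haT => ?_⟩
  · calc ∫ z, ‖flux γ f (trunc T q t) z - flux γ f (trunc T q' t) z‖
        ≤ ∫ z, (‖flux γ f (trunc T q t) z‖ + ‖flux γ f (trunc T q' t) z‖) :=
          integral_mono ((j1 t).sub (j2 t)).norm ((j1 t).norm.add (j2 t).norm)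
            fun z => norm_sub_le _ _
      _ = (∫ z, ‖flux γ f (trunc T q t) z‖) + ∫ z, ‖flux γ f (trunc T q' t) z‖ :=
          integral_add (j1 t).norm (j2 t).norm
      _ ≤ _ := by
          linarith [integral_norm_flux_le γ hfm hf (hb t), integral_norm_flux_le γ hfm hf (hb' t)]
  · obtain ⟨i1, w1⟩ := weak_trunc h hb hs hfm hf hfk ha has hbd hbs haT
    obtain ⟨i2, w2⟩ := weak_trunc h' hb' hs' hfm hf hfk ha has hbd hbs haT
    refine Eq.trans (integral_congr_ae (Eventually.of_forall fun t => ?_))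
      ((integral_sub i1 i2).trans (sub_eq_zero.2 (w1.trans w2.symm)))
    obtain ⟨B, hB⟩ := hbs.exists_bound_of_continuous hbd.continuous
    obtain ⟨B', hB'⟩ := (hbs.fderiv (𝕜 := ℝ)).exists_bound_of_continuous
      (hbd.continuous_fderiv (by simp))
    have k : ∀ {p : ℂ → ℝ}, IsBdd M p → Integrable fun z => p z * b z := fun hp =>
      hp.integrable.mul_bdd (c := B) hbd.continuous.aestronglyMeasurable (Eventually.of_forall hB)
    have l : ∀ {F : ℂ → ℂ}, Measurable F → Integrable F →
        Integrable fun z => fderiv ℝ b z (F z) := by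
      intro F hFm hF
      have hc : Continuous fun y : ℂ × ℂ => fderiv ℝ b y.1 y.2 :=
        ((hbd.continuous_fderiv (by simp)).comp continuous_fst).clm_apply continuous_snd
      refine (hF.norm.const_mul B').mono'
        (hc.measurable.comp (measurable_id.prodMk hFm)).aestronglyMeasurable
        (Eventually.of_forall fun z => ((fderiv ℝ b z).le_opNorm _).trans ?_)
      gcongr
      exact hB' z
    simp only [sub_mul, map_sub]
    rw [integral_sub (k (hb t)) (k (hb' t)),
      integral_sub (l (measurable_flux γ hfm (hb t).measurable) (j1 t))
        (l (measurable_flux γ hfm (hb' t).measurable) (j2 t))]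
    ring

lemma ae_ae_eq_of_isSol {α : ℝ} (hKsm : ContDiffOn ℝ 2 K {x : ℝ × ℝ | x ≠ 0})
    (hKloc : LocallyIntegrable K)
    (hKeq : ∀ x : ℝ × ℝ, x ≠ 0 →
      (K x).1 - α * lap (fun y => (K y).1) x = (Hvec x).1 ∧
      (K x).2 - α * lap (fun y => (K y).2) x = (Hvec x).2)
    (hKgrad : ∃ C : ℝ, ∀ x : ℝ × ℝ, x ≠ 0 →
      |pd2 (fun y => (K y).1) x + pd1 (fun y => (K y).2) x| ≤ C ∧
      |pd1 (fun y => (K y).1) x - pd2 (fun y => (K y).2) x| ≤ C)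
    (h : IsSol γ K q₀ q) (h' : IsSol γ K q₀ q') (hT : 0 < T) :
    ∀ᵐ t, t ∈ Ioo 0 T → ∀ᵐ x, q t x = q' t x := by
  obtain ⟨C, hC⟩ := hKgrad
  obtain ⟨M₁, R₁, hb₁, hs₁⟩ := exists_isBdd_trunc h hT
  obtain ⟨M₂, R₂, hb₂, hs₂⟩ := exists_isBdd_trunc h' hT
  set R := max (max R₁ R₂) 1
  have hR : 0 < R := lt_of_lt_of_le one_pos (le_max_right _ _)
  have hR₁ : R₁ ≤ R := (le_max_left _ _).trans (le_max_left _ _)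
  have hR₂ : R₂ ≤ R := (le_max_right _ _).trans (le_max_left _ _)
  have hb : ∀ t, IsBdd (max M₁ M₂) (trunc T q t) := fun t => (hb₁ t).mono (le_max_left _ _)
  have hb' : ∀ t, IsBdd (max M₁ M₂) (trunc T q' t) := fun t => (hb₂ t).mono (le_max_right _ _)
  obtain ⟨f, g, C', hK, hfk⟩ := exists_isCutKernel (contDiffOn_ker hKsm)
    (locallyIntegrable_ker hKloc) (fun z hz => norm_cr_ker_le hKsm hC hz)
    (fun z hz => ker_equation hKsm hKeq hz) (R := 2 * R) (by positivity)
  have main := ae_eq_of_isTransport hT hK hb hb' (isTransport_trunc h h' hb hb'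
    (fun t z hz => hs₁ t z (hR₁.trans_lt hz)) (fun t z hz => hs₂ t z (hR₂.trans_lt hz))
    hK.measurable hK.integrable hfk)
  filter_upwards [main] with t ht htT
  have htc : t ∈ Ioc 0 T := ⟨htT.1, htT.2.le⟩
  have hae : ∀ᵐ z : ℂ, q t (pr z) = q' t (pr z) := by
    filter_upwards [ht htT] with z hz
    simp only [trunc_of_mem htc] at hz
    exact sub_eq_zero.1 hz
  have := (measurePreserving_pr.symm Complex.measurableEquivRealProd).quasiMeasurePreserving.ae hae
  filter_upwards [this] with x hx
  exact hx

end

end AlphaEuler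

/-- Uniqueness for the limit system of the α-Euler equations in the exterior of a vanishing
obstacle: two solutions in `L^∞(ℝ₊; L¹ ∩ L^∞)`, compactly supported in space locally
uniformly in time, with velocity `u = K^α ∗ q + γ K^α` where `K^α` satisfies
`(1 − αΔ)K^α = H` off the origin and has bounded symmetric-gradient components, and with the
same initial data, coincide. -/
theorem stmt18 (α γ : ℝ) (hα : 0 < α) (K : ℝ × ℝ → ℝ × ℝ)
    (hKsm : ContDiffOn ℝ 2 K {x : ℝ × ℝ | x ≠ 0})
    (hKloc : LocallyIntegrable K)
    (hKeq : ∀ x : ℝ × ℝ, x ≠ 0 →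
      (K x).1 - α * lap (fun y => (K y).1) x = (Hvec x).1 ∧
      (K x).2 - α * lap (fun y => (K y).2) x = (Hvec x).2)
    (hKgrad : ∃ C : ℝ, ∀ x : ℝ × ℝ, x ≠ 0 →
      |pd2 (fun y => (K y).1) x + pd1 (fun y => (K y).2) x| ≤ C ∧
      |pd1 (fun y => (K y).1) x - pd2 (fun y => (K y).2) x| ≤ C)
    (q₀ : ℝ × ℝ → ℝ) (q q' : ℝ → ℝ × ℝ → ℝ)
    (hq : IsSol γ K q₀ q) (hq' : IsSol γ K q₀ q') :
    ∀ᵐ p : ℝ × (ℝ × ℝ), 0 < p.1 → q p.1 p.2 = q' p.1 p.2 := by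
  have hm : MeasurableSet {p : ℝ × (ℝ × ℝ) | 0 < p.1 → q p.1 p.2 = q' p.1 p.2} := by
    have e : {p : ℝ × (ℝ × ℝ) | 0 < p.1 → q p.1 p.2 = q' p.1 p.2} =
        {p | 0 < p.1}ᶜ ∪ {p | q p.1 p.2 = q' p.1 p.2} := by
      ext p
      exact imp_iff_not_or
    rw [e]
    exact (measurableSet_lt measurable_const measurable_fst).compl.union
      (measurableSet_eq_fun hq.1 hq'.1)
  rw [Measure.volume_eq_prod, Measure.ae_prod_iff_ae_ae hm]
  have h : ∀ᵐ t, ∀ n : ℕ, t ∈ Ioo (0 : ℝ) (n + 1) → ∀ᵐ x, q t x = q' t x :=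
    ae_all_iff.2 fun n =>
      AlphaEuler.ae_ae_eq_of_isSol hKsm hKloc hKeq hKgrad hq hq' (by positivity)
  filter_upwards [h] with t ht
  rcases le_or_gt t 0 with h0 | h0
  · exact Filter.Eventually.of_forall fun x hx => absurd hx (not_lt.2 h0)
  · obtain ⟨n, hn⟩ := exists_nat_gt t
    filter_upwards [ht n ⟨h0, by linarith⟩] with x hx _ using hx
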